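/- arXiv:2412.11251 — 3 statements merged into one kernel-verified Lean document; each statement's English description precedes it below -/
import Mathlib

section
/- Let n ≥ 1, let B be a symmetric positive-definite n×n real matrix, and let h̄ : ℝⁿ → ℝ be a C² function with G := sup_y |∇h̄(y)| < ∞ and H := sup_y ‖∇²h̄(y)‖ < ∞, such that for every x ∈ ℝⁿ the function y ↦ exp(−|x−y|²_B/2 − h̄(y)) is integrable. Define p(x) := ∫_{ℝⁿ} exp(−|x−y|²_B/2) exp(−h̄(y)) dy and q(x) := −log p(x). Then q is twice differentiable on ℝⁿ and for every x, ‖∇²q(x)‖ ≤ H + G². (Hessian bound of Theorem 3.1 via the heat-kernel representation of the solution of the viscous Hamilton–Jacobi equation.) -/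
open MeasureTheory Real Matrix
open scoped RealInnerProductSpace

noncomputable section

/-- Weighted squared norm `|x|_M² = ⟨M⁻¹ x, x⟩` for a matrix `M`. -/
def wsqNorm {n : ℕ} (M : Matrix (Fin n) (Fin n) ℝ) (x : EuclideanSpace ℝ (Fin n)) : ℝ :=
  ⟪(Matrix.toEuclideanLin M⁻¹) x, x⟫

lemma aux_norm {E : Type*} [NormedAddCommGroup E] [InnerProductSpace ℝ E]
    (S v : E) (c : ℝ) (hc : 0 ≤ c)
    (h : ∀ u : E, ⟪S, u⟫ ≤ c / 2 * (‖v‖ ^ 2 + ‖u‖ ^ 2)) : ‖S‖ ≤ c * ‖v‖ := by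
  by_cases hS : ‖S‖ = 0
  · rw [hS]; positivity
  have hSp : 0 < ‖S‖ := lt_of_le_of_ne (norm_nonneg _) (Ne.symm hS)
  by_cases hv : ‖v‖ = 0
  · have h1 := fun t : ℝ => h (t • S)
    simp only [hv, inner_smul_right, real_inner_self_eq_norm_sq, norm_smul, mul_pow,
      Real.norm_eq_abs, sq_abs] at h1
    have h2 := h1 (1 / (c + 1))
    exfalso
    have h3 : 1 / (c + 1) * ‖S‖ ^ 2 - c / 2 * (0 ^ 2 + (1 / (c + 1)) ^ 2 * ‖S‖ ^ 2)
        = (c + 2) / (2 * (c + 1) ^ 2) * ‖S‖ ^ 2 := by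
      field_simp; ring
    have h4 : 0 < (c + 2) / (2 * (c + 1) ^ 2) * ‖S‖ ^ 2 := by positivity
    linarith
  have hvp : 0 < ‖v‖ := lt_of_le_of_ne (norm_nonneg _) (Ne.symm hv)
  have h1 := h ((‖v‖ / ‖S‖) • S)
  have h5 : ‖(‖v‖ / ‖S‖) • S‖ = ‖v‖ := by
    rw [norm_smul, norm_div, norm_norm, norm_norm]; field_simp
  rw [h5, inner_smul_right, real_inner_self_eq_norm_sq] at h1
  have h6 : ‖v‖ / ‖S‖ * ‖S‖ ^ 2 = ‖v‖ * ‖S‖ := by field_simp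
  rw [h6] at h1
  have h7 : ‖v‖ * ‖S‖ ≤ ‖v‖ * (c * ‖v‖) := by nlinarith
  exact le_of_mul_le_mul_left h7 hvp

section
variable {n : ℕ}

lemma aux_cov (w : EuclideanSpace ℝ (Fin n) → ℝ)
    (g : EuclideanSpace ℝ (Fin n) → EuclideanSpace ℝ (Fin n)) (G : ℝ)
    (hw : Integrable w) (hw0 : ∀ z, 0 ≤ w z) (hg : Continuous g) (hG : ∀ z, ‖g z‖ ≤ G)
    (hP : 0 < ∫ z, w z) (v : EuclideanSpace ℝ (Fin n)) :
    ‖(∫ z, w z)⁻¹ • (∫ z, w z • (⟪g z, v⟫ • g z)) -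
      (((∫ z, w z)⁻¹) ^ 2 * ⟪∫ z, w z • g z, v⟫) • ∫ z, w z • g z‖ ≤ G ^ 2 * ‖v‖ := by
  have hG0 : 0 ≤ G := (norm_nonneg _).trans (hG 0)
  have hi : ∀ (f : EuclideanSpace ℝ (Fin n) → ℝ) (C : ℝ), Continuous f → (∀ z, |f z| ≤ C) →
      Integrable fun z => w z * f z := by
    intro f C hf hC
    exact hw.mul_bdd hf.aestronglyMeasurable (Filter.Eventually.of_forall hC)
  have hiE : ∀ (f : EuclideanSpace ℝ (Fin n) → EuclideanSpace ℝ (Fin n)) (C : ℝ),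
      Continuous f → (∀ z, ‖f z‖ ≤ C) → Integrable fun z => w z • f z := by
    intro f C hf hC
    exact hw.smul_bdd C hf.aestronglyMeasurable (Filter.Eventually.of_forall hC)
  have hb : ∀ u z, |⟪g z, u⟫| ≤ G * ‖u‖ := fun u z =>
    (abs_real_inner_le_norm _ _).trans (mul_le_mul_of_nonneg_right (hG z) (norm_nonneg _))
  have hc : ∀ u, Continuous fun z => ⟪g z, u⟫ := fun u => hg.inner continuous_const
  have hgi := hiE g G hg hG
  have hbv : ∀ z, ‖⟪g z, v⟫ • g z‖ ≤ (G * ‖v‖) * G := fun z => by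
    rw [norm_smul]
    exact mul_le_mul (hb v z) (hG z) (norm_nonneg _) (by positivity)
  have hgvi := hiE (fun z => ⟪g z, v⟫ • g z) _ ((hc v).smul hg) hbv
  have hN : ∀ u, ⟪∫ z, w z • g z, u⟫ = ∫ z, w z * ⟪g z, u⟫ := by
    intro u
    rw [real_inner_comm, ← integral_inner hgi]
    congr 1; ext z
    rw [inner_smul_right, real_inner_comm]
  have hNv : ∀ u, ⟪∫ z, w z • (⟪g z, v⟫ • g z), u⟫ = ∫ z, w z * (⟪g z, v⟫ * ⟪g z, u⟫) := by
    intro u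
    rw [real_inner_comm, ← integral_inner hgvi]
    congr 1; ext z
    rw [inner_smul_right, inner_smul_right, real_inner_comm u]
  apply aux_norm _ _ _ (by positivity)
  intro u
  rw [inner_sub_left, inner_smul_left, inner_smul_left, hN, hN, hNv]
  simp only [conj_trivial]
  set P := ∫ z, w z with hPdef
  set α := ∫ z, w z * ⟪g z, v⟫ with hα
  set β := ∫ z, w z * ⟪g z, u⟫ with hβ
  set δ := P⁻¹ * α - P⁻¹ * β with hδ
  set K := G ^ 2 / 2 * (‖v‖ ^ 2 + ‖u‖ ^ 2) with hK
  have hiv := hi _ _ (hc v) (hb v)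
  have hiu := hi _ _ (hc u) (hb u)
  have key : ∫ z, w z * (⟪g z, v⟫ * ⟪g z, u⟫) ≤
      ∫ z, ((K + δ ^ 2 / 2) * w z - δ * (w z * ⟪g z, v⟫ - w z * ⟪g z, u⟫)) := by
    apply integral_mono
    · apply hi _ ((G * ‖v‖) * (G * ‖u‖)) ((hc v).mul (hc u))
      intro z
      rw [Pi.mul_apply, abs_mul]
      exact mul_le_mul (hb v z) (hb u z) (abs_nonneg _) (by positivity)
    · exact (hw.const_mul _).sub ((hiv.sub hiu).const_mul _)
    · intro z
      have h1 := sq_le_sq' (abs_le.1 (hb v z)).1 (abs_le.1 (hb v z)).2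
      have h2 := sq_le_sq' (abs_le.1 (hb u z)).1 (abs_le.1 (hb u z)).2
      have h3 := sq_nonneg (⟪g z, v⟫ - ⟪g z, u⟫ - δ)
      have h4 : ⟪g z, v⟫ * ⟪g z, u⟫ ≤ (K + δ ^ 2 / 2) - δ * (⟪g z, v⟫ - ⟪g z, u⟫) := by
        rw [hK]; nlinarith
      have h5 := mul_le_mul_of_nonneg_left h4 (hw0 z)
      simp only
      linarith
  have hd : Integrable fun z => δ * (w z * ⟪g z, v⟫ - w z * ⟪g z, u⟫) := (hiv.sub hiu).const_mul _
  rw [integral_sub (hw.const_mul _) hd, integral_const_mul,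
    integral_const_mul, integral_sub hiv hiu, ← hα, ← hβ, ← hPdef] at key
  have key2 := mul_le_mul_of_nonneg_left key (inv_nonneg.2 hP.le)
  have e : P⁻¹ * ((K + δ ^ 2 / 2) * P - δ * (α - β)) = K - δ ^ 2 / 2 := by
    have : P⁻¹ * P = 1 := inv_mul_cancel₀ hP.ne'
    have h6 : P⁻¹ * ((K + δ ^ 2 / 2) * P - δ * (α - β))
      = (K + δ ^ 2 / 2) * (P⁻¹ * P) - δ * (P⁻¹ * α - P⁻¹ * β) := by ring
    rw [h6, this, ← hδ]; ring
  rw [e] at key2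
  have h8 : P⁻¹ ^ 2 * α * β = (P⁻¹ * α) * (P⁻¹ * β) := by ring
  rw [h8]
  nlinarith [sq_nonneg (P⁻¹ * α), sq_nonneg (P⁻¹ * β)]

lemma aux_diff {F' : Type*} [NormedAddCommGroup F'] [NormedSpace ℝ F']
    (k h : EuclideanSpace ℝ (Fin n) → ℝ) (hk : Continuous k) (hk0 : ∀ z, 0 ≤ k z)
    (hh : Continuous h) (G : ℝ) (hG0 : 0 ≤ G) (hL : ∀ x y, h x - h y ≤ G * ‖x - y‖)
    (hint : ∀ x, Integrable fun z => k z * Real.exp (-h (x - z)))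
    (F : EuclideanSpace ℝ (Fin n) → F') (hF : ContDiff ℝ 1 F) (C : ℝ) (hC0 : 0 ≤ C)
    (hC : ∀ y, ‖F y‖ ≤ C * Real.exp (-h y)) (hC' : ∀ y, ‖fderiv ℝ F y‖ ≤ C * Real.exp (-h y))
    (x : EuclideanSpace ℝ (Fin n)) :
    Integrable (fun z => k z • fderiv ℝ F (x - z)) ∧
    HasFDerivAt (fun x => ∫ z, k z • F (x - z)) (∫ z, k z • fderiv ℝ F (x - z)) x := by
  have hFc := hF.continuous
  have hF'c : Continuous (fderiv ℝ F) := hF.continuous_fderiv (by norm_num)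
  have m : ∀ x, AEStronglyMeasurable (fun z => k z • F (x - z)) volume := fun x =>
    (hk.smul (hFc.comp (continuous_const.sub continuous_id))).aestronglyMeasurable
  have m' : ∀ x, AEStronglyMeasurable (fun z => k z • fderiv ℝ F (x - z)) volume := fun x =>
    (hk.smul (hF'c.comp (continuous_const.sub continuous_id))).aestronglyMeasurable
  refine ⟨?_, ?_⟩
  · refine ((hint x).const_mul C).mono' (m' x) (Filter.Eventually.of_forall fun z => ?_)
    rw [norm_smul, Real.norm_of_nonneg (hk0 z)]
    have := mul_le_mul_of_nonneg_left (hC' (x - z)) (hk0 z)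
    linarith
  refine hasFDerivAt_integral_of_dominated_of_fderiv_le (s := Metric.ball x 1)
    (bound := fun z => C * Real.exp G * (k z * Real.exp (-h (x - z))))
    (Metric.ball_mem_nhds x one_pos) (Filter.Eventually.of_forall m) ?_ (m' x) ?_ ?_ ?_
    (F' := fun x z => k z • fderiv ℝ F (x - z))
  · refine ((hint x).const_mul C).mono' (m x) (Filter.Eventually.of_forall fun z => ?_)
    rw [norm_smul, Real.norm_of_nonneg (hk0 z)]
    have := mul_le_mul_of_nonneg_left (hC (x - z)) (hk0 z)
    linarith
  · refine Filter.Eventually.of_forall fun z y hy => ?_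
    rw [norm_smul, Real.norm_of_nonneg (hk0 z)]
    have h1 := mul_le_mul_of_nonneg_left (hC' (y - z)) (hk0 z)
    have h2 : Real.exp (-h (y - z)) ≤ Real.exp G * Real.exp (-h (x - z)) := by
      rw [← Real.exp_add]
      apply Real.exp_le_exp.2
      have h3 := hL (x - z) (y - z)
      rw [sub_sub_sub_cancel_right, ← dist_eq_norm, dist_comm] at h3
      have h4 : dist y x ≤ 1 := (Metric.mem_ball.1 hy).le
      nlinarith
    have h5 := mul_le_mul_of_nonneg_left h2 (mul_nonneg (hk0 z) hC0)
    linarith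
  · exact (hint x).const_mul _
  · refine Filter.Eventually.of_forall fun z y hy => ?_
    have h1 : HasFDerivAt F (fderiv ℝ F (y - z)) (y - z) :=
      (hF.differentiable (by norm_num) _).hasFDerivAt
    have h2 : HasFDerivAt (fun y => F (y - z)) (fderiv ℝ F (y - z)) y := by
      simpa using (hasFDerivAt_comp_sub z).2 h1
    exact h2.const_smul (k z)

lemma aux_main (k h : EuclideanSpace ℝ (Fin n) → ℝ) (hk : Continuous k) (hk0 : ∀ z, 0 < k z)
    (hreg : ContDiff ℝ 2 h)
    (G H : ℝ) (hG : ∀ y, ‖gradient h y‖ ≤ G)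
    (hH : ∀ y, ‖fderiv ℝ (gradient h) y‖ ≤ H)
    (hint : ∀ x, Integrable fun z => k z * Real.exp (-h (x - z)))
    (p q : EuclideanSpace ℝ (Fin n) → ℝ)
    (hp : ∀ x, p x = ∫ z, k z * Real.exp (-h (x - z)))
    (hq : ∀ x, q x = -Real.log (p x)) :
    Differentiable ℝ q ∧ Differentiable ℝ (gradient q) ∧
      ∀ x, ‖fderiv ℝ (gradient q) x‖ ≤ H + G ^ 2 := by
  have hG0 : 0 ≤ G := (norm_nonneg _).trans (hG 0)
  have hH0 : 0 ≤ H := (norm_nonneg _).trans (hH 0)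
  have hd : Differentiable ℝ h := hreg.differentiable (by norm_num)
  have hc := hreg.continuous
  have hg1 : ContDiff ℝ 1 (gradient h) := by
    have h1 : ContDiff ℝ 1 (fderiv ℝ h) := hreg.fderiv_right (by norm_num)
    exact (InnerProductSpace.toDual ℝ (EuclideanSpace ℝ (Fin n))).symm.contDiff.comp h1
  have hgc := hg1.continuous
  have hgd : Differentiable ℝ (gradient h) := hg1.differentiable (by norm_num)
  have hfd : ∀ y, ‖fderiv ℝ h y‖ ≤ G := fun y => by
    rw [← toDual_gradient, LinearIsometryEquiv.norm_map]; exact hG y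
  have hL : ∀ x y, h x - h y ≤ G * ‖x - y‖ := fun x y =>
    (le_abs_self _).trans (convex_univ.norm_image_sub_le_of_norm_fderiv_le
      (fun z _ => hd z) (fun z _ => hfd z) (Set.mem_univ y) (Set.mem_univ x))
  have hk0' : ∀ z, 0 ≤ k z := fun z => (hk0 z).le
  -- first function
  have hE : ∀ y, HasFDerivAt (fun y => Real.exp (-h y)) (Real.exp (-h y) • (-fderiv ℝ h y)) y :=
    fun y => (hd y).hasFDerivAt.neg.exp
  have hE1 : ContDiff ℝ 1 (fun y => Real.exp (-h y)) := (hreg.of_le (by norm_num)).neg.exp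
  -- second function
  have hF : ∀ y, HasFDerivAt (fun y => Real.exp (-h y) • gradient h y)
      (Real.exp (-h y) • fderiv ℝ (gradient h) y +
        (Real.exp (-h y) • (-fderiv ℝ h y)).smulRight (gradient h y)) y :=
    fun y => (hE y).smul (hgd y).hasFDerivAt
  have hF1 : ContDiff ℝ 1 (fun y => Real.exp (-h y) • gradient h y) := hE1.smul hg1
  have D1 := aux_diff k h hk hk0' hc G hG0 hL hint _ hE1 (1 + G) (by positivity)
    (fun y => by
      rw [Real.norm_of_nonneg (Real.exp_pos _).le]
      nlinarith [Real.exp_pos (-h y)])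
    (fun y => by
      rw [(hE y).fderiv, norm_smul, norm_neg, Real.norm_of_nonneg (Real.exp_pos _).le]
      nlinarith [Real.exp_pos (-h y), hfd y])
  have D2 := aux_diff k h hk hk0' hc G hG0 hL hint _ hF1 (G + H + G ^ 2) (by positivity)
    (fun y => by
      rw [norm_smul, Real.norm_of_nonneg (Real.exp_pos _).le, mul_comm]
      exact mul_le_mul_of_nonneg_right ((hG y).trans (by nlinarith)) (Real.exp_pos _).le)
    (fun y => by
      rw [(hF y).fderiv]
      refine (norm_add_le _ _).trans ?_
      rw [ContinuousLinearMap.norm_smulRight_apply, norm_smul, norm_smul, norm_neg,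
        Real.norm_of_nonneg (Real.exp_pos _).le]
      have e := (Real.exp_pos (-h y))
      have h1 : ‖fderiv ℝ h y‖ * ‖gradient h y‖ ≤ G * G :=
        mul_le_mul (hfd y) (hG y) (norm_nonneg _) hG0
      have h2 : ‖fderiv ℝ (gradient h) y‖ + ‖fderiv ℝ h y‖ * ‖gradient h y‖ ≤ G + H + G ^ 2 := by
        nlinarith [hH y]
      have h3 := mul_le_mul_of_nonneg_left h2 e.le
      linarith)
  simp only [fun y => (hE y).fderiv] at D1
  simp only [fun y => (hF y).fderiv] at D2
  set N : EuclideanSpace ℝ (Fin n) → EuclideanSpace ℝ (Fin n) :=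
    fun x => ∫ z, k z • (Real.exp (-h (x - z)) • gradient h (x - z)) with hN
  have hwc : ∀ x, Continuous fun z => k z * Real.exp (-h (x - z)) := fun x =>
    hk.mul (hc.comp (continuous_const.sub continuous_id)).neg.rexp
  have hgx : ∀ x, Continuous fun z => gradient h (x - z) := fun x =>
    hgc.comp (continuous_const.sub continuous_id)
  have hw0 : ∀ x z, 0 < k z * Real.exp (-h (x - z)) := fun x z =>
    mul_pos (hk0 z) (Real.exp_pos _)
  have hN' : ∀ x, N x = ∫ z, (k z * Real.exp (-h (x - z))) • gradient h (x - z) := fun x => by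
    simp only [hN, smul_smul]
  have hNi : ∀ x, Integrable fun z => (k z * Real.exp (-h (x - z))) • gradient h (x - z) :=
    fun x => (hint x).smul_bdd G (hgx x).aestronglyMeasurable
      (Filter.Eventually.of_forall fun z => hG _)
  have hpp : ∀ x, 0 < p x := fun x => by
    rw [hp]
    rw [integral_pos_iff_support_of_nonneg (fun z => (hw0 x z).le) (hint x)]
    have : Function.support (fun z => k z * Real.exp (-h (x - z))) = Set.univ := by
      ext z; simpa using (hw0 x z).ne'
    rw [this]
    exact isOpen_univ.measure_pos _ Set.univ_nonempty
  -- gradient of p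
  have hpg : ∀ x, HasFDerivAt p (-(InnerProductSpace.toDual ℝ _ (N x))) x := fun x => by
    have h1 := (D1 x).2
    have e1 : p = fun x => ∫ z, k z • Real.exp (-h (x - z)) := by
      ext x; rw [hp]; rfl
    rw [e1]
    refine h1.congr_fderiv (ContinuousLinearMap.ext fun v => ?_)
    symm
    rw [ContinuousLinearMap.integral_apply (D1 x).1, ContinuousLinearMap.neg_apply,
      InnerProductSpace.toDual_apply_apply, hN', real_inner_comm, ← integral_inner (hNi x),
      ← integral_neg]
    congr 1; ext z
    rw [inner_smul_right, real_inner_comm, inner_gradient_left]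
    simp [mul_assoc]
  have hqg : ∀ x, HasGradientAt q ((p x)⁻¹ • N x) x := fun x => by
    rw [hasGradientAt_iff_hasFDerivAt]
    have h1 := ((hpg x).log (hpp x).ne').neg
    have e1 : q = -(fun x => Real.log (p x)) := by ext x; rw [hq]; rfl
    rw [e1]
    refine h1.congr_fderiv (ContinuousLinearMap.ext fun v => ?_)
    simp [inner_smul_left]
  have hqe : gradient q = fun x => (p x)⁻¹ • N x := gradient_eq hqg
  have hqq : ∀ x, HasFDerivAt (gradient q) _ x := fun x => by
    rw [hqe]
    exact ((hasDerivAt_inv (hpp x).ne').comp_hasFDerivAt x (hpg x)).smul (D2 x).2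
  refine ⟨fun x => (hqg x).differentiableAt, fun x => (hqq x).differentiableAt, fun x => ?_⟩
  rw [(hqq x).fderiv]
  refine ContinuousLinearMap.opNorm_le_bound _ (by positivity) fun v => ?_
  set w : EuclideanSpace ℝ (Fin n) → ℝ := fun z => k z * Real.exp (-h (x - z)) with hw
  have hC := aux_cov w (fun z => gradient h (x - z)) G (hint x) (fun z => (hw0 x z).le) (hgx x)
    (fun z => hG _) (by rw [← hp]; exact hpp x) v
  have hpx : p x = ∫ z, w z := hp x
  rw [← hpx, ← hN' x] at hC
  have hHc : Continuous fun z => fderiv ℝ (gradient h) (x - z) v :=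
    ((hg1.continuous_fderiv (by norm_num)).comp
      (continuous_const.sub continuous_id)).clm_apply continuous_const
  have hHb : ∀ z, ‖fderiv ℝ (gradient h) (x - z) v‖ ≤ H * ‖v‖ := fun z =>
    ContinuousLinearMap.le_of_opNorm_le _ (hH _) v
  have i1 : Integrable fun z => w z • fderiv ℝ (gradient h) (x - z) v :=
    (hint x).smul_bdd _ hHc.aestronglyMeasurable (Filter.Eventually.of_forall hHb)
  have hcv : Continuous fun z => ⟪gradient h (x - z), v⟫ := (hgx x).inner continuous_const
  have hcg : Continuous fun z => ⟪gradient h (x - z), v⟫ • gradient h (x - z) :=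
    hcv.smul (hgx x)
  have i2 : Integrable fun z => w z • (⟪gradient h (x - z), v⟫ • gradient h (x - z)) := by
    refine (hint x).smul_bdd (G * ‖v‖ * G)
      hcg.aestronglyMeasurable
      (Filter.Eventually.of_forall fun z => ?_)
    rw [norm_smul]
    refine mul_le_mul ((abs_real_inner_le_norm _ _).trans
      (mul_le_mul_of_nonneg_right (hG _) (norm_nonneg _))) (hG _) (norm_nonneg _) (by positivity)
  have e2 : (∫ z, k z • (Real.exp (-h (x - z)) • fderiv ℝ (gradient h) (x - z) +
        (Real.exp (-h (x - z)) • (-fderiv ℝ h (x - z))).smulRight (gradient h (x - z)))) v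
      = (∫ z, w z • fderiv ℝ (gradient h) (x - z) v) -
        ∫ z, w z • (⟪gradient h (x - z), v⟫ • gradient h (x - z)) := by
    rw [ContinuousLinearMap.integral_apply (D2 x).1, ← integral_sub i1 i2]
    congr 1; ext1 z
    rw [inner_gradient_left]
    simp [hw, smul_smul, mul_assoc, sub_eq_add_neg]
  have hA : ‖(p x)⁻¹ • ∫ z, w z • fderiv ℝ (gradient h) (x - z) v‖ ≤ H * ‖v‖ := by
    have h1 : ‖∫ z, w z • fderiv ℝ (gradient h) (x - z) v‖ ≤ ∫ z, w z * (H * ‖v‖) := by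
      refine norm_integral_le_of_norm_le ((hint x).mul_const _)
        (Filter.Eventually.of_forall fun z => ?_)
      rw [norm_smul, Real.norm_of_nonneg (hw0 x z).le]
      exact mul_le_mul_of_nonneg_left (hHb z) (hw0 x z).le
    rw [integral_mul_const, ← hpx] at h1
    rw [norm_smul, norm_inv, Real.norm_of_nonneg (hpp x).le]
    rw [inv_mul_le_iff₀ (hpp x)]
    exact h1
  rw [add_mul]
  refine le_trans (le_of_eq ?_) ((norm_sub_le _ _).trans (add_le_add hA hC))
  congr 1
  simp only [ContinuousLinearMap.add_apply, ContinuousLinearMap.smul_apply,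
    ContinuousLinearMap.smulRight_apply, e2, ContinuousLinearMap.neg_apply,
    InnerProductSpace.toDual_apply_apply, smul_sub, smul_eq_mul]
  rw [show -(p x ^ 2)⁻¹ * -⟪N x, v⟫ = (p x)⁻¹ ^ 2 * ⟪N x, v⟫ by rw [inv_pow]; ring]
  simp only [Function.comp]
  abel

end

/-- Hessian bound of Theorem 3.1 via the heat-kernel representation. -/
theorem stmt1 (n : ℕ) (hn : 1 ≤ n)
    (B : Matrix (Fin n) (Fin n) ℝ) (hB : B.PosDef)
    (hbar : EuclideanSpace ℝ (Fin n) → ℝ) (hreg : ContDiff ℝ 2 hbar)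
    (G H : ℝ) (hG : ∀ y, ‖gradient hbar y‖ ≤ G)
    (hH : ∀ y, ‖fderiv ℝ (gradient hbar) y‖ ≤ H)
    (hint : ∀ x, Integrable fun y =>
      Real.exp (-(wsqNorm B (x - y)) / 2) * Real.exp (-(hbar y)))
    (p q : EuclideanSpace ℝ (Fin n) → ℝ)
    (hp : ∀ x, p x = ∫ y, Real.exp (-(wsqNorm B (x - y)) / 2) * Real.exp (-(hbar y)))
    (hq : ∀ x, q x = -Real.log (p x)) :
    Differentiable ℝ q ∧ Differentiable ℝ (gradient q) ∧
      ∀ x, ‖fderiv ℝ (gradient q) x‖ ≤ H + G ^ 2 := by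
  have hk : Continuous fun z => Real.exp (-(wsqNorm B z) / 2) := by
    unfold wsqNorm
    have h1 : Continuous (Matrix.toEuclideanLin B⁻¹) := LinearMap.continuous_of_finiteDimensional _
    have h2 : Continuous fun z => ⟪(Matrix.toEuclideanLin B⁻¹) z, z⟫ := h1.inner continuous_id
    exact (h2.neg.div_const 2).rexp
  refine aux_main (fun z => Real.exp (-(wsqNorm B z) / 2)) hbar hk (fun z => Real.exp_pos _)
    hreg G H hG hH (fun x => ?_) p q (fun x => ?_) hq
  · simpa using (hint x).comp_sub_left x
  · rw [hp, ← integral_sub_left_eq_self _ volume x]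
    simp
end
end

section
/- Let P₀ be a probability measure on ℝ^d whose support is contained in the closed ball of radius R centered at the origin, and let p_t denote the isotropic forward Ornstein–Uhlenbeck marginal density started from P₀. Then for every δ > 0, every t ≥ δ, and every x ∈ ℝ^d, ‖∇² log p_t(x) + (1−e^{−t})^{−1} I_d‖ ≤ (3R²/(1−e^{−δ})²) e^{−t}. (Hessian bound of Corollary 3.9 for bounded-support targets with early stopping.) -/
open MeasureTheory Real

noncomputable section

/-- Marginal density at time `t > 0` of the isotropic forward Ornstein–Uhlenbeck
process started from the probability measure `P₀`. -/
def ouDensityIso {d : ℕ} (P₀ : Measure (EuclideanSpace ℝ (Fin d)))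
    (t : ℝ) (x : EuclideanSpace ℝ (Fin d)) : ℝ :=
  (2 * π * (1 - Real.exp (-t))) ^ (-(d : ℝ) / 2) *
    ∫ y, Real.exp (-‖x - Real.exp (-t / 2) • y‖ ^ 2 / (2 * (1 - Real.exp (-t)))) ∂P₀

theorem ou_aux_bound {E : Type*} [NormedAddCommGroup E] [InnerProductSpace ℝ E]
    {x v : E} {C M : ℝ} (hM : ‖x‖ ≤ M) (hC : ‖v‖ ≤ C) :
    Real.exp (inner ℝ x v) ≤ Real.exp (M * C) := by
  apply Real.exp_le_exp.2
  refine (real_inner_le_norm _ _).trans ?_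
  exact mul_le_mul hM hC (norm_nonneg _) ((norm_nonneg _).trans hM)

theorem ou_aux_integrable {E F Ω : Type*} [NormedAddCommGroup E] [InnerProductSpace ℝ E]
    [NormedAddCommGroup F] [NormedSpace ℝ F]
    [MeasurableSpace Ω] (P : Measure Ω) [IsFiniteMeasure P]
    {u : Ω → E} {f : Ω → F} {C K : ℝ} (hu : AEStronglyMeasurable u P)
    (hf : AEStronglyMeasurable f P) (hC : ∀ᵐ y ∂P, ‖u y‖ ≤ C) (hK : ∀ᵐ y ∂P, ‖f y‖ ≤ K) (x : E) :
    Integrable (fun y => Real.exp (inner ℝ x (u y)) • f y) P := by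
  have hm : AEStronglyMeasurable (fun y => Real.exp (inner ℝ x (u y)) • f y) P :=
    (Real.continuous_exp.comp_aestronglyMeasurable
      (aestronglyMeasurable_const.inner hu)).smul hf
  refine Integrable.of_bound hm (Real.exp (‖x‖ * C) * K) ?_
  filter_upwards [hC, hK] with y h1 h2
  rw [norm_smul, Real.norm_eq_abs, abs_of_pos (Real.exp_pos _)]
  exact mul_le_mul (ou_aux_bound le_rfl h1) h2 (norm_nonneg _) (Real.exp_pos _).le

theorem ou_aux_meas {E F Ω : Type*} [NormedAddCommGroup E] [InnerProductSpace ℝ E]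
    [NormedAddCommGroup F] [NormedSpace ℝ F]
    [MeasurableSpace Ω] (P : Measure Ω)
    {u : Ω → E} {f : Ω → F} (hu : AEStronglyMeasurable u P)
    (hf : AEStronglyMeasurable f P) :
    AEStronglyMeasurable (fun y => (innerSL ℝ (u y)).smulRight (f y)) P := by
  have h : Continuous (fun p : E × F => (innerSL ℝ p.1).smulRight p.2) := by
    have := (ContinuousLinearMap.smulRightL ℝ E F).continuous₂
    exact this.comp (((innerSL ℝ).continuous.comp continuous_fst).prodMk continuous_snd)
  exact h.comp_aestronglyMeasurable (hu.prodMk hf)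

theorem ou_aux_deriv {E F Ω : Type*} [NormedAddCommGroup E] [InnerProductSpace ℝ E]
    [NormedAddCommGroup F] [NormedSpace ℝ F]
    [MeasurableSpace Ω] (P : Measure Ω) [IsFiniteMeasure P]
    {u : Ω → E} {f : Ω → F} {C K : ℝ} (hu : AEStronglyMeasurable u P)
    (hf : AEStronglyMeasurable f P) (hC : ∀ᵐ y ∂P, ‖u y‖ ≤ C) (hK : ∀ᵐ y ∂P, ‖f y‖ ≤ K) (x : E) :
    HasFDerivAt (fun z => ∫ y, Real.exp (inner ℝ z (u y)) • f y ∂P)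
      (∫ y, Real.exp (inner ℝ x (u y)) • (innerSL ℝ (u y)).smulRight (f y) ∂P) x := by
  have hbd : ∀ᵐ y ∂P, ‖(innerSL ℝ (u y)).smulRight (f y)‖ ≤ C * K := by
    filter_upwards [hC, hK] with y h1 h2
    rw [ContinuousLinearMap.norm_smulRight_apply, innerSL_apply_norm]
    exact mul_le_mul h1 h2 (norm_nonneg _) ((norm_nonneg _).trans h1)
  refine hasFDerivAt_integral_of_dominated_of_fderiv_le
    (F' := fun z y => Real.exp (inner ℝ z (u y)) • (innerSL ℝ (u y)).smulRight (f y))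
    (bound := fun _ => Real.exp ((‖x‖ + 1) * C) * (C * K))
    (Metric.ball_mem_nhds x one_pos)
    (Filter.Eventually.of_forall fun z => (ou_aux_integrable P hu hf hC hK z).aestronglyMeasurable)
    (ou_aux_integrable P hu hf hC hK x)
    (ou_aux_integrable P hu (ou_aux_meas P hu hf) hC hbd x).aestronglyMeasurable ?_
    (integrable_const _) ?_
  · filter_upwards [hC, hbd] with y h1 h2 z hz
    rw [norm_smul, Real.norm_eq_abs, abs_of_pos (Real.exp_pos _)]
    have hz' : ‖z‖ ≤ ‖x‖ + 1 := by
      have h3 : ‖z - x‖ < 1 := by simpa [dist_eq_norm] using hz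
      have h4 : ‖z‖ ≤ ‖x‖ + ‖z - x‖ := by
        simpa using norm_add_le x (z - x)
      linarith
    exact mul_le_mul (ou_aux_bound hz' h1) h2 (norm_nonneg _) (Real.exp_pos _).le
  · refine Filter.Eventually.of_forall fun y z _ => ?_
    have h1 : HasFDerivAt (fun z : E => inner ℝ z (u y)) (innerSL ℝ (u y)) z := by
      have := (innerSL ℝ (u y)).hasFDerivAt (x := z)
      refine this.congr_of_eventuallyEq (Filter.Eventually.of_forall fun w => ?_)
      simp [real_inner_comm]
    have h2 := (h1.exp).smul_const (f y)
    convert h2 using 1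
    ext w
    simp [smul_smul]

/-- Hessian bound for the log-partition function. -/
theorem ou_aux_main {E Ω : Type*} [NormedAddCommGroup E] [InnerProductSpace ℝ E] [CompleteSpace E]
    [MeasurableSpace Ω] (P : Measure Ω) [IsProbabilityMeasure P]
    {u : Ω → E} {w : Ω → ℝ} {C : ℝ} (hu : AEStronglyMeasurable u P)
    (hw : AEStronglyMeasurable w P) (hC : ∀ᵐ y ∂P, ‖u y‖ ≤ C)
    (hw0 : ∀ y, 0 < w y) (hw1 : ∀ y, w y ≤ 1) :
    ∃ (g : E → E) (H : E → E →L[ℝ] E),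
      (∀ x, 0 < ∫ y, Real.exp (inner ℝ x (u y)) • w y ∂P) ∧
      (∀ x, HasFDerivAt (fun z => Real.log (∫ y, Real.exp (inner ℝ z (u y)) • w y ∂P))
        (innerSL ℝ (g x)) x) ∧
      (∀ x, HasFDerivAt g (H x) x) ∧ ∀ x, ‖H x‖ ≤ 2 * C ^ 2 := by
  have hK : ∀ᵐ y ∂P, ‖w y‖ ≤ 1 := Filter.Eventually.of_forall fun y => by
    rw [Real.norm_eq_abs, abs_of_pos (hw0 y)]; exact hw1 y
  have hC0 : 0 ≤ C := by
    obtain ⟨y, hy⟩ := hC.exists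
    exact (norm_nonneg _).trans hy
  have hf2m : AEStronglyMeasurable (fun y => w y • u y) P := hw.smul hu
  have hK2 : ∀ᵐ y ∂P, ‖w y • u y‖ ≤ C := by
    filter_upwards [hC, hK] with y h1 h2
    rw [norm_smul]
    nlinarith [norm_nonneg (u y)]
  set Z : E → ℝ := fun x => ∫ y, Real.exp (inner ℝ x (u y)) • w y ∂P with hZ
  set V : E → E := fun x => ∫ y, Real.exp (inner ℝ x (u y)) • (w y • u y) ∂P with hV
  set A : E → E →L[ℝ] E := fun x => ∫ y, Real.exp (inner ℝ x (u y)) •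
    (innerSL ℝ (u y)).smulRight (w y • u y) ∂P with hA
  have hZi := ou_aux_integrable P hu hw hC hK
  have hVi := ou_aux_integrable P hu hf2m hC hK2
  have hZpos : ∀ x, 0 < Z x := by
    intro x
    have hp : ∀ y, 0 < Real.exp (inner ℝ x (u y)) • w y := fun y =>
      mul_pos (Real.exp_pos _) (hw0 y)
    refine (integral_pos_iff_support_of_nonneg (fun y => (hp y).le) (hZi x)).2 ?_
    have : Function.support (fun y => Real.exp (inner ℝ x (u y)) • w y) = Set.univ :=
      Set.eq_univ_of_forall fun y => (hp y).ne'
    rw [this]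
    simp
  have hZd : ∀ x, HasFDerivAt Z (innerSL ℝ (V x)) x := by
    intro x
    have h := ou_aux_deriv P hu hw hC hK x
    refine h.congr_fderiv (Eq.symm ?_)
    rw [hV, ← ContinuousLinearMap.integral_comp_comm (innerSL ℝ) (hVi x)]
    refine integral_congr_ae (Filter.Eventually.of_forall fun y => ?_)
    ext z
    simp [mul_comm]
    change _ * (_ * inner ℝ (u y) z) = _
    ring
  have hVd : ∀ x, HasFDerivAt V (A x) x := fun x => ou_aux_deriv P hu hf2m hC hK2 x
  have hVn : ∀ x, ‖V x‖ ≤ C * Z x := by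
    intro x
    rw [hZ, ← integral_const_mul]
    refine norm_integral_le_of_norm_le ((hZi x).const_mul C) ?_
    filter_upwards [hC] with y h1
    rw [norm_smul, norm_smul, Real.norm_eq_abs, Real.norm_eq_abs, abs_of_pos (Real.exp_pos _),
      abs_of_pos (hw0 y), smul_eq_mul, ← mul_assoc, mul_comm]
    exact mul_le_mul_of_nonneg_right h1 (mul_pos (Real.exp_pos _) (hw0 y)).le
  have hAn : ∀ x, ‖A x‖ ≤ C ^ 2 * Z x := by
    intro x
    rw [hZ, ← integral_const_mul]
    refine norm_integral_le_of_norm_le ((hZi x).const_mul (C ^ 2)) ?_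
    filter_upwards [hC] with y h1
    rw [norm_smul, ContinuousLinearMap.norm_smulRight_apply, innerSL_apply_norm, norm_smul,
      Real.norm_eq_abs, Real.norm_eq_abs, abs_of_pos (Real.exp_pos _),
      abs_of_pos (hw0 y), smul_eq_mul]
    have h2 : ‖u y‖ ^ 2 ≤ C ^ 2 := pow_le_pow_left₀ (norm_nonneg _) h1 2
    have h3 := mul_le_mul_of_nonneg_right h2 (mul_pos (Real.exp_pos (inner ℝ x (u y))) (hw0 y)).le
    linarith
  refine ⟨fun x => (Z x)⁻¹ • V x, fun x => (Z x)⁻¹ • A x +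
    (-((Z x) ^ 2)⁻¹ • innerSL ℝ (V x)).smulRight (V x), hZpos, ?_, ?_, ?_⟩
  · intro x
    have h := (hZd x).log (hZpos x).ne'
    convert h using 1
    simp
  · intro x
    have h1 : HasFDerivAt (fun z => (Z z)⁻¹) (-((Z x) ^ 2)⁻¹ • innerSL ℝ (V x)) x :=
      (hasDerivAt_inv (hZpos x).ne').comp_hasFDerivAt x (hZd x)
    exact h1.smul (hVd x)
  · intro x
    have hz := hZpos x
    refine (norm_add_le _ _).trans ?_
    rw [ContinuousLinearMap.norm_smulRight_apply, norm_smul, norm_smul, innerSL_apply_norm,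
      Real.norm_eq_abs, Real.norm_eq_abs, abs_neg, abs_of_pos (by positivity),
      abs_of_pos (by positivity)]
    have e1 : (Z x)⁻¹ * ‖A x‖ ≤ C ^ 2 := by
      rw [inv_mul_le_iff₀ hz]; linarith [hAn x]
    have e2 : ((Z x) ^ 2)⁻¹ * ‖V x‖ * ‖V x‖ ≤ C ^ 2 := by
      rw [mul_assoc, inv_mul_le_iff₀ (by positivity)]
      nlinarith [mul_self_le_mul_self (norm_nonneg _) (hVn x)]
    linarith

/-- Hessian bound of Corollary 3.9 for bounded-support targets with early stopping. -/
theorem stmt6 {d : ℕ}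
    (P₀ : Measure (EuclideanSpace ℝ (Fin d))) [IsProbabilityMeasure P₀]
    (R : ℝ)
    (hsupp : P₀ (Metric.closedBall (0 : EuclideanSpace ℝ (Fin d)) R)ᶜ = 0)
    (δ : ℝ) (hδ : 0 < δ) (t : ℝ) (ht : δ ≤ t) (x : EuclideanSpace ℝ (Fin d)) :
    ‖fderiv ℝ (gradient (fun z => Real.log (ouDensityIso P₀ t z))) x
        + (1 - Real.exp (-t))⁻¹ • ContinuousLinearMap.id ℝ (EuclideanSpace ℝ (Fin d))‖
      ≤ 3 * R ^ 2 / (1 - Real.exp (-δ)) ^ 2 * Real.exp (-t) := by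
  have hae : ∀ᵐ y ∂P₀, ‖y‖ ≤ R := by
    rw [ae_iff]
    convert hsupp using 2
    ext y
    simp
  have hsd : 0 < 1 - Real.exp (-δ) := by
    have : Real.exp (-δ) < 1 := by
      have := Real.exp_lt_exp.2 (show -δ < 0 by linarith)
      simpa using this
    linarith
  have hss : 1 - Real.exp (-δ) ≤ 1 - Real.exp (-t) := by
    have : Real.exp (-t) ≤ Real.exp (-δ) := Real.exp_le_exp.2 (by linarith)
    linarith
  have ha2 : Real.exp (-t / 2) ^ 2 = Real.exp (-t) := by
    rw [← Real.exp_nat_mul]; congr 1; push_cast; ring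
  have hapos := Real.exp_pos (-t / 2)
  have hdef : ∀ z, ouDensityIso P₀ t z = (2 * π * (1 - Real.exp (-t))) ^ (-(d : ℝ) / 2) *
    ∫ y, Real.exp (-‖z - Real.exp (-t / 2) • y‖ ^ 2 / (2 * (1 - Real.exp (-t)))) ∂P₀ :=
    fun z => rfl
  simp only [hdef]
  generalize Real.exp (-t / 2) = a at *
  generalize 1 - Real.exp (-δ) = s' at *
  generalize 1 - Real.exp (-t) = s at *
  have hs : 0 < s := hsd.trans_le hss
  have hc : 0 < (2 * π * s) ^ (-(d : ℝ) / 2) := by positivity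
  generalize (2 * π * s) ^ (-(d : ℝ) / 2) = c at *
  obtain ⟨g, H, hpos, hg, hH, hHn⟩ := ou_aux_main P₀ (u := fun y => (a / s) • y)
    (w := fun y => Real.exp (-(a ^ 2 * ‖y‖ ^ 2 / (2 * s)))) (C := a / s * R)
    (by fun_prop) (by fun_prop)
    (by
      filter_upwards [hae] with y hy
      rw [norm_smul, Real.norm_eq_abs, abs_of_pos (by positivity)]
      exact mul_le_mul_of_nonneg_left hy (by positivity))
    (fun y => Real.exp_pos _)
    (fun y => Real.exp_le_one_iff.2 (neg_nonpos.2 (by positivity)))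
  have hlog : ∀ z : EuclideanSpace ℝ (Fin d),
      Real.log (c * ∫ y, Real.exp (-‖z - a • y‖ ^ 2 / (2 * s)) ∂P₀) =
      (Real.log c + (-(2 * s)⁻¹) * ‖z‖ ^ 2) +
        Real.log (∫ y, Real.exp (inner ℝ z ((a / s) • y)) •
          Real.exp (-(a ^ 2 * ‖y‖ ^ 2 / (2 * s))) ∂P₀) := by
    intro z
    have h1 : ∫ y, Real.exp (-‖z - a • y‖ ^ 2 / (2 * s)) ∂P₀ =
        Real.exp ((-(2 * s)⁻¹) * ‖z‖ ^ 2) * ∫ y, Real.exp (inner ℝ z ((a / s) • y)) •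
          Real.exp (-(a ^ 2 * ‖y‖ ^ 2 / (2 * s))) ∂P₀ := by
      rw [← integral_const_mul]
      congr 1
      ext y
      rw [smul_eq_mul, ← Real.exp_add, ← Real.exp_add, norm_sub_sq_real, norm_smul,
        real_inner_smul_right, real_inner_smul_right, mul_pow, Real.norm_eq_abs, sq_abs]
      congr 1
      field_simp
      ring
    rw [h1, Real.log_mul hc.ne' (mul_pos (Real.exp_pos _) (hpos z)).ne',
      Real.log_mul (Real.exp_pos _).ne' (hpos z).ne', Real.log_exp, add_assoc]
  have hgrad : gradient (fun z : EuclideanSpace ℝ (Fin d) =>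
      Real.log (c * ∫ y, Real.exp (-‖z - a • y‖ ^ 2 / (2 * s)) ∂P₀)) =
      fun z => (-s⁻¹) • z + g z := by
    funext z
    apply HasGradientAt.gradient
    rw [hasGradientAt_iff_hasFDerivAt]
    simp only [hlog]
    have h1 := ((hasStrictFDerivAt_norm_sq z).hasFDerivAt.const_mul (-(2 * s)⁻¹)).const_add
      (Real.log c)
    have h2 := h1.add (hg z)
    refine h2.congr_fderiv ?_
    ext v
    simp
    field_simp
  rw [hgrad]
  have hF : HasFDerivAt (fun z : EuclideanSpace ℝ (Fin d) => (-s⁻¹) • z + g z)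
      ((-s⁻¹) • ContinuousLinearMap.id ℝ (EuclideanSpace ℝ (Fin d)) + H x) x :=
    ((hasFDerivAt_id x).const_smul (-s⁻¹)).add (hH x)
  rw [hF.fderiv]
  have e : (-s⁻¹) • ContinuousLinearMap.id ℝ (EuclideanSpace ℝ (Fin d)) + H x +
      s⁻¹ • ContinuousLinearMap.id ℝ (EuclideanSpace ℝ (Fin d)) = H x := by
    ext1 v
    simp
  rw [e]
  refine (hHn x).trans ?_
  rw [← ha2]
  have h1 : 2 * (a / s * R) ^ 2 = 2 * (R ^ 2 * a ^ 2) / s ^ 2 := by field_simp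
  have h2 : 3 * R ^ 2 / s' ^ 2 * a ^ 2 = 3 * (R ^ 2 * a ^ 2) / s' ^ 2 := by field_simp
  rw [h1, h2]
  have h3 : 0 ≤ R ^ 2 * a ^ 2 := by positivity
  gcongr
  norm_num
end
end

section
/- Let P₀ be a probability measure on ℝ^d whose support is contained in the closed ball of radius R centered at the origin, let 0 < δ ≤ 1, and let p_t be the isotropic forward Ornstein–Uhlenbeck marginal density started from P₀, with score s(t,x) := ∇ log p_t(x). Set L₀ := 3R²/(1−e^{−δ})² and L₂ := 1/(1−e^{−δ}). Let T > δ and let 0 = t₀ ≤ t₁ ≤ … ≤ t_N = T−δ be a time schedule with maximal step τ := max_k (t_{k+1}−t_k) ≤ min{1, 1/((L₀+L₂)e)}. Let s_θ satisfy: for each k, s_θ(T−t_k,·) : ℝ^d → ℝ^d is C¹ with ‖∇s_θ(T−t_k,x) + (1−e^{−(T−t_k)})^{−1} I_d‖ ≤ L₀ e^{−(T−t_k)} for all x, and Σ_{k=0}^{N−1} (t_{k+1}−t_k) ∫_{ℝ^d} |s(T−t_k,x) − s_θ(T−t_k,x)|² p_{T−t_k}(x) dx ≤ ε² T. Let ν_N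 denote the law of the sampling scheme output (with C = I_d). Then there exists a probability measure π on ℝ^d × ℝ^d whose first marginal is the measure with density p_δ and whose second marginal is ν_N, such that ∫ |x−y|² dπ(x,y) ≤ K₂ ( e^{−2T+δ}(R² + d) + ε² T + d τ² ), where K₂ := 2 exp( 7 + 12R²/(1−e^{−δ})² + 4/(1−e^{−δ}) ). (Theorem 3.10, the Wasserstein-2 convergence bound for bounded-support targets under early stopping.) -/
open MeasureTheory Real Matrix ProbabilityTheory

noncomputable section

/-- Standard Gaussian measure `N(0, I_d)` on `EuclideanSpace ℝ (Fin d)`,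
the `d`-fold product of standard real Gaussian measures. -/
def stdGaussE (d : ℕ) : Measure (EuclideanSpace ℝ (Fin d)) :=
  (Measure.pi fun _ : Fin d => gaussianReal 0 1).map
    (EuclideanSpace.equiv (Fin d) ℝ).symm

/-- One step map of the sampling scheme:
`F_k(x) = α_k^{-1/2} (x + (1-α_k) s_θ(T - t_k, x))` with `α_k = exp (t_k - t_{k+1})`. -/
def stepMap {d : ℕ} (sθ : ℝ → EuclideanSpace ℝ (Fin d) → EuclideanSpace ℝ (Fin d))
    (t : ℕ → ℝ) (T : ℝ) (k : ℕ) (x : EuclideanSpace ℝ (Fin d)) : EuclideanSpace ℝ (Fin d) :=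
  (Real.exp (t k - t (k + 1))) ^ (-(1 : ℝ) / 2) •
    (x + (1 - Real.exp (t k - t (k + 1))) • sθ (T - t k) x)

/-- Law of the sampling scheme after `k` steps: `ν₀ = γ` and
`ν_{k+1} = ((F_k)_# ν_k) ∗ ((√(1-α_k) ·)_# γ)`, the convolution being realized as the
pushforward of the product measure under addition. -/
def schemeLaw {d : ℕ} (γ : Measure (EuclideanSpace ℝ (Fin d)))
    (sθ : ℝ → EuclideanSpace ℝ (Fin d) → EuclideanSpace ℝ (Fin d))
    (t : ℕ → ℝ) (T : ℝ) : ℕ → Measure (EuclideanSpace ℝ (Fin d))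
  | 0 => γ
  | (k + 1) =>
      (((schemeLaw γ sθ t T k).map (stepMap sθ t T k)).prod
        (γ.map fun x => Real.sqrt (1 - Real.exp (t k - t (k + 1))) • x)).map
          fun p => p.1 + p.2

/-- shorthand for Euclidean space -/
abbrev EE (d : ℕ) := EuclideanSpace ℝ (Fin d)

lemma stdGaussE_eq (d : ℕ) : stdGaussE d = stdGaussian (EE d) := by
  rw [← map_pi_eq_stdGaussian]; rfl

instance stdGaussE_prob (d : ℕ) : IsProbabilityMeasure (stdGaussE d) := by
  rw [stdGaussE_eq]; infer_instance

/-- Gaussian density -/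
def gdens (d : ℕ) (z : EE d) : ℝ := (2 * π) ^ (-(d : ℝ) / 2) * Real.exp (-‖z‖ ^ 2 / 2)

lemma gdens_pos (d : ℕ) (z : EE d) : 0 < gdens d z := by unfold gdens; positivity

lemma gdens_cont (d : ℕ) : Continuous (gdens d) := by unfold gdens; fun_prop

lemma gdens_integrable (d : ℕ) : Integrable (gdens d) := by
  have h := GaussianFourier.integrable_cexp_neg_mul_sq_norm_add (V := EE d) (b := 1/2) (by norm_num) 0 0
  have h2 := h.re.const_mul ((2 * π) ^ (-(d : ℝ) / 2))
  refine h2.congr (Filter.Eventually.of_forall fun z => ?_)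
  simp only [gdens, inner_zero_left, Complex.ofReal_zero, mul_zero, add_zero, RCLike.re_to_complex]
  congr 1
  rw [show (-(1/2) * (‖z‖:ℂ)^2) = ((-‖z‖^2/2 : ℝ) : ℂ) by push_cast; ring, ← Complex.ofReal_exp, Complex.ofReal_re]

lemma gauss_density (d : ℕ) :
    stdGaussE d = volume.withDensity (fun z => ENNReal.ofReal (gdens d z)) := by
  have hfin : IsFiniteMeasure (volume.withDensity (fun z => ENNReal.ofReal (gdens d z))) :=
    isFiniteMeasure_withDensity_ofReal (gdens_integrable d).2
  rw [stdGaussE_eq]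
  apply Measure.ext_of_charFun
  ext t
  rw [charFun_stdGaussian, charFun_apply, integral_withDensity_eq_integral_toReal_smul₀]
  · have h := GaussianFourier.integral_cexp_neg_mul_sq_norm_add (V := EE d) (b := 1/2) (by norm_num) Complex.I t
    have h3 : ∀ x : EE d, (ENNReal.ofReal (gdens d x)).toReal • Complex.exp ((inner ℝ x t : ℝ) * Complex.I)
        = ((2 * π : ℝ) : ℂ) ^ (((-(d : ℝ) / 2 : ℝ)) : ℂ) * Complex.exp (-(1/2) * (‖x‖:ℂ) ^ 2 + Complex.I * (inner ℝ t x : ℝ)) := by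
      intro x
      rw [ENNReal.toReal_ofReal (gdens_pos d x).le, gdens, Complex.real_smul, Complex.ofReal_mul,
        Complex.ofReal_cpow (by positivity), mul_assoc, Complex.ofReal_exp, ← Complex.exp_add, real_inner_comm]
      congr 2
      push_cast; ring
    simp_rw [h3]
    rw [integral_const_mul, h]
    have h4 : ((π:ℂ) / (1/2)) = ((2 * π : ℝ) : ℂ) := by push_cast; ring
    rw [h4, ← mul_assoc, ← Complex.cpow_add _ _ (by exact_mod_cast (by positivity : (2*π:ℝ) ≠ 0))]
    have : (((-(d : ℝ) / 2 : ℝ)) : ℂ) + (Module.finrank ℝ (EE d) : ℂ) / 2 = 0 := by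
      simp; ring
    rw [this, Complex.cpow_zero, one_mul, Complex.I_sq]
    congr 1; push_cast; ring
  · exact (gdens_cont d).measurable.ennreal_ofReal.aemeasurable
  · simp

lemma gauss_sq (d : ℕ) : ∫⁻ z, ENNReal.ofReal (‖z‖ ^ 2) ∂(stdGaussE d) = ENNReal.ofReal d := by
  have hme : MeasurableEmbedding (EuclideanSpace.equiv (Fin d) ℝ).symm :=
    (EuclideanSpace.equiv (Fin d) ℝ).symm.toHomeomorph.measurableEmbedding
  rw [stdGaussE, hme.lintegral_map]
  have : ∀ a : Fin d → ℝ, ENNReal.ofReal (‖(EuclideanSpace.equiv (Fin d) ℝ).symm a‖ ^ 2)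
      = ∑ i, ENNReal.ofReal (a i ^ 2) := by
    intro a
    rw [EuclideanSpace.real_norm_sq_eq, ENNReal.ofReal_sum_of_nonneg (fun _ _ => sq_nonneg _)]
    rfl
  simp_rw [this]
  rw [lintegral_finsetSum _ (fun i _ => by fun_prop)]
  have h1 : ∀ i : Fin d, ∫⁻ a : Fin d → ℝ, ENNReal.ofReal (a i ^ 2) ∂(Measure.pi fun _ : Fin d => gaussianReal 0 1) = 1 := by
    intro i
    have := (measurePreserving_eval (fun _ : Fin d => gaussianReal 0 1) i).lintegral_comp
      (f := fun x => ENNReal.ofReal (x^2)) (by fun_prop)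
    simp only [Function.eval] at this
    rw [this, ← ofReal_integral_eq_lintegral_ofReal]
    · have hv := variance_fun_id_gaussianReal (μ := 0) (v := 1)
      rw [variance_eq_integral (by fun_prop)] at hv
      simp at hv
      simp [hv]
    · exact (memLp_id_gaussianReal (μ := 0) (v := 1) 2).integrable_sq
    · exact Filter.Eventually.of_forall fun x => sq_nonneg x
  simp [h1]

lemma gauss_add (d : ℕ) (a b c : ℝ) (h : c ^ 2 = a ^ 2 + b ^ 2) :
    ((stdGaussE d).prod (stdGaussE d)).map (fun p => a • p.1 + b • p.2)
      = (stdGaussE d).map (fun z => c • z) := by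
  have e1 : ((stdGaussE d).prod (stdGaussE d)).map (fun p => a • p.1 + b • p.2)
     = ((((stdGaussE d).map (fun z => a • z)).prod ((stdGaussE d).map (fun z => b • z)))).map (fun p => p.1 + p.2) := by
    rw [Measure.map_prod_map _ _ (by fun_prop) (by fun_prop), Measure.map_map (by fun_prop) (by fun_prop)]
    rfl
  have i1 : IsProbabilityMeasure ((stdGaussE d).map (fun z => a • z)) := Measure.isProbabilityMeasure_map (by fun_prop)
  have i2 : IsProbabilityMeasure ((stdGaussE d).map (fun z => b • z)) := Measure.isProbabilityMeasure_map (by fun_prop)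
  have i3 : IsProbabilityMeasure ((stdGaussE d).map (fun z => c • z)) := Measure.isProbabilityMeasure_map (by fun_prop)
  rw [e1]
  have i4 : IsProbabilityMeasure ((((stdGaussE d).map (fun z => a • z)).prod ((stdGaussE d).map (fun z => b • z))).map (fun p => p.1 + p.2)) :=
    Measure.isProbabilityMeasure_map (by fun_prop)
  apply Measure.ext_of_charFun
  rw [charFun_map_add_prod_eq_mul]
  ext t
  simp only [Pi.mul_apply, charFun_map_smul, stdGaussE_eq, charFun_stdGaussian, ← Complex.exp_add]
  congr 1
  rw [← Complex.ofReal_pow, ← Complex.ofReal_pow, ← Complex.ofReal_pow]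
  simp only [norm_smul, mul_pow, Real.norm_eq_abs, sq_abs, h]
  push_cast; ring

lemma cameron_martin (d : ℕ) (v : EE d) (g : EE d → ENNReal) (hg : Measurable g) :
    ∫⁻ z, g (v + z) ∂(stdGaussE d)
      = ∫⁻ y, ENNReal.ofReal (Real.exp (inner ℝ y v - ‖v‖ ^ 2 / 2)) * g y ∂(stdGaussE d) := by
  have hm : Measurable (fun z => ENNReal.ofReal (gdens d z)) := (gdens_cont d).measurable.ennreal_ofReal
  rw [gauss_density, lintegral_withDensity_eq_lintegral_mul _ hm (by fun_prop),
    lintegral_withDensity_eq_lintegral_mul _ hm (by fun_prop)]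
  conv_rhs => rw [← lintegral_add_left_eq_self _ v]
  refine lintegral_congr fun z => ?_
  simp only [Pi.mul_apply]
  rw [← mul_assoc, ← ENNReal.ofReal_mul (gdens_pos d _).le]
  congr 2
  simp only [gdens, mul_assoc, ← Real.exp_add]
  congr 2
  rw [@norm_add_sq_real, inner_add_left, real_inner_self_eq_norm_sq, real_inner_comm]
  ring

lemma cont_integrable_of_compact {X F : Type*} [TopologicalSpace X] [T2Space X] [MeasurableSpace X]
    [OpensMeasurableSpace X] [SecondCountableTopology X] [NormedAddCommGroup F] (μ : Measure X) [IsFiniteMeasure μ]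
    (K : Set X) (hK : IsCompact K) (hμ : μ Kᶜ = 0) (f : X → F) (hf : Continuous f) : Integrable f μ := by
  have h1 : IntegrableOn f K μ := hf.continuousOn.integrableOn_compact hK
  have h2 : μ.restrict K = μ := Measure.restrict_eq_self_of_ae_mem (by rw [ae_iff]; exact hμ)
  rwa [IntegrableOn, h2] at h1

section
variable {d : ℕ} {P₀ : Measure (EE d)} [IsProbabilityMeasure P₀] {R : ℝ}

lemma ae_norm_le (hsupp : P₀ (Metric.closedBall (0 : EE d) R)ᶜ = 0) : ∀ᵐ x ∂P₀, ‖x‖ ≤ R := by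
  rw [ae_iff]
  convert hsupp using 2
  ext x; simp

lemma R_nonneg (hsupp : P₀ (Metric.closedBall (0 : EE d) R)ᶜ = 0) : 0 ≤ R := by
  obtain ⟨x, hx⟩ := (ae_norm_le hsupp).exists
  exact (norm_nonneg x).trans hx

lemma cont_int {F : Type*} [NormedAddCommGroup F]
    (hsupp : P₀ (Metric.closedBall (0 : EE d) R)ᶜ = 0) {f : EE d → F}
    (hf : Continuous f) : Integrable f P₀ :=
  cont_integrable_of_compact P₀ _ (isCompact_closedBall 0 R) hsupp f hf

lemma ae_prod_norm_le (hsupp : P₀ (Metric.closedBall (0 : EE d) R)ᶜ = 0) :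
    ∀ᵐ p ∂(P₀.prod P₀), ‖p.1‖ ≤ R ∧ ‖p.2‖ ≤ R :=
  (Measure.quasiMeasurePreserving_fst.ae (ae_norm_le hsupp)).and
    (Measure.quasiMeasurePreserving_snd.ae (ae_norm_le hsupp))

lemma cont_int2 {F : Type*} [NormedAddCommGroup F]
    (hsupp : P₀ (Metric.closedBall (0 : EE d) R)ᶜ = 0) {f : EE d × EE d → F}
    (hf : Continuous f) : Integrable f (P₀.prod P₀) := by
  refine cont_integrable_of_compact _ _ ((isCompact_closedBall (0 : EE d) R).prod (isCompact_closedBall (0 : EE d) R)) ?_ f hf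
  have := ae_prod_norm_le hsupp
  rw [ae_iff] at this
  convert this using 2
  ext x; simp [Set.mem_prod]

/-- likelihood weight -/
def Wt (l : ℝ) (y x : EE d) : ℝ := Real.exp (l * inner ℝ y x - l ^ 2 * ‖x‖ ^ 2 / 2)

/-- normalisation -/
def Zt (P₀ : Measure (EE d)) (l : ℝ) (y : EE d) : ℝ := ∫ x, Wt l y x ∂P₀

/-- posterior density -/
def rho (P₀ : Measure (EE d)) (l : ℝ) (y x : EE d) : ℝ := (Zt P₀ l y)⁻¹ * Wt l y x

/-- posterior mean -/
def pmean (P₀ : Measure (EE d)) (l : ℝ) (y : EE d) : EE d := ∫ x, rho P₀ l y x • x ∂P₀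

lemma Wt_pos (l : ℝ) (y x : EE d) : 0 < Wt l y x := Real.exp_pos _

lemma Wt_cont (l : ℝ) : Continuous (fun p : EE d × EE d => Wt l p.1 p.2) := by
  unfold Wt; fun_prop

lemma Wt_cont' (l : ℝ) (y : EE d) : Continuous (Wt l y) := by
  unfold Wt; fun_prop

lemma Zt_pos (hsupp : P₀ (Metric.closedBall (0 : EE d) R)ᶜ = 0) (l : ℝ) (y : EE d) : 0 < Zt P₀ l y := by
  apply integral_exp_pos
  exact cont_int hsupp (Wt_cont' l y)

lemma Zt_meas (l : ℝ) : Measurable (Zt P₀ l) :=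
  (StronglyMeasurable.integral_prod_right (f := fun y x => Wt l y x)
    (Wt_cont l).stronglyMeasurable).measurable

lemma rho_pos (hsupp : P₀ (Metric.closedBall (0 : EE d) R)ᶜ = 0) (l : ℝ) (y x : EE d) : 0 < rho P₀ l y x :=
  mul_pos (inv_pos.2 (Zt_pos hsupp l y)) (Wt_pos l y x)

lemma rho_cont (l : ℝ) (y : EE d) : Continuous (rho P₀ l y) :=
  continuous_const.mul (Wt_cont' l y)

lemma rho_meas (l : ℝ) : Measurable (fun p : EE d × EE d => rho P₀ l p.1 p.2) :=
  ((Zt_meas l).comp measurable_fst).inv.mul (Wt_cont l).measurable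

lemma pmean_meas (l : ℝ) : Measurable (pmean P₀ l) :=
  (StronglyMeasurable.integral_prod_right (f := fun y x => rho P₀ l y x • x)
    ((rho_meas l).smul measurable_snd).stronglyMeasurable).measurable

lemma rho_int (hsupp : P₀ (Metric.closedBall (0 : EE d) R)ᶜ = 0) (l : ℝ) (y : EE d) :
    ∫ x, rho P₀ l y x ∂P₀ = 1 := by
  unfold rho
  rw [integral_const_mul]
  exact inv_mul_cancel₀ (Zt_pos hsupp l y).ne'

lemma pmean_norm (hsupp : P₀ (Metric.closedBall (0 : EE d) R)ᶜ = 0) (l : ℝ) (y : EE d) :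
    ‖pmean P₀ l y‖ ≤ R := by
  calc ‖pmean P₀ l y‖ ≤ ∫ x, rho P₀ l y x * R ∂P₀ := by
        refine norm_integral_le_of_norm_le (cont_int hsupp ((rho_cont l y).mul continuous_const)) ?_
        filter_upwards [ae_norm_le hsupp] with x hx
        rw [norm_smul, Real.norm_eq_abs, abs_of_pos (rho_pos hsupp l y x)]
        exact mul_le_mul_of_nonneg_left hx (rho_pos hsupp l y x).le
    _ = R := by rw [integral_mul_const, rho_int hsupp, one_mul]

lemma abs_exp_sub_le (a b : ℝ) : |Real.exp a - Real.exp b| ≤ |a - b| * (Real.exp a + Real.exp b) := by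
  wlog h : b ≤ a with H
  · rw [abs_sub_comm, abs_sub_comm a b, add_comm]; exact H b a (le_of_not_ge h)
  rw [abs_of_nonneg (sub_nonneg.2 (Real.exp_le_exp.2 h)), abs_of_nonneg (sub_nonneg.2 h)]
  have h1 : Real.exp b = Real.exp a * Real.exp (b - a) := by rw [← Real.exp_add]; congr 1; ring
  have h2 := Real.add_one_le_exp (b - a)
  have h3 := Real.exp_pos a
  have h4 := Real.exp_pos b
  nlinarith [mul_le_mul_of_nonneg_left h2 h3.le, mul_nonneg (sub_nonneg.2 h) h4.le]

lemma pmean_diff (hsupp : P₀ (Metric.closedBall (0 : EE d) R)ᶜ = 0) (l l' : ℝ) (y y' : EE d) :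
    ‖pmean P₀ l' y' - pmean P₀ l y‖ ≤ 4 * R ^ 2 * ‖l' • y' - l • y‖ + |l' ^ 2 - l ^ 2| * R ^ 3 := by
  set b := 4 * R ^ 2 * ‖l' • y' - l • y‖ + |l' ^ 2 - l ^ 2| * R ^ 3 with hb
  have hR := R_nonneg hsupp
  set r1 := rho P₀ l' y' with hr1
  set r0 := rho P₀ l y with hr0
  have c1 : Continuous r1 := rho_cont l' y'
  have c0 : Continuous r0 := rho_cont l y
  have e1 : ∫ p, (r1 p.1 * r0 p.2) • (p.1 - p.2) ∂(P₀.prod P₀) = pmean P₀ l' y' - pmean P₀ l y := by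
    have : ∀ p : EE d × EE d, (r1 p.1 * r0 p.2) • (p.1 - p.2) = r0 p.2 • (r1 p.1 • p.1) - r1 p.1 • (r0 p.2 • p.2) := by
      intro p; rw [smul_sub, smul_smul, smul_smul, mul_comm (r0 p.2)]
    simp_rw [this]
    rw [integral_sub (cont_int2 hsupp (by fun_prop)) (cont_int2 hsupp (by fun_prop))]
    rw [← integral_prod_swap]
    simp only [Prod.fst_swap, Prod.snd_swap]
    rw [integral_prod_smul (f := r0) (g := fun x => r1 x • x), integral_prod_smul (f := r1) (g := fun x => r0 x • x)]
    rw [hr1, hr0, rho_int hsupp, rho_int hsupp, one_smul, one_smul]; rfl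
  have e2 : ∫ p, (r1 p.2 * r0 p.1) • (p.1 - p.2) ∂(P₀.prod P₀) = - (pmean P₀ l' y' - pmean P₀ l y) := by
    rw [← e1, ← integral_neg, ← integral_prod_swap]
    congr 1; ext1 p
    simp [← smul_neg]
  have e3 : (2:ℝ) • (pmean P₀ l' y' - pmean P₀ l y) = ∫ p, (r1 p.1 * r0 p.2 - r1 p.2 * r0 p.1) • (p.1 - p.2) ∂(P₀.prod P₀) := by
    simp_rw [sub_smul (r1 _ * r0 _)]
    rw [integral_sub (cont_int2 hsupp (by fun_prop)) (cont_int2 hsupp (by fun_prop)), e1, e2, two_smul]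
    abel
  have e4 : ‖(2:ℝ) • (pmean P₀ l' y' - pmean P₀ l y)‖ ≤ ∫ p, b * (r1 p.1 * r0 p.2 + r1 p.2 * r0 p.1) ∂(P₀.prod P₀) := by
    rw [e3]
    refine norm_integral_le_of_norm_le (cont_int2 hsupp (by fun_prop)) ?_
    filter_upwards [ae_prod_norm_le hsupp] with p hp
    obtain ⟨x, x'⟩ := p
    simp only at hp ⊢
    obtain ⟨hx, hx'⟩ := hp
    set A := l' * inner ℝ y' x - l' ^ 2 * ‖x‖ ^ 2 / 2 + (l * inner ℝ y x' - l ^ 2 * ‖x'‖ ^ 2 / 2) with hA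
    set B := l' * inner ℝ y' x' - l' ^ 2 * ‖x'‖ ^ 2 / 2 + (l * inner ℝ y x - l ^ 2 * ‖x‖ ^ 2 / 2) with hB
    set C := (Zt P₀ l' y')⁻¹ * (Zt P₀ l y)⁻¹ with hC
    have hCpos : 0 < C := mul_pos (inv_pos.2 (Zt_pos hsupp _ _)) (inv_pos.2 (Zt_pos hsupp _ _))
    have f1 : r1 x * r0 x' = C * Real.exp A := by
      rw [hA, Real.exp_add, hr1, hr0, rho, rho, Wt, Wt]; ring
    have f2 : r1 x' * r0 x = C * Real.exp B := by
      rw [hB, Real.exp_add, hr1, hr0, rho, rho, Wt, Wt]; ring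
    have f3 : A - B = inner ℝ (l' • y' - l • y) (x - x') - (l' ^ 2 - l ^ 2) * ((‖x‖ + ‖x'‖) * (‖x‖ - ‖x'‖)) / 2 := by
      rw [hA, hB]
      simp only [inner_sub_left, inner_sub_right, real_inner_smul_left]
      ring
    have f4 : ‖x - x'‖ ≤ 2 * R := (norm_sub_le _ _).trans (by linarith)
    have f5 : |A - B| ≤ 2 * R * ‖l' • y' - l • y‖ + |l' ^ 2 - l ^ 2| * R ^ 2 / 2 := by
      rw [f3]
      refine (abs_sub _ _).trans (add_le_add ?_ ?_)
      · refine (abs_real_inner_le_norm _ _).trans ?_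
        rw [mul_comm]
        exact mul_le_mul_of_nonneg_right f4 (norm_nonneg _)
      · rw [abs_div, abs_mul, abs_two]
        have : |(‖x‖ + ‖x'‖) * (‖x‖ - ‖x'‖)| ≤ R ^ 2 := by
          rw [abs_le]
          constructor <;> nlinarith [norm_nonneg x, norm_nonneg x']
        gcongr
    have f6 : |A - B| * ‖x - x'‖ ≤ b := by
      calc |A - B| * ‖x - x'‖ ≤ (2 * R * ‖l' • y' - l • y‖ + |l' ^ 2 - l ^ 2| * R ^ 2 / 2) * (2 * R) := by gcongr
        _ = b := by rw [hb]; ring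
    rw [f1, f2, norm_smul, Real.norm_eq_abs, ← mul_sub, ← mul_add, abs_mul, abs_of_pos hCpos]
    have f7 := abs_exp_sub_le A B
    calc C * |Real.exp A - Real.exp B| * ‖x - x'‖
        ≤ C * (|A - B| * (Real.exp A + Real.exp B)) * ‖x - x'‖ := by gcongr
      _ = C * (Real.exp A + Real.exp B) * (|A - B| * ‖x - x'‖) := by ring
      _ ≤ C * (Real.exp A + Real.exp B) * b := by gcongr
      _ = _ := by ring
  rw [integral_const_mul, integral_add (cont_int2 hsupp (by fun_prop)) (cont_int2 hsupp (by fun_prop))] at e4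
  have g1 : ∫ p, r1 p.1 * r0 p.2 ∂(P₀.prod P₀) = 1 := by
    rw [integral_prod_mul, hr1, hr0, rho_int hsupp, rho_int hsupp, one_mul]
  have g2 : ∫ p, r1 p.2 * r0 p.1 ∂(P₀.prod P₀) = 1 := by
    simp_rw [mul_comm (r1 _)]
    rw [integral_prod_mul, hr1, hr0, rho_int hsupp, rho_int hsupp, one_mul]
  rw [g1, g2, norm_smul] at e4
  simp only [Real.norm_ofNat] at e4
  linarith

/-- law of l X + G -/
def Qlaw (P₀ : Measure (EE d)) (l : ℝ) : Measure (EE d) :=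
  (P₀.prod (stdGaussE d)).map (fun p => l • p.1 + p.2)

instance Qlaw_prob (l : ℝ) : IsProbabilityMeasure (Qlaw P₀ l) :=
  Measure.isProbabilityMeasure_map (by fun_prop)

lemma ofReal_Zt (hsupp : P₀ (Metric.closedBall (0 : EE d) R)ᶜ = 0) (l : ℝ) (y : EE d) :
    ENNReal.ofReal (Zt P₀ l y) = ∫⁻ x, ENNReal.ofReal (Wt l y x) ∂P₀ :=
  ofReal_integral_eq_lintegral_ofReal (cont_int hsupp (Wt_cont' l y))
    (Filter.Eventually.of_forall fun x => (Wt_pos l y x).le)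

lemma Wt_joint (l : ℝ) (g : EE d × EE d → ENNReal) (hg : Measurable g) :
    ∫⁻ x, ∫⁻ z, g (l • x + z, x) ∂(stdGaussE d) ∂P₀
     = ∫⁻ y, ∫⁻ x, ENNReal.ofReal (Wt l y x) * g (y, x) ∂P₀ ∂(stdGaussE d) := by
  have hW : Measurable (fun p : EE d × EE d => ENNReal.ofReal (Wt l p.1 p.2)) :=
    (Wt_cont l).measurable.ennreal_ofReal
  conv_rhs => rw [lintegral_lintegral_swap (hW.mul hg).aemeasurable]
  refine lintegral_congr fun x => ?_
  rw [cameron_martin d (l • x) (fun y => g (y, x)) (by fun_prop)]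
  refine lintegral_congr fun y => ?_
  simp only [Wt, real_inner_smul_right, norm_smul, mul_pow, Real.norm_eq_abs, sq_abs]

lemma Qlaw_lintegral (hsupp : P₀ (Metric.closedBall (0 : EE d) R)ᶜ = 0) (l : ℝ)
    (f : EE d → ENNReal) (hf : Measurable f) :
    ∫⁻ y, f y ∂(Qlaw P₀ l) = ∫⁻ y, ENNReal.ofReal (Zt P₀ l y) * f y ∂(stdGaussE d) := by
  rw [Qlaw, lintegral_map hf (by fun_prop), lintegral_prod _ (by fun_prop)]
  have := Wt_joint (P₀ := P₀) l (fun p => f p.1) (by fun_prop)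
  simp only at this ⊢
  rw [this]
  refine lintegral_congr fun y => ?_
  rw [lintegral_mul_const _ (Wt_cont' l y).measurable.ennreal_ofReal, ofReal_Zt hsupp]

lemma posterior_joint (hsupp : P₀ (Metric.closedBall (0 : EE d) R)ᶜ = 0) (l : ℝ)
    (g : EE d × EE d → ENNReal) (hg : Measurable g) :
    ∫⁻ y, ∫⁻ x, ENNReal.ofReal (rho P₀ l y x) * g (y, x) ∂P₀ ∂(Qlaw P₀ l)
      = ∫⁻ x, ∫⁻ z, g (l • x + z, x) ∂(stdGaussE d) ∂P₀ := by
  have hr : Measurable (fun p : EE d × EE d => ENNReal.ofReal (rho P₀ l p.1 p.2)) :=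
    (rho_meas l).ennreal_ofReal
  rw [Wt_joint l g hg, Qlaw_lintegral hsupp _ _ (Measurable.lintegral_prod_right' (f := fun p : EE d × EE d => ENNReal.ofReal (rho P₀ l p.1 p.2) * g p) (hr.mul hg))]
  refine lintegral_congr fun y => ?_
  have hmy : Measurable (fun x => ENNReal.ofReal (rho P₀ l y x) * g (y, x)) :=
    (rho_cont l y).measurable.ennreal_ofReal.mul (by fun_prop)
  simp only
  rw [← lintegral_const_mul _ hmy]
  refine lintegral_congr fun x => ?_
  rw [← mul_assoc, ← ENNReal.ofReal_mul (Zt_pos hsupp l y).le, rho,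
    mul_inv_cancel_left₀ (Zt_pos hsupp l y).ne']

end

section
variable {d : ℕ} {P₀ : Measure (EE d)} [IsProbabilityMeasure P₀] {R : ℝ}
  {Ω : Type*} [MeasurableSpace Ω]

/-- extension of a probability space by a posterior sample -/
def ext1 (P₀ : Measure (EE d)) (l : ℝ) (μ : Measure Ω) (Y : Ω → EE d) : Measure (Ω × EE d) :=
  (μ.prod P₀).withDensity (fun p => ENNReal.ofReal (rho P₀ l (Y p.1) p.2))

lemma rho_meas_comp (l : ℝ) {Y : Ω → EE d} (hY : Measurable Y) :
    Measurable (fun p : Ω × EE d => ENNReal.ofReal (rho P₀ l (Y p.1) p.2)) :=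
  ((rho_meas l).comp ((hY.comp measurable_fst).prodMk measurable_snd)).ennreal_ofReal

lemma ext1_lintegral (l : ℝ) (μ : Measure Ω) [SFinite μ] {Y : Ω → EE d} (hY : Measurable Y)
    {F : Ω × EE d → ENNReal} (hF : Measurable F) :
    ∫⁻ p, F p ∂(ext1 P₀ l μ Y)
      = ∫⁻ ω, ∫⁻ x, ENNReal.ofReal (rho P₀ l (Y ω) x) * F (ω, x) ∂P₀ ∂μ := by
  have h := rho_meas_comp (P₀ := P₀) l hY
  rw [ext1, lintegral_withDensity_eq_lintegral_mul _ h hF, lintegral_prod _ (h.mul hF).aemeasurable]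
  rfl

lemma rho_lint (hsupp : P₀ (Metric.closedBall (0 : EE d) R)ᶜ = 0) (l : ℝ) (y : EE d) :
    ∫⁻ x, ENNReal.ofReal (rho P₀ l y x) ∂P₀ = 1 := by
  rw [← ofReal_integral_eq_lintegral_ofReal (cont_int hsupp (rho_cont l y))
    (Filter.Eventually.of_forall fun x => (rho_pos hsupp l y x).le), rho_int hsupp, ENNReal.ofReal_one]

lemma ext1_fst (hsupp : P₀ (Metric.closedBall (0 : EE d) R)ᶜ = 0) (l : ℝ) (μ : Measure Ω) [SFinite μ]
    {Y : Ω → EE d} (hY : Measurable Y) : (ext1 P₀ l μ Y).map Prod.fst = μ := by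
  refine Measure.ext_of_lintegral _ fun f hf => ?_
  rw [lintegral_map hf measurable_fst, ext1_lintegral l μ hY (by fun_prop)]
  refine lintegral_congr fun ω => ?_
  simp only
  rw [lintegral_mul_const _ (rho_cont l _).measurable.ennreal_ofReal, rho_lint hsupp, one_mul]

lemma ext1_map (hsupp : P₀ (Metric.closedBall (0 : EE d) R)ᶜ = 0) (l η : ℝ) (μ : Measure Ω) [SFinite μ]
    {Y : Ω → EE d} (hY : Measurable Y) (hl : μ.map Y = Qlaw P₀ l) :
    (ext1 P₀ l μ Y).map (fun p => Y p.1 + η • p.2) = Qlaw P₀ (l + η) := by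
  refine Measure.ext_of_lintegral _ fun f hf => ?_
  rw [lintegral_map hf (by fun_prop), ext1_lintegral l μ hY (by fun_prop)]
  have hg : Measurable (fun p : EE d × EE d => f (p.1 + η • p.2)) := by fun_prop
  have h1 := posterior_joint hsupp l _ hg
  have hm : Measurable (fun y => ∫⁻ x, ENNReal.ofReal (rho P₀ l y x) * f (y + η • x) ∂P₀) :=
    Measurable.lintegral_prod_right' (f := fun p : EE d × EE d => ENNReal.ofReal (rho P₀ l p.1 p.2) * f (p.1 + η • p.2))
      ((rho_meas l).ennreal_ofReal.mul hg)
  rw [← hl, lintegral_map hm hY] at h1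
  simp only at h1 ⊢
  rw [h1, Qlaw, lintegral_map hf (by fun_prop), lintegral_prod _ (by fun_prop)]
  refine lintegral_congr fun x => lintegral_congr fun z => ?_
  congr 1
  simp only [add_smul]; abel

lemma ext1_ae (hsupp : P₀ (Metric.closedBall (0 : EE d) R)ᶜ = 0) (l : ℝ) (μ : Measure Ω) [SFinite μ]
    {Y : Ω → EE d} {q : Ω → Prop} (hq : ∀ᵐ ω ∂μ, q ω) :
    ∀ᵐ p ∂(ext1 P₀ l μ Y), q p.1 ∧ ‖p.2‖ ≤ R :=
  (withDensity_absolutelyContinuous _ _).ae_le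
    ((Measure.quasiMeasurePreserving_fst.ae hq).and (Measure.quasiMeasurePreserving_snd.ae (ae_norm_le hsupp)))

lemma inner_step (hsupp : P₀ (Metric.closedBall (0 : EE d) R)ᶜ = 0) (l η M : ℝ) (hM : 0 < M) (hη : 0 ≤ η)
    (y D c : EE d) (hc : ‖c‖ ≤ R) :
    ∫⁻ x, ENNReal.ofReal (rho P₀ l y x) * ENNReal.ofReal (‖D + η • (x - c)‖ ^ 2) ∂P₀
      ≤ ENNReal.ofReal ((1 + 1 / M) * ‖D‖ ^ 2 + M * η ^ 2 * ‖pmean P₀ l y - c‖ ^ 2 + 4 * R ^ 2 * η ^ 2) := by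
  have hR := R_nonneg hsupp
  have hc0 := rho_cont (P₀ := P₀) l y
  simp_rw [← ENNReal.ofReal_mul (rho_pos hsupp l y _).le]
  rw [← ofReal_integral_eq_lintegral_ofReal (cont_int hsupp (by fun_prop))
    (Filter.Eventually.of_forall fun x => mul_nonneg (rho_pos hsupp l y x).le (sq_nonneg _))]
  apply ENNReal.ofReal_le_ofReal
  have hsub : ∫ x, rho P₀ l y x • (x - c) ∂P₀ = pmean P₀ l y - c := by
    simp_rw [smul_sub]
    rw [integral_sub (cont_int hsupp (by fun_prop)) (cont_int hsupp (by fun_prop)), integral_smul_const, rho_int hsupp, one_smul]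
    rfl
  have h1 : ∫ x, rho P₀ l y x * ‖D + η • (x - c)‖ ^ 2 ∂P₀
      ≤ ∫ x, (rho P₀ l y x * ‖D‖ ^ 2 + 2 * η * inner ℝ D (rho P₀ l y x • (x - c)) + rho P₀ l y x * (4 * R ^ 2 * η ^ 2)) ∂P₀ := by
    refine integral_mono_ae (cont_int hsupp (by fun_prop)) (cont_int hsupp (by fun_prop)) ?_
    filter_upwards [ae_norm_le hsupp] with x hx
    have hp := rho_pos hsupp l y x
    have h2 : ‖x - c‖ ≤ 2 * R := (norm_sub_le _ _).trans (by linarith)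
    have h3 : ‖x - c‖ ^ 2 ≤ 4 * R ^ 2 := by nlinarith [norm_nonneg (x - c)]
    rw [@norm_add_sq_real, real_inner_smul_right, real_inner_smul_right, norm_smul, Real.norm_eq_abs, mul_pow, sq_abs]
    have h4 : η ^ 2 * ‖x - c‖ ^ 2 ≤ 4 * R ^ 2 * η ^ 2 := by nlinarith [sq_nonneg η]
    nlinarith [mul_le_mul_of_nonneg_left h4 hp.le]
  refine h1.trans ?_
  rw [integral_add (cont_int hsupp (by fun_prop)) (cont_int hsupp (by fun_prop)),
    integral_add (cont_int hsupp (by fun_prop)) (cont_int hsupp (by fun_prop)), integral_mul_const, integral_mul_const,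
    integral_const_mul, integral_inner (cont_int hsupp (by fun_prop)), hsub, rho_int hsupp]
  set Δ := pmean P₀ l y - c
  have h5 : inner ℝ D Δ ≤ ‖D‖ * ‖Δ‖ := real_inner_le_norm _ _
  have h6 : 2 * η * (‖D‖ * ‖Δ‖) ≤ 1 / M * ‖D‖ ^ 2 + M * η ^ 2 * ‖Δ‖ ^ 2 := by
    have : 1 / M * ‖D‖ ^ 2 + M * η ^ 2 * ‖Δ‖ ^ 2 - 2 * η * (‖D‖ * ‖Δ‖) = 1 / M * (‖D‖ - M * η * ‖Δ‖) ^ 2 := by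
      field_simp; ring
    have h7 : 0 ≤ 1 / M * (‖D‖ - M * η * ‖Δ‖) ^ 2 := by positivity
    linarith
  nlinarith [mul_le_mul_of_nonneg_left h5 (by positivity : 0 ≤ 2 * η)]

/-- local Lipschitz quantity -/
def Kf (R l' : ℝ) (y : EE d) : ℝ := 6 * l' * R ^ 3 + 4 * R ^ 2 * ‖y‖

lemma pmean_diff2 (hsupp : P₀ (Metric.closedBall (0 : EE d) R)ᶜ = 0) (l l' s : ℝ) (hl : 0 ≤ l) (hs : 0 ≤ s)
    (hl' : l + s ≤ l') (y y' : EE d) (hy : ‖y' - y‖ ≤ s * R) :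
    ‖pmean P₀ (l + s) y' - pmean P₀ l y‖ ≤ s * Kf R l' y := by
  have hR := R_nonneg hsupp
  refine (pmean_diff hsupp l (l + s) y y').trans ?_
  have h1 : (l + s) • y' - l • y = (l + s) • (y' - y) + s • y := by
    rw [smul_sub, add_smul, add_smul]; abel
  have h2 : ‖(l + s) • y' - l • y‖ ≤ l' * (s * R) + s * ‖y‖ := by
    rw [h1]
    refine (norm_add_le _ _).trans ?_
    rw [norm_smul, norm_smul, Real.norm_eq_abs, Real.norm_eq_abs, abs_of_nonneg hs, abs_of_nonneg (by linarith)]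
    have hl'0 : 0 ≤ l' := by linarith
    gcongr
  have h3 : |(l + s) ^ 2 - l ^ 2| ≤ s * (2 * l') := by
    rw [abs_of_nonneg (by nlinarith)]; nlinarith
  calc _ ≤ 4 * R ^ 2 * (l' * (s * R) + s * ‖y‖) + s * (2 * l') * R ^ 3 := by gcongr
    _ = s * Kf R l' y := by rw [Kf]; ring

lemma chain (hsupp : P₀ (Metric.closedBall (0 : EE d) R)ᶜ = 0) (l η H κ : ℝ) (hl : 0 ≤ l) (hη : 0 ≤ η)
    (n : ℕ) (hn : 0 < n) (hH : H = n * η) (hκ : 0 ≤ κ)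
    (μ : Measure Ω) [IsProbabilityMeasure μ] {Y : Ω → EE d} (hY : Measurable Y) (hlaw : μ.map Y = Qlaw P₀ l)
    (hK : ∫⁻ ω, ENNReal.ofReal (Kf R (l + H) (Y ω) ^ 2) ∂μ ≤ ENNReal.ofReal κ) (j : ℕ) (hj : j ≤ n) :
    ∃ μ' : Measure (Ω × EE d), IsProbabilityMeasure μ' ∧ μ'.map Prod.fst = μ ∧
      μ'.map Prod.snd = Qlaw P₀ (l + j * η) ∧
      (∀ᵐ p ∂μ', ‖p.2 - Y p.1‖ ≤ j * η * R) ∧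
      ∫⁻ p, ENNReal.ofReal (‖p.2 - Y p.1 - (j * η) • pmean P₀ l (Y p.1)‖ ^ 2) ∂μ' ≤
        ENNReal.ofReal (j * (1 + 1 / n) ^ j * (η * H ^ 3 * κ + 4 * R ^ 2 * η ^ 2)) := by
  have hR := R_nonneg hsupp
  have hnR : (0:ℝ) < n := by exact_mod_cast hn
  have hm0 := pmean_meas (P₀ := P₀) l
  induction j with
  | zero =>
    refine ⟨μ.map (fun ω => (ω, Y ω)), Measure.isProbabilityMeasure_map (by fun_prop), ?_, ?_, ?_, ?_⟩
    · rw [Measure.map_map (by fun_prop) (by fun_prop)]; exact Measure.map_id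
    · rw [Measure.map_map (by fun_prop) (by fun_prop)]
      have : (Prod.snd ∘ fun ω => (ω, Y ω)) = Y := rfl
      rw [this]; simpa using hlaw
    · rw [ae_map_iff (by fun_prop) (measurableSet_le (by fun_prop) (by fun_prop))]
      simp
    · rw [lintegral_map (by fun_prop) (by fun_prop)]
      simp
  | succ j ih =>
    obtain ⟨ν, hν, hf, hs, hae, hInteg⟩ := ih (by omega)
    have hjn : ((j:ℝ) * η) ≤ H := by
      rw [hH]; exact mul_le_mul_of_nonneg_right (by exact_mod_cast (by omega : j ≤ n)) hη
    have hH0 : 0 ≤ H := by rw [hH]; positivity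
    set ν1 := ext1 P₀ (l + j * η) ν Prod.snd with hν1
    set Φ : (Ω × EE d) × EE d → Ω × EE d := fun p => (p.1.1, p.1.2 + η • p.2) with hΦ
    have hΦm : Measurable Φ := by rw [hΦ]; fun_prop
    have hfst1 : ν1.map Prod.fst = ν := ext1_fst hsupp _ ν measurable_snd
    have hfst : (ν1.map Φ).map Prod.fst = μ := by
      rw [Measure.map_map measurable_fst hΦm, ← hf, ← hfst1, Measure.map_map measurable_fst measurable_fst]
      rfl
    have hF : Measurable (fun p : Ω × EE d => ENNReal.ofReal (‖p.2 - Y p.1 - (((j + 1 : ℕ) : ℝ) * η) • pmean P₀ l (Y p.1)‖ ^ 2)) := by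
      fun_prop
    refine ⟨ν1.map Φ, ⟨?_⟩, hfst, ?_, ?_, ?_⟩
    · have : (ν1.map Φ).map Prod.fst Set.univ = 1 := by rw [hfst]; simp
      rwa [Measure.map_apply measurable_fst MeasurableSet.univ] at this
    · rw [Measure.map_map measurable_snd hΦm]
      have := ext1_map hsupp (l + j * η) η ν measurable_snd hs
      rw [show l + ((j + 1 : ℕ):ℝ) * η = l + j * η + η by push_cast; ring, ← this]
      rfl
    · rw [ae_map_iff hΦm.aemeasurable (measurableSet_le (by fun_prop) (by fun_prop))]
      filter_upwards [ext1_ae hsupp (l + j * η) ν (Y := Prod.snd) hae] with p hp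
      simp only [hΦ]
      have : p.1.2 + η • p.2 - Y p.1.1 = (p.1.2 - Y p.1.1) + η • p.2 := by abel
      rw [this]
      refine (norm_add_le _ _).trans ?_
      rw [norm_smul, Real.norm_eq_abs, abs_of_nonneg hη]
      have := mul_le_mul_of_nonneg_left hp.2 hη
      push_cast; linarith [hp.1]
    · have hFΦ : Measurable (fun a => ENNReal.ofReal (‖(Φ a).2 - Y (Φ a).1 - (((j + 1 : ℕ) : ℝ) * η) • pmean P₀ l (Y (Φ a).1)‖ ^ 2)) := hF.comp hΦm
      rw [lintegral_map hF hΦm, hν1, ext1_lintegral _ ν measurable_snd hFΦ]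
      set B := η * H ^ 3 * κ + 4 * R ^ 2 * η ^ 2 with hB
      have hB0 : 0 ≤ B := by positivity
      have step1 : ∀ᵐ p ∂ν, ∫⁻ x, ENNReal.ofReal (rho P₀ (l + j * η) p.2 x) *
            ENNReal.ofReal (‖(Φ (p, x)).2 - Y (Φ (p, x)).1 - (((j + 1 : ℕ) : ℝ) * η) • pmean P₀ l (Y (Φ (p, x)).1)‖ ^ 2) ∂P₀
          ≤ ENNReal.ofReal (1 + 1 / n) * ENNReal.ofReal (‖p.2 - Y p.1 - (j * η) • pmean P₀ l (Y p.1)‖ ^ 2)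
            + ENNReal.ofReal (η * H ^ 3) * ENNReal.ofReal (Kf R (l + H) (Y p.1) ^ 2) + ENNReal.ofReal (4 * R ^ 2 * η ^ 2) := by
        filter_upwards [hae] with p hp
        have e1 : ∀ x, (Φ (p, x)).2 - Y (Φ (p, x)).1 - (((j + 1 : ℕ) : ℝ) * η) • pmean P₀ l (Y (Φ (p, x)).1)
            = (p.2 - Y p.1 - (j * η) • pmean P₀ l (Y p.1)) + η • (x - pmean P₀ l (Y p.1)) := by
          intro x
          simp only [hΦ]
          rw [show (((j + 1 : ℕ) : ℝ) * η) = j * η + η by push_cast; ring, add_smul, smul_sub]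
          abel
        simp_rw [e1]
        refine (inner_step hsupp (l + j * η) η n hnR hη p.2 _ _ (pmean_norm hsupp l (Y p.1))).trans ?_
        rw [← ENNReal.ofReal_mul (by positivity), ← ENNReal.ofReal_mul (by positivity),
          ← ENNReal.ofReal_add (by positivity) (by positivity), ← ENNReal.ofReal_add (by positivity) (by positivity)]
        apply ENNReal.ofReal_le_ofReal
        have h2 := pmean_diff2 hsupp l (l + H) (j * η) hl (by positivity) (by linarith) (Y p.1) p.2 hp
        have hKf0 : 0 ≤ Kf R (l + H) (Y p.1) := by unfold Kf; positivity
        have h3 : ‖pmean P₀ (l + j * η) p.2 - pmean P₀ l (Y p.1)‖ ≤ H * Kf R (l + H) (Y p.1) :=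
          h2.trans (mul_le_mul_of_nonneg_right hjn hKf0)
        have h4 : ‖pmean P₀ (l + j * η) p.2 - pmean P₀ l (Y p.1)‖ ^ 2 ≤ (H * Kf R (l + H) (Y p.1)) ^ 2 :=
          pow_le_pow_left₀ (norm_nonneg _) h3 2
        have h5 : n * η ^ 2 * ‖pmean P₀ (l + j * η) p.2 - pmean P₀ l (Y p.1)‖ ^ 2 ≤ η * H ^ 3 * Kf R (l + H) (Y p.1) ^ 2 := by
          calc _ ≤ n * η ^ 2 * (H * Kf R (l + H) (Y p.1)) ^ 2 := by gcongr
            _ = η * (n * η) * H ^ 2 * Kf R (l + H) (Y p.1) ^ 2 := by ring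
            _ = _ := by rw [← hH]; ring
        linarith
      refine (lintegral_mono_ae step1).trans ?_
      have hY1 : Measurable (fun p : Ω × EE d => ENNReal.ofReal (Kf R (l + H) (Y p.1) ^ 2)) := by
        unfold Kf; fun_prop
      have hD : Measurable (fun p : Ω × EE d => ENNReal.ofReal (‖p.2 - Y p.1 - (j * η) • pmean P₀ l (Y p.1)‖ ^ 2)) := by
        fun_prop
      rw [lintegral_add_right _ measurable_const, lintegral_add_right _ (hY1.const_mul _),
        lintegral_const_mul _ hD, lintegral_const_mul _ hY1, lintegral_const, measure_univ, mul_one]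
      have hY2 : ∫⁻ p, ENNReal.ofReal (Kf R (l + H) (Y p.1) ^ 2) ∂ν ≤ ENNReal.ofReal κ := by
        rw [← hf, lintegral_map (by unfold Kf; fun_prop) measurable_fst] at hK
        exact hK
      calc _ ≤ ENNReal.ofReal (1 + 1 / n) * ENNReal.ofReal (j * (1 + 1 / n) ^ j * B)
            + ENNReal.ofReal (η * H ^ 3) * ENNReal.ofReal κ + ENNReal.ofReal (4 * R ^ 2 * η ^ 2) := by
            gcongr
        _ = ENNReal.ofReal ((1 + 1 / n) * (j * (1 + 1 / n) ^ j * B) + η * H ^ 3 * κ + 4 * R ^ 2 * η ^ 2) := by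
            rw [← ENNReal.ofReal_mul (by positivity), ← ENNReal.ofReal_mul (by positivity),
              ← ENNReal.ofReal_add (by positivity) (by positivity), ← ENNReal.ofReal_add (by positivity) (by positivity)]
        _ ≤ _ := by
            apply ENNReal.ofReal_le_ofReal
            have h1 : (1:ℝ) ≤ (1 + 1 / n) ^ (j + 1) := one_le_pow₀ (by simp)
            push_cast
            rw [add_assoc, ← hB, pow_succ] at *
            nlinarith [mul_le_mul_of_nonneg_right h1 hB0]

lemma chain_final (hsupp : P₀ (Metric.closedBall (0 : EE d) R)ᶜ = 0) (l H κ : ℝ) (hl : 0 ≤ l) (hH0 : 0 ≤ H)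
    (n : ℕ) (hn : 0 < n) (hκ : 0 ≤ κ)
    (μ : Measure Ω) [IsProbabilityMeasure μ] {Y : Ω → EE d} (hY : Measurable Y) (hlaw : μ.map Y = Qlaw P₀ l)
    (hK : ∫⁻ ω, ENNReal.ofReal (Kf R (l + H) (Y ω) ^ 2) ∂μ ≤ ENNReal.ofReal κ) :
    ∃ μ' : Measure (Ω × EE d), IsProbabilityMeasure μ' ∧ μ'.map Prod.fst = μ ∧
      μ'.map Prod.snd = Qlaw P₀ (l + H) ∧
      ∫⁻ p, ENNReal.ofReal (‖p.2 - Y p.1 - H • pmean P₀ l (Y p.1)‖ ^ 2) ∂μ' ≤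
        ENNReal.ofReal (Real.exp 1 * (H ^ 4 * κ + 4 * R ^ 2 * H ^ 2 / n)) := by
  have hnR : (0:ℝ) < n := by exact_mod_cast hn
  have e1 : (n:ℝ) * (H / n) = H := by field_simp
  obtain ⟨μ', h1, h2, h3, _, h5⟩ := chain hsupp l (H / n) H κ hl (by positivity) n hn e1.symm hκ μ hY hlaw hK n le_rfl
  rw [e1] at h3 h5
  refine ⟨μ', h1, h2, h3, h5.trans (ENNReal.ofReal_le_ofReal ?_)⟩
  have h6 : (1 + 1 / (n:ℝ)) ^ n ≤ Real.exp 1 := by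
    calc (1 + 1 / (n:ℝ)) ^ n ≤ (Real.exp (1 / n)) ^ n := by
          gcongr; linarith [Real.add_one_le_exp (1 / (n:ℝ))]
      _ = Real.exp 1 := by rw [← Real.exp_nat_mul]; congr 1; field_simp
  calc _ = (1 + 1 / (n:ℝ)) ^ n * (H ^ 4 * κ + 4 * R ^ 2 * H ^ 2 / n) := by field_simp
    _ ≤ _ := by gcongr

lemma Qlaw_sq (hsupp : P₀ (Metric.closedBall (0 : EE d) R)ᶜ = 0) (l : ℝ) :
    ∫⁻ y, ENNReal.ofReal (‖y‖ ^ 2) ∂(Qlaw P₀ l) ≤ ENNReal.ofReal (2 * (l ^ 2 * R ^ 2 + d)) := by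
  have hR := R_nonneg hsupp
  rw [Qlaw, lintegral_map (by fun_prop) (by fun_prop), lintegral_prod _ (by fun_prop)]
  calc _ ≤ ∫⁻ x, ENNReal.ofReal (2 * (l ^ 2 * R ^ 2 + d)) ∂P₀ := by
        refine lintegral_mono_ae ?_
        filter_upwards [ae_norm_le hsupp] with x hx
        calc _ ≤ ∫⁻ z, (ENNReal.ofReal (2 * (l ^ 2 * R ^ 2)) + ENNReal.ofReal 2 * ENNReal.ofReal (‖z‖ ^ 2)) ∂(stdGaussE d) := by
              refine lintegral_mono fun z => ?_
              rw [← ENNReal.ofReal_mul (by positivity), ← ENNReal.ofReal_add (by positivity) (by positivity)]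
              apply ENNReal.ofReal_le_ofReal
              have h1 : ‖l • x + z‖ ^ 2 ≤ 2 * (‖l • x‖ ^ 2 + ‖z‖ ^ 2) := by
                have := norm_add_le (l • x) z
                nlinarith [norm_nonneg (l • x + z), sq_nonneg (‖l • x‖ - ‖z‖), norm_nonneg z, norm_nonneg (l • x)]
              have h2 : ‖l • x‖ ^ 2 ≤ l ^ 2 * R ^ 2 := by
                rw [norm_smul, mul_pow, Real.norm_eq_abs, sq_abs]; gcongr
              linarith
          _ = _ := by
              rw [lintegral_add_left measurable_const, lintegral_const_mul _ (by fun_prop), gauss_sq, lintegral_const, measure_univ, mul_one,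
                ← ENNReal.ofReal_mul (by positivity), ← ENNReal.ofReal_add (by positivity) (by positivity)]
              congr 1; ring
    _ = _ := by simp

lemma Qlaw_Kf (hsupp : P₀ (Metric.closedBall (0 : EE d) R)ᶜ = 0) (l l' : ℝ) (hl : 0 ≤ l) (hl' : l ≤ l') :
    ∫⁻ y, ENNReal.ofReal (Kf R l' y ^ 2) ∂(Qlaw P₀ l)
      ≤ ENNReal.ofReal (136 * l' ^ 2 * R ^ 6 + 64 * R ^ 4 * d) := by
  have hR := R_nonneg hsupp
  calc _ ≤ ∫⁻ y, (ENNReal.ofReal (72 * l' ^ 2 * R ^ 6) + ENNReal.ofReal (32 * R ^ 4) * ENNReal.ofReal (‖y‖ ^ 2)) ∂(Qlaw P₀ l) := by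
        refine lintegral_mono fun y => ?_
        rw [← ENNReal.ofReal_mul (by positivity), ← ENNReal.ofReal_add (by positivity) (by positivity)]
        apply ENNReal.ofReal_le_ofReal
        unfold Kf
        nlinarith [sq_nonneg (6 * l' * R ^ 3 - 4 * R ^ 2 * ‖y‖)]
    _ ≤ ENNReal.ofReal (72 * l' ^ 2 * R ^ 6) + ENNReal.ofReal (32 * R ^ 4) * ENNReal.ofReal (2 * (l ^ 2 * R ^ 2 + d)) := by
        rw [lintegral_add_left measurable_const, lintegral_const_mul _ (by fun_prop), lintegral_const, measure_univ, mul_one]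
        gcongr
        exact Qlaw_sq hsupp l
    _ ≤ _ := by
        rw [← ENNReal.ofReal_mul (by positivity), ← ENNReal.ofReal_add (by positivity) (by positivity)]
        apply ENNReal.ofReal_le_ofReal
        have : l ^ 2 ≤ l' ^ 2 := by gcongr
        nlinarith [mul_le_mul_of_nonneg_right this (by positivity : 0 ≤ R ^ 6)]

end

section partD
variable {d : ℕ} {P₀ : Measure (EE d)} [IsProbabilityMeasure P₀] {R : ℝ}

/-- noise scale -/
def sg (r : ℝ) : ℝ := Real.sqrt (1 - Real.exp (-r))

/-- signal to noise -/
def lam (r : ℝ) : ℝ := Real.exp (-r / 2) / sg r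

lemma one_sub_exp_pos {r : ℝ} (hr : 0 < r) : 0 < 1 - Real.exp (-r) := by
  have : Real.exp (-r) < 1 := Real.exp_lt_one_iff.2 (by linarith)
  linarith

lemma sg_pos {r : ℝ} (hr : 0 < r) : 0 < sg r := Real.sqrt_pos.2 (one_sub_exp_pos hr)

lemma sg_sq {r : ℝ} (hr : 0 ≤ r) : sg r ^ 2 = 1 - Real.exp (-r) := by
  have : Real.exp (-r) ≤ 1 := Real.exp_le_one_iff.2 (by linarith)
  exact Real.sq_sqrt (by linarith)

lemma lam_pos {r : ℝ} (hr : 0 < r) : 0 < lam r := div_pos (Real.exp_pos _) (sg_pos hr)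

/-- law at time r -/
def OUlaw (P₀ : Measure (EE d)) (r : ℝ) : Measure (EE d) :=
  (Qlaw P₀ (lam r)).map (fun y => sg r • y)

instance OUlaw_prob (r : ℝ) : IsProbabilityMeasure (OUlaw P₀ r) :=
  Measure.isProbabilityMeasure_map (by fun_prop)

lemma exp_half_sq (r : ℝ) : Real.exp (-r / 2) ^ 2 = Real.exp (-r) := by
  rw [← Real.exp_nat_mul]; congr 1; push_cast; ring

lemma ou_eq {r : ℝ} (hr : 0 < r) (w : EE d) :
    ouDensityIso P₀ r w = (sg r ^ d)⁻¹ * gdens d ((sg r)⁻¹ • w) * Zt P₀ (lam r) ((sg r)⁻¹ • w) := by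
  have hs := sg_pos hr
  have hs2 := sg_sq hr.le
  have h1 : (2 * π * (1 - Real.exp (-r))) ^ (-(d : ℝ) / 2) = (sg r ^ d)⁻¹ * (2 * π) ^ (-(d : ℝ) / 2) := by
    rw [Real.mul_rpow (by positivity) (one_sub_exp_pos hr).le, mul_comm, ← hs2, ← Real.rpow_natCast (sg r) 2,
      ← Real.rpow_mul hs.le, ← Real.rpow_natCast (sg r) d, ← Real.rpow_neg hs.le]
    congr 2; push_cast; ring
  unfold ouDensityIso gdens Zt
  have h2 : ∫ y, Real.exp (-‖w - Real.exp (-r / 2) • y‖ ^ 2 / (2 * (1 - Real.exp (-r)))) ∂P₀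
      = ∫ x, Real.exp (-‖(sg r)⁻¹ • w‖ ^ 2 / 2) * Wt (lam r) ((sg r)⁻¹ • w) x ∂P₀ := by
    refine integral_congr_ae (Filter.Eventually.of_forall fun x => ?_)
    simp only [Wt]
    rw [← Real.exp_add]
    congr 1
    rw [@norm_sub_sq_real, norm_smul, norm_smul, inner_smul_right, inner_smul_left, ← hs2, lam, Real.norm_eq_abs, Real.norm_eq_abs, mul_pow, mul_pow, sq_abs, sq_abs]
    simp only [conj_trivial]
    field_simp
    ring
  rw [h1, h2, integral_const_mul]
  ring

lemma OUlaw_density (hsupp : P₀ (Metric.closedBall (0 : EE d) R)ᶜ = 0) {r : ℝ} (hr : 0 < r) :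
    OUlaw P₀ r = volume.withDensity (fun x => ENNReal.ofReal (ouDensityIso P₀ r x)) := by
  have hs := sg_pos hr
  have hZ := Zt_meas (P₀ := P₀) (lam r)
  have hgm := (gdens_cont d).measurable
  refine Measure.ext_of_lintegral _ fun f hf => ?_
  have hm : Measurable (ouDensityIso P₀ r) := by
    have : ouDensityIso P₀ r = fun w => (sg r ^ d)⁻¹ * gdens d ((sg r)⁻¹ • w) * Zt P₀ (lam r) ((sg r)⁻¹ • w) :=
      funext fun w => ou_eq hr w
    rw [this]; fun_prop
  rw [OUlaw, lintegral_map hf (by fun_prop), Qlaw_lintegral hsupp _ _ (by fun_prop), gauss_density,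
    lintegral_withDensity_eq_lintegral_mul _ (by fun_prop) (by fun_prop),
    lintegral_withDensity_eq_lintegral_mul _ (by fun_prop) hf]
  have hmap := Measure.map_addHaar_smul (volume : Measure (EE d)) (inv_pos.2 hs).ne'
  have hG : Measurable (fun y : EE d => ENNReal.ofReal (gdens d y) * (ENNReal.ofReal (Zt P₀ (lam r) y) * f (sg r • y))) := by
    fun_prop
  have h2 : ∫⁻ y, ENNReal.ofReal (gdens d y) * (ENNReal.ofReal (Zt P₀ (lam r) y) * f (sg r • y)) ∂(volume.map (fun w : EE d => (sg r)⁻¹ • w))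
     = ENNReal.ofReal (sg r ^ d) * ∫⁻ y, ENNReal.ofReal (gdens d y) * (ENNReal.ofReal (Zt P₀ (lam r) y) * f (sg r • y)) := by
    rw [hmap, lintegral_smul_measure]
    simp [abs_of_pos hs]
  rw [lintegral_map hG (by fun_prop)] at h2
  have h3 : ENNReal.ofReal ((sg r ^ d)⁻¹) * ENNReal.ofReal (sg r ^ d) = 1 := by
    rw [← ENNReal.ofReal_mul (by positivity), inv_mul_cancel₀ (by positivity), ENNReal.ofReal_one]
  simp only [Pi.mul_apply]
  rw [← one_mul (∫⁻ _, _), ← h3, mul_assoc, ← h2, ← lintegral_const_mul _ (by fun_prop)]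
  refine lintegral_congr fun w => ?_
  rw [ou_eq hr, smul_smul, mul_inv_cancel₀ hs.ne', one_smul, ENNReal.ofReal_mul (by have := gdens_pos d ((sg r)⁻¹ • w); positivity),
    ENNReal.ofReal_mul (by positivity)]
  ring

lemma Zt_grad (hsupp : P₀ (Metric.closedBall (0 : EE d) R)ᶜ = 0) (l : ℝ) (y : EE d) :
    HasFDerivAt (Zt P₀ l) (Zt P₀ l y • l • innerSL ℝ (pmean P₀ l y)) y := by
  have h := hasFDerivAt_integral_of_dominated_of_fderiv_le (μ := P₀) (F := fun y x => Wt l y x)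
    (F' := fun y x => Wt l y x • l • innerSL ℝ x) (x₀ := y)
    (bound := fun x => Real.exp (|l| * ((‖y‖ + 1) * ‖x‖)) * (|l| * ‖x‖)) (s := Metric.ball y 1)
    (Metric.ball_mem_nhds y one_pos)
    (Filter.Eventually.of_forall fun z => (Wt_cont' l z).aestronglyMeasurable)
    (cont_int hsupp (Wt_cont' l y))
    (by
      apply Continuous.aestronglyMeasurable
      exact (Wt_cont' l y).smul ((innerSL ℝ).continuous.const_smul l))
    (by
      refine Filter.Eventually.of_forall fun x z hz => ?_
      rw [norm_smul, norm_smul, innerSL_apply_norm, Real.norm_eq_abs, Real.norm_eq_abs, abs_of_pos (Wt_pos l z x)]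
      gcongr
      unfold Wt
      apply Real.exp_le_exp.2
      have h1 : ‖z‖ ≤ ‖y‖ + 1 := by
        have : ‖z - y‖ < 1 := by simpa [dist_eq_norm] using hz
        have := norm_sub_norm_le z y
        linarith
      have h2 : l * inner ℝ z x ≤ |l| * ((‖y‖ + 1) * ‖x‖) := by
        calc l * inner ℝ z x ≤ |l * inner ℝ z x| := le_abs_self _
          _ = |l| * |inner ℝ z x| := abs_mul _ _
          _ ≤ |l| * (‖z‖ * ‖x‖) := by gcongr; exact abs_real_inner_le_norm z x
          _ ≤ _ := by gcongr
      have : 0 ≤ l ^ 2 * ‖x‖ ^ 2 / 2 := by positivity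
      linarith)
    (cont_int hsupp (by fun_prop))
    (by
      refine Filter.Eventually.of_forall fun x z _ => ?_
      have h1 : HasFDerivAt (fun z : EE d => inner ℝ z x) (innerSL ℝ x) z := by
        have := (innerSL ℝ x).hasFDerivAt (x := z)
        refine this.congr_of_eventuallyEq (Filter.Eventually.of_forall fun w => ?_)
        simp [real_inner_comm]
      have h2 := ((h1.const_mul l).sub_const (l ^ 2 * ‖x‖ ^ 2 / 2)).exp
      exact h2)
  refine HasFDerivAt.congr_fderiv (f := Zt P₀ l) h ?_
  have hZ := (Zt_pos hsupp l y).ne'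
  have hi : Integrable (fun x => Wt l y x • x) P₀ := cont_int hsupp ((Wt_cont' l y).smul continuous_id)
  have e2 : Zt P₀ l y • pmean P₀ l y = ∫ x, Wt l y x • x ∂P₀ := by
    unfold pmean rho
    simp_rw [mul_smul]
    rw [integral_smul, smul_smul, mul_inv_cancel₀ hZ, one_smul]
  have e3 : ∀ x : EE d, Wt l y x • l • innerSL ℝ x = (l • innerSL ℝ) (Wt l y x • x) := by
    intro x; simp [smul_smul, mul_comm]
  rw [integral_congr_ae (Filter.Eventually.of_forall e3)]
  rw [ContinuousLinearMap.integral_comp_comm (l • innerSL ℝ) hi, ← e2]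
  simp [smul_smul, mul_comm]

lemma score_eq (hsupp : P₀ (Metric.closedBall (0 : EE d) R)ᶜ = 0) {r : ℝ} (hr : 0 < r) (y : EE d) :
    gradient (fun z => Real.log (ouDensityIso P₀ r z)) y
      = (sg r ^ 2)⁻¹ • (Real.exp (-r / 2) • pmean P₀ (lam r) ((sg r)⁻¹ • y) - y) := by
  have hs := sg_pos hr
  apply HasGradientAt.gradient
  rw [hasGradientAt_iff_hasFDerivAt]
  have e1 : (fun z => Real.log (ouDensityIso P₀ r z)) = fun z =>
      Real.log ((sg r ^ d)⁻¹ * (2 * π) ^ (-(d : ℝ) / 2)) + (-(sg r ^ 2)⁻¹ / 2) * ‖z‖ ^ 2 + Real.log (Zt P₀ (lam r) ((sg r)⁻¹ • z)) := by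
    funext z
    have hZ := Zt_pos hsupp (lam r) ((sg r)⁻¹ • z)
    have hg := gdens_pos d ((sg r)⁻¹ • z)
    rw [ou_eq hr, Real.log_mul (by positivity) hZ.ne', gdens, ← mul_assoc, Real.log_mul (by positivity) (by positivity), Real.log_exp,
      norm_smul, mul_pow, Real.norm_eq_abs, sq_abs]
    ring
  rw [e1]
  have h1 : HasFDerivAt (fun z : EE d => ‖z‖ ^ 2) (2 • innerSL ℝ y) y := (hasStrictFDerivAt_norm_sq y).hasFDerivAt
  have h2 : HasFDerivAt (fun z : EE d => (sg r)⁻¹ • z) ((sg r)⁻¹ • ContinuousLinearMap.id ℝ (EE d)) y :=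
    (hasFDerivAt_id (𝕜 := ℝ) y).const_smul (sg r)⁻¹
  have h3 := (Zt_grad hsupp (lam r) ((sg r)⁻¹ • y)).comp y h2
  have hZ := Zt_pos hsupp (lam r) ((sg r)⁻¹ • y)
  have h4 := ((h1.const_mul (-(sg r ^ 2)⁻¹ / 2)).const_add (Real.log ((sg r ^ d)⁻¹ * (2 * π) ^ (-(d : ℝ) / 2)))).add (h3.log hZ.ne')
  refine h4.congr_fderiv ?_
  ext v
  simp only [_root_.add_apply, _root_.smul_apply, ContinuousLinearMap.comp_apply, InnerProductSpace.toDual_apply_apply,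
    innerSL_apply_apply, smul_eq_mul, ContinuousLinearMap.id_apply, inner_smul_left, inner_sub_left, inner_smul_right, nsmul_eq_mul, conj_trivial, Function.comp]
  have hZ0 := hZ.ne'
  generalize Zt P₀ (lam r) ((sg r)⁻¹ • y) = Z at *
  generalize pmean P₀ (lam r) ((sg r)⁻¹ • y) = m at *
  rw [lam]
  field_simp
  simp
  ring
end partD

section partE
variable {d : ℕ} {P₀ : Measure (EE d)} [IsProbabilityMeasure P₀] {R : ℝ}

lemma OUlaw_sq (hsupp : P₀ (Metric.closedBall (0 : EE d) R)ᶜ = 0) {r : ℝ} (hr : 0 < r) :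
    ∫⁻ y, ENNReal.ofReal (‖y‖ ^ 2) ∂(OUlaw P₀ r) ≤ ENNReal.ofReal (2 * (R ^ 2 + d)) := by
  have hs := sg_pos hr
  have hs2 := sg_sq hr.le
  rw [OUlaw, lintegral_map (by fun_prop) (by fun_prop)]
  calc _ = ∫⁻ y, ENNReal.ofReal (sg r ^ 2) * ENNReal.ofReal (‖y‖ ^ 2) ∂(Qlaw P₀ (lam r)) := by
        refine lintegral_congr fun y => ?_
        rw [← ENNReal.ofReal_mul (by positivity), norm_smul, mul_pow, Real.norm_eq_abs, sq_abs]
    _ = ENNReal.ofReal (sg r ^ 2) * ∫⁻ y, ENNReal.ofReal (‖y‖ ^ 2) ∂(Qlaw P₀ (lam r)) := by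
        rw [lintegral_const_mul _ (by fun_prop)]
    _ ≤ ENNReal.ofReal (sg r ^ 2) * ENNReal.ofReal (2 * (lam r ^ 2 * R ^ 2 + d)) := by
        gcongr; exact Qlaw_sq hsupp _
    _ ≤ _ := by
        rw [← ENNReal.ofReal_mul (by positivity)]
        apply ENNReal.ofReal_le_ofReal
        have h1 : sg r ^ 2 * lam r ^ 2 = Real.exp (-r) := by
          rw [lam, div_pow, exp_half_sq]; field_simp
        have h2 : Real.exp (-r) ≤ 1 := Real.exp_le_one_iff.2 (by linarith)
        have h3 : 0 < Real.exp (-r) := Real.exp_pos _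
        have h4 : (0:ℝ) ≤ d := Nat.cast_nonneg d
        calc _ = 2 * ((sg r ^ 2 * lam r ^ 2) * R ^ 2 + sg r ^ 2 * d) := by ring
          _ ≤ 2 * (1 * R ^ 2 + 1 * d) := by
              rw [h1, hs2]
              gcongr
              linarith
          _ = _ := by ring

lemma OU_step (a β l' l σ : ℝ) (h1 : a * l' = σ * l) (h2 : σ ^ 2 = a ^ 2 + β ^ 2) (f : EE d → ENNReal) (hf : Measurable f) :
    ∫⁻ y, ∫⁻ z, f (a • y + β • z) ∂(stdGaussE d) ∂(Qlaw P₀ l') = ∫⁻ y, f (σ • y) ∂(Qlaw P₀ l) := by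
  have hm : Measurable (fun y => ∫⁻ z, f (a • y + β • z) ∂(stdGaussE d)) :=
    Measurable.lintegral_prod_right' (f := fun p : EE d × EE d => f (a • p.1 + β • p.2)) (by fun_prop)
  unfold Qlaw
  rw [lintegral_map hm (by fun_prop), lintegral_map (by fun_prop) (by fun_prop), lintegral_prod _ (by fun_prop), lintegral_prod _ (by fun_prop)]
  refine lintegral_congr fun x => ?_
  have h3 := gauss_add d a β σ h2
  have hg : Measurable (fun w => f ((σ * l) • x + w)) := by fun_prop
  have h4 : ∫⁻ w, f ((σ * l) • x + w) ∂(((stdGaussE d).prod (stdGaussE d)).map (fun p => a • p.1 + β • p.2))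
     = ∫⁻ w, f ((σ * l) • x + w) ∂((stdGaussE d).map (fun z => σ • z)) := by rw [h3]
  rw [lintegral_map hg (by fun_prop), lintegral_map hg (by fun_prop), lintegral_prod _ (by fun_prop)] at h4
  calc _ = ∫⁻ z1, ∫⁻ z2, f ((σ * l) • x + (a • z1 + β • z2)) ∂(stdGaussE d) ∂(stdGaussE d) := by
        refine lintegral_congr fun z1 => lintegral_congr fun z2 => ?_
        rw [smul_add, smul_smul, h1, add_assoc]
    _ = _ := by
        rw [h4]
        refine lintegral_congr fun z => ?_
        rw [smul_add, smul_smul]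

/-- exact one step map -/
def Ftrue (P₀ : Measure (EE d)) (u h : ℝ) (y : EE d) : EE d :=
  Real.exp (h / 2) • (y + (1 - Real.exp (-h)) • ((sg u ^ 2)⁻¹ • (Real.exp (-u / 2) • pmean P₀ (lam u) ((sg u)⁻¹ • y) - y)))

lemma Ftrue_meas (u h : ℝ) : Measurable (Ftrue P₀ u h) := by
  have := pmean_meas (P₀ := P₀) (lam u)
  unfold Ftrue; fun_prop

/-- coefficient -/
def Da (u h : ℝ) : ℝ := Real.exp (-h / 2) * (sg (u - 2 * h) * sg u - sg (u - h) ^ 2) / sg u ^ 2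

lemma M_eq {u h : ℝ} (hh : 0 ≤ h) (hu : 0 < u - 2 * h) (y y' : EE d) :
    (Real.exp (-h / 2) * sg (u - 2 * h)) • y' - Ftrue P₀ u h y
      = Da u h • (y - Real.exp (-u / 2) • pmean P₀ (lam u) ((sg u)⁻¹ • y))
        + (Real.exp (-h / 2) * sg (u - 2 * h)) • (y' - (sg u)⁻¹ • y - (lam (u - 2 * h) - lam u) • pmean P₀ (lam u) ((sg u)⁻¹ • y)) := by
  have hs := sg_pos (show 0 < u by linarith)
  have hs2 := sg_sq (show 0 ≤ u by linarith)
  have hs' := sg_pos hu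
  have hss2 := sg_sq (show 0 ≤ u - h by linarith)
  unfold Ftrue Da
  generalize pmean P₀ (lam u) ((sg u)⁻¹ • y) = m
  unfold lam
  rw [hss2]
  set b := Real.exp (h / 2) with hb
  have hb0 : b ≠ 0 := (Real.exp_pos _).ne'
  have e1 : Real.exp (-h / 2) = b⁻¹ := by rw [hb, ← Real.exp_neg]; congr 1; ring
  have e2 : Real.exp (-h) = b⁻¹ ^ 2 := by rw [← e1, exp_half_sq]
  set c := Real.exp (-u / 2) with hc
  have e3 : Real.exp (-(u - 2 * h) / 2) = c * b ^ 2 := by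
    rw [hb, hc, ← Real.exp_nat_mul, ← Real.exp_add]; congr 1; push_cast; ring
  have e4 : Real.exp (-(u - h)) = c ^ 2 * b ^ 2 := by
    rw [hb, hc, ← Real.exp_nat_mul, ← Real.exp_nat_mul, ← Real.exp_add]; congr 1; push_cast; ring
  have e5 : Real.exp (-u) = c ^ 2 := by rw [hc, exp_half_sq]
  rw [e5] at hs2
  rw [e1, e2, e3, e4]
  generalize sg u = σ at *
  generalize sg (u - 2 * h) = ρ at *
  have k1 : b * (1 - (1 - b⁻¹ ^ 2) * (σ ^ 2)⁻¹) = - (b⁻¹ * (ρ * σ - (1 - c ^ 2 * b ^ 2)) / σ ^ 2) + b⁻¹ * ρ * σ⁻¹ := by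
    have h6 : c ^ 2 = 1 - σ ^ 2 := by linarith
    rw [h6]
    field_simp
    ring
  have k2 : b * ((1 - b⁻¹ ^ 2) * (σ ^ 2)⁻¹ * c) = (b⁻¹ * (ρ * σ - (1 - c ^ 2 * b ^ 2)) / σ ^ 2) * c + b⁻¹ * ρ * (c * b ^ 2 / ρ - c / σ) := by
    have h6 : c ^ 2 = 1 - σ ^ 2 := by linarith
    rw [h6]
    field_simp
    ring
  have k3 : b • (y + (1 - b⁻¹ ^ 2) • ((σ ^ 2)⁻¹ • (c • m - y))) = (b * (1 - (1 - b⁻¹ ^ 2) * (σ ^ 2)⁻¹)) • y + (b * ((1 - b⁻¹ ^ 2) * (σ ^ 2)⁻¹ * c)) • m := by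
    module
  rw [k3, k1, k2]
  module

lemma sq3 {V : Type*} [NormedAddCommGroup V] (a b c : V) (w : ℝ) (hw : 0 < w) :
    ‖a + b + c‖ ^ 2 ≤ (1 + w) * ‖c‖ ^ 2 + (1 + 1 / w) * (2 * (‖a‖ ^ 2 + ‖b‖ ^ 2)) := by
  have h1 := norm_add_le (a + b) c
  have h2 := norm_add_le a b
  have h3 : ‖a + b + c‖ ^ 2 ≤ (‖a‖ + ‖b‖ + ‖c‖) ^ 2 := by
    apply pow_le_pow_left₀ (norm_nonneg _); linarith
  refine h3.trans ?_
  set x := ‖a‖; set y := ‖b‖; set z := ‖c‖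
  have h4 : 0 ≤ (1 / w) * (x + y - w * z) ^ 2 := by positivity
  have h5 : (1 / w) * (x + y - w * z) ^ 2 = (1 / w) * (x + y) ^ 2 - 2 * (x + y) * z + w * z ^ 2 := by
    field_simp
    ring
  have h6 : 0 ≤ (1 + 1 / w) * (x - y) ^ 2 := by positivity
  nlinarith

lemma sq2 {V : Type*} [NormedAddCommGroup V] (a b : V) : ‖a + b‖ ^ 2 ≤ 2 * (‖a‖ ^ 2 + ‖b‖ ^ 2) := by
  have h1 := norm_add_le a b
  have h3 : ‖a + b‖ ^ 2 ≤ (‖a‖ + ‖b‖) ^ 2 := by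
    apply pow_le_pow_left₀ (norm_nonneg _); linarith
  nlinarith [sq_nonneg (‖a‖ - ‖b‖)]

/-- local error bound -/
def mloc (R : ℝ) (d : ℕ) (u h : ℝ) (n : ℕ) : ℝ :=
  2 * Da u h ^ 2 * (6 * R ^ 2 + 4 * d) + 2 * (Real.exp 1 * ((lam (u - 2 * h) - lam u) ^ 4 * (136 * lam (u - 2 * h) ^ 2 * R ^ 6 + 64 * R ^ 4 * d)
    + 4 * R ^ 2 * (lam (u - 2 * h) - lam u) ^ 2 / n))

lemma lam_mono {a b : ℝ} (ha : 0 < a) (hab : a ≤ b) : lam b ≤ lam a := by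
  unfold lam
  apply div_le_div₀ (Real.exp_pos _).le (Real.exp_le_exp.2 (by linarith)) (sg_pos ha)
  unfold sg
  apply Real.sqrt_le_sqrt
  have : Real.exp (-b) ≤ Real.exp (-a) := Real.exp_le_exp.2 (by linarith)
  linarith

lemma step (hsupp : P₀ (Metric.closedBall (0 : EE d) R)ᶜ = 0) {u h : ℝ} (hh : 0 ≤ h) (hu : 0 < u - 2 * h)
    (μ : Measure (EE d × EE d)) [IsProbabilityMeasure μ] (hfst : μ.map Prod.fst = OUlaw P₀ u)
    (F : EE d → EE d) (hF : Measurable F) (Λ : ℝ) (hΛ0 : 0 ≤ Λ) (hΛ : ∀ x y, ‖F x - F y‖ ≤ Λ * ‖x - y‖)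
    (e2 : ℝ) (he20 : 0 ≤ e2) (he2 : ∫⁻ y, ENNReal.ofReal (‖Ftrue P₀ u h y - F y‖ ^ 2) ∂(OUlaw P₀ u) ≤ ENNReal.ofReal e2)
    (w : ℝ) (hw : 0 < w) (A : ℝ) (hA0 : 0 ≤ A) (hA : ∫⁻ p, ENNReal.ofReal (‖p.1 - p.2‖ ^ 2) ∂μ ≤ ENNReal.ofReal A)
    (n : ℕ) (hn : 0 < n) :
    ∃ μ' : Measure (EE d × EE d), IsProbabilityMeasure μ' ∧ μ'.map Prod.fst = OUlaw P₀ (u - h) ∧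
      μ'.map Prod.snd = (((μ.map Prod.snd).map F).prod ((stdGaussE d).map fun x => Real.sqrt (1 - Real.exp (-h)) • x)).map (fun p => p.1 + p.2) ∧
      ∫⁻ p, ENNReal.ofReal (‖p.1 - p.2‖ ^ 2) ∂μ' ≤ ENNReal.ofReal ((1 + w) * (Λ ^ 2 * A) + (1 + 1 / w) * (2 * (mloc R d u h n + e2))) := by
  have hR := R_nonneg hsupp
  have hu0 : 0 < u := by linarith
  have hs := sg_pos hu0
  have hs' := sg_pos hu
  have hpm := pmean_meas (P₀ := P₀) (lam u)
  have hFt := Ftrue_meas (P₀ := P₀) u h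
  have hY : Measurable (fun p : EE d × EE d => (sg u)⁻¹ • p.1) := by fun_prop
  have hlaw : μ.map (fun p : EE d × EE d => (sg u)⁻¹ • p.1) = Qlaw P₀ (lam u) := by
    have h1 : (μ.map Prod.fst).map (fun y => (sg u)⁻¹ • y) = (OUlaw P₀ u).map (fun y => (sg u)⁻¹ • y) := by rw [hfst]
    rw [OUlaw, Measure.map_map (by fun_prop) (by fun_prop), Measure.map_map (by fun_prop) (by fun_prop)] at h1
    rw [show (fun p : EE d × EE d => (sg u)⁻¹ • p.1) = (fun y => (sg u)⁻¹ • y) ∘ Prod.fst from rfl, h1]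
    convert Measure.map_id
    funext y
    simp [smul_smul, hs.ne']
  have hH0 : 0 ≤ lam (u - 2 * h) - lam u := sub_nonneg.2 (lam_mono hu (by linarith))
  set H := lam (u - 2 * h) - lam u with hH
  have hlH : lam u + H = lam (u - 2 * h) := by rw [hH]; ring
  set κ := 136 * lam (u - 2 * h) ^ 2 * R ^ 6 + 64 * R ^ 4 * d with hκ
  have hK : ∫⁻ ω, ENNReal.ofReal (Kf R (lam u + H) ((sg u)⁻¹ • ω.1) ^ 2) ∂μ ≤ ENNReal.ofReal κ := by
    have h1 := Qlaw_Kf hsupp (lam u) (lam u + H) (lam_pos hu0).le (by linarith)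
    have hKm : Measurable (fun y : EE d => ENNReal.ofReal (Kf R (lam u + H) y ^ 2)) := by unfold Kf; fun_prop
    rw [← hlaw, lintegral_map hKm hY, hlH] at h1
    rw [hlH]; exact h1
  obtain ⟨μ', hμ', hm1, hm2, hc⟩ := chain_final hsupp (lam u) H κ (lam_pos hu0).le hH0 n hn (by positivity) μ hY hlaw hK
  rw [hlH] at hm2
  set a := Real.exp (-h / 2) * sg (u - 2 * h) with ha
  set β := Real.sqrt (1 - Real.exp (-h)) with hβ
  have hβ2 : β ^ 2 = 1 - Real.exp (-h) := Real.sq_sqrt (by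
    have : Real.exp (-h) ≤ 1 := Real.exp_le_one_iff.2 (by linarith)
    linarith)
  have ha2 : a ^ 2 = Real.exp (-h) - Real.exp (-(u - h)) := by
    rw [ha, mul_pow, exp_half_sq, sg_sq hu.le, mul_sub, mul_one, ← Real.exp_add]; congr 2; ring
  have ha1 : a ^ 2 ≤ 1 := by
    rw [ha2]
    have : Real.exp (-h) ≤ 1 := Real.exp_le_one_iff.2 (by linarith)
    have := Real.exp_pos (-(u - h))
    linarith
  set Ψ : ((EE d × EE d) × EE d) × EE d → EE d × EE d := fun q => (a • q.1.2 + β • q.2, F q.1.1.2 + β • q.2) with hΨ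
  have hΨm : Measurable Ψ := by rw [hΨ]; fun_prop
  refine ⟨(μ'.prod (stdGaussE d)).map Ψ, Measure.isProbabilityMeasure_map hΨm.aemeasurable, ?_, ?_, ?_⟩
  · refine Measure.ext_of_lintegral _ fun f hf => ?_
    rw [lintegral_map hf measurable_fst, lintegral_map (by fun_prop) hΨm, lintegral_prod _ (by fun_prop)]
    have hm : Measurable (fun y => ∫⁻ z, f (a • y + β • z) ∂(stdGaussE d)) :=
      Measurable.lintegral_prod_right' (f := fun p : EE d × EE d => f (a • p.1 + β • p.2)) (by fun_prop)
    have h1 := OU_step (P₀ := P₀) a β (lam (u - 2 * h)) (lam (u - h)) (sg (u - h)) ?_ ?_ f hf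
    · rw [← hm2, lintegral_map hm measurable_snd] at h1
      rw [OUlaw, lintegral_map hf (by fun_prop), ← h1]
    · rw [ha, lam, lam]
      have h7 := (sg_pos (show 0 < u - h by linarith)).ne'
      rw [mul_assoc, mul_div_cancel₀ _ hs'.ne', mul_div_cancel₀ _ h7]
      rw [← Real.exp_add]; congr 1; ring
    · rw [hβ2, ha2, sg_sq (by linarith)]; ring
  · refine Measure.ext_of_lintegral _ fun f hf => ?_
    have hm : Measurable (fun y => ∫⁻ z, f (y + z) ∂((stdGaussE d).map fun x => β • x)) :=
      Measurable.lintegral_prod_right' (f := fun p : EE d × EE d => f (p.1 + p.2)) (by fun_prop)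
    have hmF : Measurable (fun x => ∫⁻ z, f (F x + z) ∂((stdGaussE d).map fun x => β • x)) := hm.comp hF
    have hmF2 : Measurable (fun p : EE d × EE d => ∫⁻ z, f (F p.2 + z) ∂((stdGaussE d).map fun x => β • x)) := hmF.comp measurable_snd
    rw [lintegral_map hf measurable_snd, lintegral_map (by fun_prop) hΨm, lintegral_prod _ (by fun_prop),
      lintegral_map hf (by fun_prop), lintegral_prod _ (by fun_prop), lintegral_map hm hF, lintegral_map hmF measurable_snd,
      ← hm1, lintegral_map hmF2 measurable_fst]
    refine lintegral_congr fun p => ?_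
    rw [lintegral_map (by fun_prop) (by fun_prop)]
  · rw [lintegral_map (by fun_prop) hΨm, lintegral_prod _ (by fun_prop)]
    have hfst' : μ'.map (fun p => p.1.1) = OUlaw P₀ u := by
      rw [← hfst, ← hm1, Measure.map_map measurable_fst measurable_fst]; rfl
    have b1 : ∫⁻ p, ENNReal.ofReal (‖p.1.1 - p.1.2‖ ^ 2) ∂μ' ≤ ENNReal.ofReal A := by
      refine le_trans (le_of_eq ?_) hA
      rw [← hm1, lintegral_map (by fun_prop) measurable_fst]
    have b2 : ∫⁻ p, ENNReal.ofReal (‖p.1.1‖ ^ 2) ∂μ' ≤ ENNReal.ofReal (2 * (R ^ 2 + d)) := by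
      refine le_trans (le_of_eq ?_) (OUlaw_sq hsupp hu0)
      rw [← hfst', lintegral_map (by fun_prop) (by fun_prop)]
    have b3 : ∫⁻ p, ENNReal.ofReal (‖Ftrue P₀ u h p.1.1 - F p.1.1‖ ^ 2) ∂μ' ≤ ENNReal.ofReal e2 := by
      refine le_trans (le_of_eq ?_) he2
      rw [← hfst', lintegral_map (by fun_prop) (by fun_prop)]
    set err : (EE d × EE d) × EE d → EE d := fun p => p.2 - (sg u)⁻¹ • p.1.1 - H • pmean P₀ (lam u) ((sg u)⁻¹ • p.1.1) with herr
    have herrm : Measurable err := by rw [herr]; fun_prop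
    set W := (1 + 1 / w) * 2 with hW
    have hW0 : 0 ≤ W := by positivity
    have key : ∀ p : (EE d × EE d) × EE d, ∫⁻ z, ENNReal.ofReal (‖(Ψ (p, z)).1 - (Ψ (p, z)).2‖ ^ 2) ∂(stdGaussE d)
        ≤ ENNReal.ofReal ((1 + w) * Λ ^ 2) * ENNReal.ofReal (‖p.1.1 - p.1.2‖ ^ 2)
          + (ENNReal.ofReal (W * (4 * Da u h ^ 2)) * ENNReal.ofReal (‖p.1.1‖ ^ 2)
          + (ENNReal.ofReal (W * 2) * ENNReal.ofReal (‖err p‖ ^ 2)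
          + (ENNReal.ofReal W * ENNReal.ofReal (‖Ftrue P₀ u h p.1.1 - F p.1.1‖ ^ 2) + ENNReal.ofReal (W * (4 * Da u h ^ 2 * R ^ 2))))) := by
      intro p
      have q1 : ∀ z, (Ψ (p, z)).1 - (Ψ (p, z)).2 = (a • p.2 - Ftrue P₀ u h p.1.1) + (Ftrue P₀ u h p.1.1 - F p.1.1) + (F p.1.1 - F p.1.2) := by
        intro z; simp only [hΨ]; abel
      simp_rw [q1]
      rw [lintegral_const, measure_univ, mul_one]
      rw [← ENNReal.ofReal_mul (by positivity), ← ENNReal.ofReal_mul (by positivity), ← ENNReal.ofReal_mul (by positivity), ← ENNReal.ofReal_mul (by positivity),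
        ← ENNReal.ofReal_add (by positivity) (by positivity), ← ENNReal.ofReal_add (by positivity) (by positivity), ← ENNReal.ofReal_add (by positivity) (by positivity), ← ENNReal.ofReal_add (by positivity) (by positivity)]
      apply ENNReal.ofReal_le_ofReal
      refine (sq3 _ _ _ w hw).trans ?_
      have c1 : ‖F p.1.1 - F p.1.2‖ ^ 2 ≤ Λ ^ 2 * ‖p.1.1 - p.1.2‖ ^ 2 := by
        rw [← mul_pow]; exact pow_le_pow_left₀ (norm_nonneg _) (hΛ _ _) 2
      have c2 : ‖a • p.2 - Ftrue P₀ u h p.1.1‖ ^ 2 ≤ 4 * Da u h ^ 2 * ‖p.1.1‖ ^ 2 + 4 * Da u h ^ 2 * R ^ 2 + 2 * ‖err p‖ ^ 2 := by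
        rw [ha, M_eq hh hu, ← ha, ← hH]
        refine (sq2 _ _).trans ?_
        rw [norm_smul, norm_smul, mul_pow, mul_pow, Real.norm_eq_abs, Real.norm_eq_abs, sq_abs, sq_abs]
        have c3 : ‖p.1.1 - Real.exp (-u / 2) • pmean P₀ (lam u) ((sg u)⁻¹ • p.1.1)‖ ^ 2 ≤ 2 * (‖p.1.1‖ ^ 2 + R ^ 2) := by
          rw [sub_eq_add_neg]
          refine (sq2 _ _).trans ?_
          rw [norm_neg, norm_smul, Real.norm_eq_abs, abs_of_pos (Real.exp_pos _)]
          have c5 : Real.exp (-u / 2) * ‖pmean P₀ (lam u) ((sg u)⁻¹ • p.1.1)‖ ≤ 1 * R := by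
            gcongr
            · exact Real.exp_le_one_iff.2 (by linarith)
            · exact pmean_norm hsupp _ _
          have c6 := pow_le_pow_left₀ (by positivity) c5 2
          rw [one_mul] at c6
          linarith
        have c4 : a ^ 2 * ‖err p‖ ^ 2 ≤ 1 * ‖err p‖ ^ 2 := by gcongr
        have c7 := mul_le_mul_of_nonneg_left c3 (sq_nonneg (Da u h))
        simp only [herr] at c4 ⊢
        linarith
      have c8 := mul_le_mul_of_nonneg_left c1 (by positivity : 0 ≤ 1 + w)
      have c9 := mul_le_mul_of_nonneg_left c2 hW0
      rw [hW] at *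
      linarith
    refine (lintegral_mono key).trans ?_
    rw [lintegral_add_left (by fun_prop), lintegral_add_left (by fun_prop), lintegral_add_left (by fun_prop), lintegral_add_left (by fun_prop), lintegral_const, measure_univ, mul_one,
      lintegral_const_mul _ (by fun_prop), lintegral_const_mul _ (by fun_prop), lintegral_const_mul _ (by fun_prop), lintegral_const_mul _ (by fun_prop)]
    set EB := Real.exp 1 * (H ^ 4 * κ + 4 * R ^ 2 * H ^ 2 / n) with hEB
    have hEB0 : 0 ≤ EB := by positivity
    calc _ ≤ ENNReal.ofReal ((1 + w) * Λ ^ 2) * ENNReal.ofReal A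
          + (ENNReal.ofReal (W * (4 * Da u h ^ 2)) * ENNReal.ofReal (2 * (R ^ 2 + d))
          + (ENNReal.ofReal (W * 2) * ENNReal.ofReal EB
          + (ENNReal.ofReal W * ENNReal.ofReal e2 + ENNReal.ofReal (W * (4 * Da u h ^ 2 * R ^ 2))))) := by
          gcongr
      _ = _ := by
          rw [← ENNReal.ofReal_mul (by positivity), ← ENNReal.ofReal_mul (by positivity), ← ENNReal.ofReal_mul (by positivity), ← ENNReal.ofReal_mul (by positivity),
            ← ENNReal.ofReal_add (by positivity) (by positivity), ← ENNReal.ofReal_add (by positivity) (by positivity), ← ENNReal.ofReal_add (by positivity) (by positivity), ← ENNReal.ofReal_add (by positivity) (by positivity)]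
          congr 1
          unfold mloc
          rw [← hH, ← hκ, ← hEB, hW]
          ring
end partE

section partF

lemma exp_neg_one_lb : (1:ℝ) / 3 ≤ Real.exp (-1) := by
  rw [Real.exp_neg, one_div]
  exact inv_anti₀ (Real.exp_pos _) (by have := Real.exp_one_lt_d9; linarith)

lemma q_le {δ : ℝ} (hδ1 : δ ≤ 1) : 1 - Real.exp (-δ) ≤ 2 / 3 := by
  have h1 : Real.exp (-1) ≤ Real.exp (-δ) := Real.exp_le_exp.2 (by linarith)
  have := exp_neg_one_lb
  linarith

lemma q_le_delta (δ : ℝ) : 1 - Real.exp (-δ) ≤ δ := by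
  have := Real.add_one_le_exp (-δ)
  linarith

lemma sg_sq_mono {a b : ℝ} (ha : 0 ≤ a) (hab : a ≤ b) : 1 - Real.exp (-a) ≤ sg b ^ 2 := by
  rw [sg_sq (by linarith)]
  have : Real.exp (-b) ≤ Real.exp (-a) := Real.exp_le_exp.2 (by linarith)
  linarith

lemma sgp_lb {δ h q r : ℝ} (hδ0 : 0 < δ) (hq : q = 1 - Real.exp (-δ)) (hh : 0 ≤ h) (hhq : h ≤ 37 / 100 * q)
    (hr : δ - h ≤ r) : 63 / 100 * q ≤ sg r ^ 2 := by
  have h1 := q_le_delta δ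
  rw [← hq] at h1
  have hq0 : 0 < q := by rw [hq]; exact one_sub_exp_pos hδ0
  have h2 : h ≤ δ := by linarith
  refine le_trans ?_ (sg_sq_mono (sub_nonneg.2 h2) hr)
  have h3 : Real.exp (-(δ - h)) = Real.exp (-δ) + Real.exp (-(δ - h)) * (1 - Real.exp (-h)) := by
    rw [mul_sub, ← Real.exp_add]; ring_nf
  have h4 := q_le_delta h
  have h5 : Real.exp (-(δ - h)) ≤ 1 := Real.exp_le_one_iff.2 (by linarith)
  have h6 : 0 ≤ 1 - Real.exp (-h) := by
    have : Real.exp (-h) ≤ 1 := Real.exp_le_one_iff.2 (by linarith)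
    linarith
  have h7 : Real.exp (-(δ - h)) * (1 - Real.exp (-h)) ≤ 1 * h := by gcongr
  linarith

lemma Da_bound {δ h q u : ℝ} (hδ0 : 0 < δ) (hδ1 : δ ≤ 1) (hq : q = 1 - Real.exp (-δ)) (hh : 0 ≤ h) (hhq : h ≤ 37 / 100 * q)
    (hu : δ + h ≤ u) : Da u h ^ 2 ≤ 4 * h ^ 4 / q ^ 4 := by
  have hq0 : 0 < q := by rw [hq]; exact one_sub_exp_pos hδ0
  have hqd : q ≤ δ := hq ▸ q_le_delta δ
  have hq3 : q ≤ 2 / 3 := hq ▸ q_le hδ1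
  have hs1 : q ≤ sg u ^ 2 := hq ▸ sg_sq_mono hδ0.le (by linarith)
  have hs2 : q ≤ sg (u - h) ^ 2 := hq ▸ sg_sq_mono hδ0.le (by linarith)
  have p1 := sg_pos (show 0 < u by linarith)
  have p2 := sg_pos (show 0 < u - 2 * h by linarith)
  have e1 := sg_sq (show 0 ≤ u by linarith)
  have e2 := sg_sq (show 0 ≤ u - h by linarith)
  have e3 := sg_sq (show 0 ≤ u - 2 * h by linarith)
  set x := sg (u - 2 * h) * sg u with hx
  have hx0 : 0 < x := by positivity
  set y := sg (u - h) ^ 2 with hy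
  set c := Real.exp (-(u - h)) with hc
  have hc1 : c ≤ 1 := Real.exp_le_one_iff.2 (by linarith)
  have hc0 : 0 < c := Real.exp_pos _
  have f1 : Real.exp (-u) = c * Real.exp (-h) := by rw [hc, ← Real.exp_add]; congr 1; ring
  have f2 : Real.exp (-(u - 2 * h)) = c * Real.exp h := by rw [hc, ← Real.exp_add]; congr 1; ring
  have f3 : Real.exp h * Real.exp (-h) = 1 := by rw [← Real.exp_add]; simp
  have hx2 : x ^ 2 = (1 - c * Real.exp h) * (1 - c * Real.exp (-h)) := by
    rw [hx, mul_pow, e3, e1, f1, f2]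
  have key : y ^ 2 - x ^ 2 = c * (Real.exp h + Real.exp (-h) - 2) := by
    rw [hx2, e2]
    linear_combination (-c ^ 2) * f3
  have g1 := Real.abs_exp_sub_one_sub_id_le (x := h) (by rw [abs_of_nonneg hh]; linarith)
  have g2 := Real.abs_exp_sub_one_sub_id_le (x := -h) (by rw [abs_neg, abs_of_nonneg hh]; linarith)
  have g3 := (abs_le.1 g1).2
  have g4 := (abs_le.1 g2).2
  have g5 := Real.add_one_le_exp h
  have g6 := Real.add_one_le_exp (-h)
  have k0 : 0 ≤ y ^ 2 - x ^ 2 := by rw [key]; apply mul_nonneg hc0.le; linarith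
  have k1 : y ^ 2 - x ^ 2 ≤ 2 * h ^ 2 := by
    rw [key]
    calc c * (Real.exp h + Real.exp (-h) - 2) ≤ 1 * (Real.exp h + Real.exp (-h) - 2) := by
          gcongr
          linarith
      _ ≤ _ := by linarith
  have y0 : 0 < y := by linarith
  have k2 : 0 ≤ y - x := by
    by_contra hcon
    push Not at hcon
    nlinarith
  have k3 : (y - x) * q ≤ 2 * h ^ 2 := by
    calc (y - x) * q ≤ (y - x) * (y + x) := by gcongr; linarith
      _ = y ^ 2 - x ^ 2 := by ring
      _ ≤ _ := k1
  have k4 : y - x ≤ 2 * h ^ 2 / q := by rwa [le_div_iff₀ hq0]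
  have k5 : Real.exp (-h / 2) ≤ 1 := Real.exp_le_one_iff.2 (by linarith)
  have k6 : |Da u h| ≤ 2 * h ^ 2 / q ^ 2 := by
    have : Da u h = - (Real.exp (-h / 2) * (y - x) / sg u ^ 2) := by unfold Da; rw [← hx, ← hy]; ring
    rw [this, abs_neg, abs_of_nonneg (by positivity)]
    calc Real.exp (-h / 2) * (y - x) / sg u ^ 2 ≤ 1 * (2 * h ^ 2 / q) / q := by gcongr
      _ = _ := by field_simp
  rw [← sq_abs]
  calc |Da u h| ^ 2 ≤ (2 * h ^ 2 / q ^ 2) ^ 2 := by gcongr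
    _ = _ := by ring

lemma H_bound {δ h q u : ℝ} (hδ0 : 0 < δ) (hδ1 : δ ≤ 1) (hq : q = 1 - Real.exp (-δ)) (hh : 0 ≤ h) (hhq : h ≤ 37 / 100 * q)
    (hu : δ + h ≤ u) : (lam (u - 2 * h) - lam u) ^ 4 ≤ 33 * h ^ 4 / q ^ 6 := by
  have hq0 : 0 < q := by rw [hq]; exact one_sub_exp_pos hδ0
  have hqd : q ≤ δ := hq ▸ q_le_delta δ
  have hq3 : q ≤ 2 / 3 := hq ▸ q_le hδ1
  have hs1 : q ≤ sg u ^ 2 := hq ▸ sg_sq_mono hδ0.le (by linarith)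
  have hs2 : 63 / 100 * q ≤ sg (u - 2 * h) ^ 2 := sgp_lb hδ0 hq hh hhq (by linarith)
  have p0 : 0 < u := by linarith
  have p0' : 0 < u - 2 * h := by linarith
  have p1 := sg_pos p0
  have p2 := sg_pos p0'
  have e1 := sg_sq p0.le
  have e3 := sg_sq p0'.le
  have l1 := lam_pos p0
  have l2 := lam_mono p0' (show u - 2 * h ≤ u by linarith)
  set c := Real.exp (-u / 2) with hc
  have hc0 : 0 < c := Real.exp_pos _
  have hc1 : c ≤ 1 := Real.exp_le_one_iff.2 (by linarith)
  have f1 : Real.exp (-u) = c ^ 2 := by rw [hc, exp_half_sq]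
  have f2 : Real.exp (-(u - 2 * h)) = c ^ 2 * Real.exp (2 * h) := by rw [← f1, ← Real.exp_add]; congr 1; ring
  set H := lam (u - 2 * h) - lam u with hH
  have hH0 : 0 ≤ H := sub_nonneg.2 l2
  set s := sg u with hs
  set s' := sg (u - 2 * h) with hs'
  have m1 : lam u = c / s := rfl
  have m2 : lam (u - 2 * h) ^ 2 = c ^ 2 * Real.exp (2 * h) / s' ^ 2 := by
    rw [lam, div_pow, exp_half_sq, f2]
  have m3 : lam (u - 2 * h) ^ 2 - lam u ^ 2 = c ^ 2 * (Real.exp (2 * h) - 1) / (s' ^ 2 * s ^ 2) := by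
    rw [m2, m1, div_pow, div_sub_div _ _ (by positivity) (by positivity)]
    congr 1
    rw [e1, e3, f1, f2]; ring
  have g1 := Real.abs_exp_sub_one_sub_id_le (x := 2 * h) (by rw [abs_of_nonneg (by linarith)]; linarith)
  have g3 := (abs_le.1 g1).2
  have g4 : Real.exp (2 * h) - 1 ≤ 3 * h := by nlinarith
  have n1 : 2 * lam u * H ≤ lam (u - 2 * h) ^ 2 - lam u ^ 2 := by
    have : lam (u - 2 * h) = lam u + H := by rw [hH]; ring
    rw [this]; nlinarith [sq_nonneg H]
  have n2 : H ≤ 3 / 2 * h / (s' ^ 2 * s) := by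
    rw [m3, m1] at n1
    have n3 : 2 * (c / s) * H ≤ 2 * (c / s) * (3 / 2 * h / (s' ^ 2 * s)) := by
      refine n1.trans ?_
      calc c ^ 2 * (Real.exp (2 * h) - 1) / (s' ^ 2 * s ^ 2) ≤ c * 1 * (3 * h) / (s' ^ 2 * s ^ 2) := by
            rw [sq c]; gcongr
            have := Real.add_one_le_exp (2 * h)
            linarith
        _ = _ := by field_simp
    exact le_of_mul_le_mul_left n3 (by positivity)
  calc H ^ 4 ≤ (3 / 2 * h / (s' ^ 2 * s)) ^ 4 := by gcongr
    _ = (3 / 2) ^ 4 * h ^ 4 / ((s' ^ 2) ^ 4 * (s ^ 2) ^ 2) := by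
        rw [div_pow]; ring
    _ ≤ (3 / 2) ^ 4 * h ^ 4 / ((63 / 100 * q) ^ 4 * q ^ 2) := by gcongr
    _ = ((3 / 2) ^ 4 / (63 / 100) ^ 4) * (h ^ 4 / q ^ 6) := by field_simp
    _ ≤ 33 * (h ^ 4 / q ^ 6) := by gcongr; norm_num
    _ = _ := by ring

lemma L2_bounds {L : ℝ} (hL : 3 / 2 ≤ L) : 266 * L ≤ Real.exp (4 * L) ∧ 177 * L ^ 2 ≤ Real.exp (4 * L) ∧ 79 * L ^ 4 ≤ Real.exp (4 * L) ∧ 400 ≤ Real.exp (4 * L) := by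
  have h6 : (400:ℝ) ≤ Real.exp 6 := by
    have h := Real.exp_one_gt_d9
    have : Real.exp 6 = Real.exp 1 ^ 6 := by rw [← Real.exp_nat_mul]; norm_num
    rw [this]
    calc (400:ℝ) ≤ 2.718 ^ 6 := by norm_num
      _ ≤ _ := by gcongr; linarith
  set y := 2 / 3 * L with hy
  have hy1 : 1 ≤ y := by linarith
  have hLy : L = 3 / 2 * y := by linarith
  have e1 : y ≤ Real.exp (3 / 2 * (y - 1)) := by
    have := Real.add_one_le_exp (3 / 2 * (y - 1)); linarith
  have e2 : y ^ 4 ≤ Real.exp (6 * (y - 1)) := by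
    have : Real.exp (6 * (y - 1)) = Real.exp (3 / 2 * (y - 1)) ^ 4 := by rw [← Real.exp_nat_mul]; congr 1; push_cast; ring
    rw [this]; gcongr
  have e3 : 400 * y ^ 4 ≤ Real.exp (4 * L) := by
    have : Real.exp (4 * L) = Real.exp 6 * Real.exp (6 * (y - 1)) := by rw [← Real.exp_add]; congr 1; rw [hLy]; ring
    rw [this]; gcongr
  have y2 : y ≤ y ^ 4 := by nlinarith [pow_le_pow_right₀ hy1 (show 1 ≤ 4 by norm_num)]
  have y3 : y ^ 2 ≤ y ^ 4 := pow_le_pow_right₀ hy1 (by norm_num)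
  rw [hLy] at *
  refine ⟨by linarith, by nlinarith, by nlinarith, by linarith⟩

lemma L0_bounds {L : ℝ} (hL : 0 ≤ L) : 4 / 3 * L ^ 3 ≤ Real.exp (2 * L) ∧ 2 * L ^ 2 ≤ Real.exp (2 * L) ∧ 2 * L ≤ Real.exp (2 * L) ∧ 1 ≤ Real.exp (2 * L) := by
  have h3 := Real.pow_div_factorial_le_exp (2 * L) (by linarith) 3
  have h2 := Real.pow_div_factorial_le_exp (2 * L) (by linarith) 2
  have h1 := Real.pow_div_factorial_le_exp (2 * L) (by linarith) 1
  have h0 := Real.one_le_exp (show 0 ≤ 2 * L by linarith)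
  norm_num [Nat.factorial] at h3 h2 h1
  refine ⟨by linarith, by linarith, by linarith, h0⟩

lemma mloc_bound (R : ℝ) (d : ℕ) (hd : 1 ≤ d) {δ h q u L₀ L₂ : ℝ} (hR : 0 ≤ R) (hδ0 : 0 < δ) (hδ1 : δ ≤ 1) (hq : q = 1 - Real.exp (-δ)) (hh : 0 ≤ h) (hhq : h ≤ 37 / 100 * q)
    (hu : δ + h ≤ u) (hL₀ : L₀ = 3 * R ^ 2 / q ^ 2) (hL₂ : L₂ = 1 / q) :
    ∃ n : ℕ, 0 < n ∧ mloc R d u h n ≤ 9 * Real.exp (2 * L₀ + 4 * L₂) * (d * h ^ 4) := by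
  have hq0 : 0 < q := by rw [hq]; exact one_sub_exp_pos hδ0
  have hqd : q ≤ δ := hq ▸ q_le_delta δ
  have hq3 : q ≤ 2 / 3 := hq ▸ q_le hδ1
  have hD := Da_bound hδ0 hδ1 hq hh hhq hu
  have hH := H_bound hδ0 hδ1 hq hh hhq hu
  have hs2 : 63 / 100 * q ≤ sg (u - 2 * h) ^ 2 := sgp_lb hδ0 hq hh hhq (by linarith)
  have p0' : 0 < u - 2 * h := by linarith
  have hlam : lam (u - 2 * h) ^ 2 ≤ 159 / 100 / q := by
    rw [lam, div_pow, exp_half_sq]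
    calc _ ≤ 1 / (63 / 100 * q) := by
          gcongr
          exact Real.exp_le_one_iff.2 (by linarith)
      _ = (100 / 63) * (1 / q) := by field_simp
      _ ≤ (159 / 100) * (1 / q) := by
          apply mul_le_mul_of_nonneg_right _ (by positivity)
          norm_num
      _ = _ := by ring
  set H := lam (u - 2 * h) - lam u with hHdef
  have hdR : (1:ℝ) ≤ d := by exact_mod_cast hd
  obtain ⟨n, hn0, hn⟩ : ∃ n : ℕ, 0 < n ∧ 2 * (Real.exp 1 * (4 * R ^ 2 * H ^ 2 / n)) ≤ d * h ^ 4 := by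
    rcases hh.eq_or_lt with h0 | h0
    · refine ⟨1, one_pos, ?_⟩
      have : H = 0 := by rw [hHdef, ← h0]; simp
      rw [this, ← h0]; simp
    · obtain ⟨n, hn⟩ := exists_nat_gt (2 * (Real.exp 1 * (4 * R ^ 2 * H ^ 2)) / h ^ 4)
      have hnR : (0:ℝ) < n := lt_of_le_of_lt (by positivity) hn
      refine ⟨n, by exact_mod_cast hnR, ?_⟩
      rw [div_lt_iff₀ (by positivity)] at hn
      calc 2 * (Real.exp 1 * (4 * R ^ 2 * H ^ 2 / n)) = 2 * (Real.exp 1 * (4 * R ^ 2 * H ^ 2)) / n := by ring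
        _ ≤ h ^ 4 := by rw [div_le_iff₀ hnR]; linarith
        _ = 1 * h ^ 4 := by ring
        _ ≤ _ := by gcongr
  refine ⟨n, hn0, ?_⟩
  have hL20 : 3 / 2 ≤ L₂ := by
    rw [hL₂, le_div_iff₀ hq0]; linarith
  have hL00 : 0 ≤ L₀ := by rw [hL₀]; positivity
  obtain ⟨a1, a2, a3, a4⟩ := L2_bounds hL20
  obtain ⟨b1, b2, b3, b4⟩ := L0_bounds hL00
  have hqL : q = 1 / L₂ := by rw [hL₂]; simp
  have hR2 : R ^ 2 = L₀ / 3 * q ^ 2 := by rw [hL₀]; field_simp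
  have t1 : 2 * Da u h ^ 2 * (6 * R ^ 2 + 4 * d) ≤ (16 * (L₀ * L₂ ^ 2) + 32 * L₂ ^ 4) * (d * h ^ 4) := by
    calc _ ≤ 2 * (4 * h ^ 4 / q ^ 4) * (6 * (R ^ 2 * 1) + 4 * d) := by rw [mul_one]; gcongr
      _ ≤ 2 * (4 * h ^ 4 / q ^ 4) * (6 * (R ^ 2 * d) + 4 * d) := by gcongr
      _ = _ := by rw [hR2, hL₂]; field_simp; ring
  have he : Real.exp 1 ≤ 272 / 100 := by have := Real.exp_one_lt_d9; linarith
  have t2 : 2 * (Real.exp 1 * (H ^ 4 * (136 * lam (u - 2 * h) ^ 2 * R ^ 6 + 64 * R ^ 4 * d))) ≤ (1440 * (L₀ ^ 3 * L₂) + 1280 * (L₀ ^ 2 * L₂ ^ 2)) * (d * h ^ 4) := by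
    have hR6 : R ^ 6 = (R ^ 2) ^ 3 := by ring
    have hR4 : R ^ 4 = (R ^ 2) ^ 2 := by ring
    calc _ ≤ 2 * (272 / 100 * ((33 * h ^ 4 / q ^ 6) * (136 * (159 / 100 / q) * (R ^ 6 * 1) + 64 * R ^ 4 * d))) := by
          rw [mul_one]; gcongr
      _ ≤ 2 * (272 / 100 * ((33 * h ^ 4 / q ^ 6) * (136 * (159 / 100 / q) * (R ^ 6 * d) + 64 * R ^ 4 * d))) := by gcongr
      _ = (2 * (272 / 100) * 33 * 136 * (159 / 100) / 27 * (L₀ ^ 3 * L₂) + 2 * (272 / 100) * 33 * 64 / 9 * (L₀ ^ 2 * L₂ ^ 2)) * (d * h ^ 4) := by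
          rw [hR6, hR4, hR2, hL₂]; field_simp; ring
      _ ≤ _ := by
          gcongr
          · norm_num
          · norm_num
  have hsum : (16 * (L₀ * L₂ ^ 2) + 32 * L₂ ^ 4) + (1440 * (L₀ ^ 3 * L₂) + 1280 * (L₀ ^ 2 * L₂ ^ 2)) + 1 ≤ 9 * Real.exp (2 * L₀ + 4 * L₂) := by
    rw [Real.exp_add]
    set X := Real.exp (4 * L₂)
    set Y := Real.exp (2 * L₀)
    have c1 : (2 * L₀) * (177 * L₂ ^ 2) ≤ Y * X := by gcongr
    have c2 : 1 * (79 * L₂ ^ 4) ≤ Y * X := by gcongr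
    have c3 : (4 / 3 * L₀ ^ 3) * (266 * L₂) ≤ Y * X := by gcongr
    have c4 : (2 * L₀ ^ 2) * (177 * L₂ ^ 2) ≤ Y * X := by gcongr
    have c5 : 1 * 400 ≤ Y * X := by gcongr
    linarith
  have hm : mloc R d u h n = 2 * Da u h ^ 2 * (6 * R ^ 2 + 4 * d) + 2 * (Real.exp 1 * (H ^ 4 * (136 * lam (u - 2 * h) ^ 2 * R ^ 6 + 64 * R ^ 4 * d))) + 2 * (Real.exp 1 * (4 * R ^ 2 * H ^ 2 / n)) := by
    unfold mloc; rw [← hHdef]; ring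
  rw [hm]
  have hdh : 0 ≤ d * h ^ 4 := by positivity
  have := mul_le_mul_of_nonneg_right hsum hdh
  linarith
end partF

section partN
variable {d : ℕ} {P₀ : Measure (EE d)} [IsProbabilityMeasure P₀] {R : ℝ}

/-- approximate step -/
def Fth (s : EE d → EE d) (h : ℝ) (x : EE d) : EE d :=
  Real.exp (h / 2) • (x + (1 - Real.exp (-h)) • s x)

lemma stepMap_eq (sθ : ℝ → EE d → EE d) (t : ℕ → ℝ) (T : ℝ) (k : ℕ) :
    stepMap sθ t T k = Fth (sθ (T - t k)) (t (k + 1) - t k) := by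
  funext x
  unfold stepMap Fth
  rw [← Real.exp_mul, neg_sub]
  congr 2
  ring

lemma Fth_lip {s : EE d → EE d} (hs : ContDiff ℝ 1 s) {u h L₀ : ℝ} (hL₀ : 0 ≤ L₀) (hh : 0 ≤ h) (hu0 : 0 < u) (hu : h ≤ u)
    (hlip : ∀ x, ‖fderiv ℝ s x + (1 - Real.exp (-u))⁻¹ • ContinuousLinearMap.id ℝ (EE d)‖ ≤ L₀ * Real.exp (-u)) (x y : EE d) :
    ‖Fth s h x - Fth s h y‖ ≤ Real.exp (-h / 2) * Real.exp (L₀ * (Real.exp (-(u - h)) - Real.exp (-u))) * ‖x - y‖ := by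
  have hd : ∀ z, HasFDerivAt (Fth s h) (Real.exp (h / 2) • (ContinuousLinearMap.id ℝ (EE d) + (1 - Real.exp (-h)) • fderiv ℝ s z)) z := by
    intro z
    have h1 : HasFDerivAt s (fderiv ℝ s z) z := (hs.differentiable (by norm_num) z).hasFDerivAt
    exact ((hasFDerivAt_id z).add (h1.const_smul (1 - Real.exp (-h)))).const_smul (Real.exp (h / 2))
  refine Convex.norm_image_sub_le_of_norm_hasFDerivWithin_le (s := Set.univ) (fun z _ => (hd z).hasFDerivWithinAt) ?_ convex_univ (Set.mem_univ y) (Set.mem_univ x)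
  intro z _
  set q := 1 - Real.exp (-u) with hq
  have hq0 : 0 < q := one_sub_exp_pos hu0
  have hq1 : q ≤ 1 := by have := Real.exp_pos (-u); linarith
  set α := 1 - Real.exp (-h) with hα
  have hα0 : 0 ≤ α := by
    have : Real.exp (-h) ≤ 1 := Real.exp_le_one_iff.2 (by linarith)
    linarith
  have hαq : α ≤ q := by
    have : Real.exp (-u) ≤ Real.exp (-h) := Real.exp_le_exp.2 (by linarith)
    linarith
  have e1 : ContinuousLinearMap.id ℝ (EE d) + α • fderiv ℝ s z
      = (1 - α * q⁻¹) • ContinuousLinearMap.id ℝ (EE d) + α • (fderiv ℝ s z + q⁻¹ • ContinuousLinearMap.id ℝ (EE d)) := by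
    module
  have h1 : α ≤ α * q⁻¹ := le_mul_of_one_le_right hα0 ((one_le_inv₀ hq0).2 hq1)
  have h2 : α * q⁻¹ ≤ 1 := by rw [← div_eq_mul_inv, div_le_one hq0]; exact hαq
  rw [e1, norm_smul, Real.norm_eq_abs, abs_of_pos (Real.exp_pos _)]
  have h3 : ‖(1 - α * q⁻¹) • ContinuousLinearMap.id ℝ (EE d) + α • (fderiv ℝ s z + q⁻¹ • ContinuousLinearMap.id ℝ (EE d))‖
      ≤ (1 - α) * 1 + α * (L₀ * Real.exp (-u)) := by
    refine (norm_add_le _ _).trans ?_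
    rw [norm_smul, norm_smul, Real.norm_eq_abs, Real.norm_eq_abs, abs_of_nonneg hα0, abs_of_nonneg (by linarith : 0 ≤ 1 - α * q⁻¹)]
    have h5 := hlip z
    have h6 : ‖ContinuousLinearMap.id ℝ (EE d)‖ ≤ 1 := ContinuousLinearMap.norm_id_le
    gcongr
    linarith
  have h4 : Real.exp (h / 2) * ((1 - α) * 1 + α * (L₀ * Real.exp (-u))) = Real.exp (-h / 2) * (1 + L₀ * (Real.exp (-(u - h)) - Real.exp (-u))) := by
    have f1 : Real.exp (h / 2) = Real.exp (-h / 2) * Real.exp h := by rw [← Real.exp_add]; congr 1; ring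
    have f2 : Real.exp h * Real.exp (-h) = 1 := by rw [← Real.exp_add]; simp
    have f3 : Real.exp (-(u - h)) = Real.exp (-u) * Real.exp h := by rw [← Real.exp_add]; congr 1; ring
    rw [f1, f3, hα]
    linear_combination (Real.exp (-h / 2) - Real.exp (-h / 2) * L₀ * Real.exp (-u)) * f2
  calc _ ≤ Real.exp (h / 2) * ((1 - α) * 1 + α * (L₀ * Real.exp (-u))) := by gcongr
    _ = _ := h4
    _ ≤ _ := by
        gcongr
        have := Real.add_one_le_exp (L₀ * (Real.exp (-(u - h)) - Real.exp (-u)))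
        linarith

lemma score_int (hsupp : P₀ (Metric.closedBall (0 : EE d) R)ᶜ = 0) {s : EE d → EE d} (hs : ContDiff ℝ 1 s) {u B : ℝ} (hu0 : 0 < u)
    (hlip : ∀ x, ‖fderiv ℝ s x + (1 - Real.exp (-u))⁻¹ • ContinuousLinearMap.id ℝ (EE d)‖ ≤ B) :
    ∫⁻ y, ENNReal.ofReal (‖gradient (fun z => Real.log (ouDensityIso P₀ u z)) y - s y‖ ^ 2) ∂(OUlaw P₀ u)
      = ENNReal.ofReal (∫ x, ‖gradient (fun z => Real.log (ouDensityIso P₀ u z)) x - s x‖ ^ 2 * ouDensityIso P₀ u x) := by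
  have hR := R_nonneg hsupp
  have hq0 : 0 < 1 - Real.exp (-u) := one_sub_exp_pos hu0
  set iq := (1 - Real.exp (-u))⁻¹ with hiq
  have hiq0 : 0 < iq := inv_pos.2 hq0
  have hB : 0 ≤ B := (norm_nonneg _).trans (hlip 0)
  have hgr : ∀ y, ‖s y‖ ≤ ‖s 0‖ + (B + iq) * ‖y‖ := by
    intro y
    have h1 := Convex.norm_image_sub_le_of_norm_hasFDerivWithin_le (f := s) (f' := fderiv ℝ s) (s := Set.univ) (C := B + iq) (x := 0) (y := y)
      (fun z _ => ((hs.differentiable (by norm_num) z).hasFDerivAt).hasFDerivWithinAt) ?_ convex_univ (Set.mem_univ _) (Set.mem_univ _)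
    · rw [sub_zero] at h1
      have := norm_sub_norm_le (s y) (s 0)
      linarith
    · intro z _
      have h2 : fderiv ℝ s z = (fderiv ℝ s z + iq • ContinuousLinearMap.id ℝ (EE d)) - iq • ContinuousLinearMap.id ℝ (EE d) := by abel
      rw [h2]
      refine (norm_sub_le _ _).trans ?_
      have h3 : ‖iq • ContinuousLinearMap.id ℝ (EE d)‖ ≤ iq := by
        rw [norm_smul, Real.norm_eq_abs, abs_of_pos hiq0]
        exact mul_le_of_le_one_right hiq0.le ContinuousLinearMap.norm_id_le
      linarith [hlip z]
  set G : EE d → EE d := fun y => gradient (fun z => Real.log (ouDensityIso P₀ u z)) y - s y with hG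
  have hGeq : G = fun y => (sg u ^ 2)⁻¹ • (Real.exp (-u / 2) • pmean P₀ (lam u) ((sg u)⁻¹ • y) - y) - s y := by
    funext y; rw [hG]; simp only; rw [score_eq hsupp hu0]
  have hsm : Measurable s := hs.continuous.measurable
  have hpm := pmean_meas (P₀ := P₀) (lam u)
  have hGm : Measurable G := by rw [hGeq]; fun_prop
  have hGb : ∀ y, ‖G y‖ ^ 2 ≤ 2 * (iq * R + ‖s 0‖) ^ 2 + 2 * (B + 2 * iq) ^ 2 * ‖y‖ ^ 2 := by
    intro y
    have h1 : ‖G y‖ ≤ (iq * R + ‖s 0‖) + (B + 2 * iq) * ‖y‖ := by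
      rw [hGeq]
      simp only
      refine (norm_sub_le _ _).trans ?_
      rw [norm_smul, sg_sq hu0.le, ← hiq, Real.norm_eq_abs, abs_of_pos hiq0]
      have h2 : ‖Real.exp (-u / 2) • pmean P₀ (lam u) ((sg u)⁻¹ • y) - y‖ ≤ 1 * R + ‖y‖ := by
        refine (norm_sub_le _ _).trans ?_
        rw [norm_smul, Real.norm_eq_abs, abs_of_pos (Real.exp_pos _)]
        gcongr
        · exact Real.exp_le_one_iff.2 (by linarith)
        · exact pmean_norm hsupp _ _
      have h3 := mul_le_mul_of_nonneg_left h2 hiq0.le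
      have := hgr y
      linarith
    calc ‖G y‖ ^ 2 ≤ ((iq * R + ‖s 0‖) + (B + 2 * iq) * ‖y‖) ^ 2 := pow_le_pow_left₀ (norm_nonneg _) h1 2
      _ ≤ _ := by nlinarith [sq_nonneg ((iq * R + ‖s 0‖) - (B + 2 * iq) * ‖y‖)]
  have hfin : ∫⁻ y, ENNReal.ofReal (‖G y‖ ^ 2) ∂(OUlaw P₀ u) < ⊤ := by
    calc _ ≤ ∫⁻ y, (ENNReal.ofReal (2 * (iq * R + ‖s 0‖) ^ 2) + ENNReal.ofReal (2 * (B + 2 * iq) ^ 2) * ENNReal.ofReal (‖y‖ ^ 2)) ∂(OUlaw P₀ u) := by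
          refine lintegral_mono fun y => ?_
          rw [← ENNReal.ofReal_mul (by positivity), ← ENNReal.ofReal_add (by positivity) (by positivity)]
          exact ENNReal.ofReal_le_ofReal (hGb y)
      _ ≤ ENNReal.ofReal (2 * (iq * R + ‖s 0‖) ^ 2) + ENNReal.ofReal (2 * (B + 2 * iq) ^ 2) * ENNReal.ofReal (2 * (R ^ 2 + d)) := by
          rw [lintegral_add_left measurable_const, lintegral_const_mul _ (by fun_prop), lintegral_const, measure_univ, mul_one]
          gcongr
          exact OUlaw_sq hsupp hu0
      _ < ⊤ := by
          exact ENNReal.add_lt_top.2 ⟨ENNReal.ofReal_lt_top, ENNReal.mul_lt_top ENNReal.ofReal_lt_top ENNReal.ofReal_lt_top⟩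
  have hom : Measurable (ouDensityIso P₀ u) := by
    have hZ := Zt_meas (P₀ := P₀) (lam u)
    have hgm := (gdens_cont d).measurable
    have : ouDensityIso P₀ u = fun w => (sg u ^ d)⁻¹ * gdens d ((sg u)⁻¹ • w) * Zt P₀ (lam u) ((sg u)⁻¹ • w) :=
      funext fun w => ou_eq hu0 w
    rw [this]; fun_prop
  have hop : ∀ x, 0 ≤ ouDensityIso P₀ u x := by
    intro x
    rw [ou_eq hu0]
    have := sg_pos hu0
    have := gdens_pos d ((sg u)⁻¹ • x)
    have := Zt_pos hsupp (lam u) ((sg u)⁻¹ • x)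
    positivity
  have e1 : ∫⁻ y, ENNReal.ofReal (‖G y‖ ^ 2) ∂(OUlaw P₀ u) = ∫⁻ x, ENNReal.ofReal (‖G x‖ ^ 2 * ouDensityIso P₀ u x) := by
    rw [OUlaw_density hsupp hu0, lintegral_withDensity_eq_lintegral_mul _ (by fun_prop) (by fun_prop)]
    refine lintegral_congr fun x => ?_
    simp only [Pi.mul_apply]
    rw [← ENNReal.ofReal_mul (hop x), mul_comm]
  rw [e1] at hfin
  have hnn : ∀ x, 0 ≤ ‖G x‖ ^ 2 * ouDensityIso P₀ u x := fun x => mul_nonneg (by positivity) (hop x)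
  have hInteg : Integrable (fun x => ‖G x‖ ^ 2 * ouDensityIso P₀ u x) := by
    refine ⟨by fun_prop, ?_⟩
    rw [hasFiniteIntegral_iff_ofReal (Filter.Eventually.of_forall hnn)]
    exact hfin
  rw [e1, ofReal_integral_eq_lintegral_ofReal hInteg (Filter.Eventually.of_forall hnn)]

lemma two_sinh {h : ℝ} (hh : 0 ≤ h) (h1 : h ≤ 1 / 4) : Real.exp (h / 2) * (1 - Real.exp (-h)) ≤ 11 / 10 * h := by
  have f1 : Real.exp (h / 2) * (1 - Real.exp (-h)) = Real.exp (h / 2) - Real.exp (-(h / 2)) := by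
    rw [mul_sub, mul_one, ← Real.exp_add]; congr 2; ring
  rw [f1]
  have g1 := (abs_le.1 (Real.abs_exp_sub_one_sub_id_le (x := h / 2) (by rw [abs_of_nonneg (by linarith)]; linarith))).2
  have g2 := Real.add_one_le_exp (-(h / 2))
  nlinarith

lemma Ferr (hsupp : P₀ (Metric.closedBall (0 : EE d) R)ᶜ = 0) {s : EE d → EE d} (hs : Measurable s) {u h I : ℝ} (hu0 : 0 < u) (hh : 0 ≤ h) (h1 : h ≤ 1 / 4)
    (hI : ∫⁻ y, ENNReal.ofReal (‖gradient (fun z => Real.log (ouDensityIso P₀ u z)) y - s y‖ ^ 2) ∂(OUlaw P₀ u) = ENNReal.ofReal I) :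
    ∫⁻ y, ENNReal.ofReal (‖Ftrue P₀ u h y - Fth s h y‖ ^ 2) ∂(OUlaw P₀ u) ≤ ENNReal.ofReal (121 / 100 * h ^ 2 * I) := by
  have hpm := pmean_meas (P₀ := P₀) (lam u)
  have hα0 : 0 ≤ 1 - Real.exp (-h) := by
    have : Real.exp (-h) ≤ 1 := Real.exp_le_one_iff.2 (by linarith)
    linarith
  calc _ ≤ ∫⁻ y, ENNReal.ofReal (121 / 100 * h ^ 2) * ENNReal.ofReal (‖gradient (fun z => Real.log (ouDensityIso P₀ u z)) y - s y‖ ^ 2) ∂(OUlaw P₀ u) := by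
        refine lintegral_mono fun y => ?_
        rw [← ENNReal.ofReal_mul (by positivity)]
        apply ENNReal.ofReal_le_ofReal
        rw [score_eq hsupp hu0]
        unfold Ftrue Fth
        set g := (sg u ^ 2)⁻¹ • (Real.exp (-u / 2) • pmean P₀ (lam u) ((sg u)⁻¹ • y) - y)
        have e1 : Real.exp (h / 2) • (y + (1 - Real.exp (-h)) • g) - Real.exp (h / 2) • (y + (1 - Real.exp (-h)) • s y)
           = (Real.exp (h / 2) * (1 - Real.exp (-h))) • (g - s y) := by module
        rw [e1, norm_smul, Real.norm_eq_abs, abs_of_nonneg (by positivity), mul_pow]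
        have e2 := pow_le_pow_left₀ (by positivity) (two_sinh hh h1) 2
        have : (11 / 10 * h) ^ 2 = 121 / 100 * h ^ 2 := by ring
        rw [this] at e2
        gcongr
    _ = _ := by
        rw [lintegral_const_mul' _ _ ENNReal.ofReal_ne_top, hI, ← ENNReal.ofReal_mul (by positivity)]

lemma init_cpl (hsupp : P₀ (Metric.closedBall (0 : EE d) R)ᶜ = 0) {T : ℝ} (hT : 0 < T) :
    ∃ μ : Measure (EE d × EE d), IsProbabilityMeasure μ ∧ μ.map Prod.fst = OUlaw P₀ T ∧ μ.map Prod.snd = stdGaussE d ∧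
      ∫⁻ p, ENNReal.ofReal (‖p.1 - p.2‖ ^ 2) ∂μ ≤ ENNReal.ofReal (2 * (Real.exp (-T) * (R ^ 2 + d))) := by
  have hs := sg_pos hT
  have hs2 := sg_sq hT.le
  have hR := R_nonneg hsupp
  set Ψ : EE d × EE d → EE d × EE d := fun p => (sg T • (lam T • p.1 + p.2), p.2) with hΨ
  have hΨm : Measurable Ψ := by rw [hΨ]; fun_prop
  refine ⟨(P₀.prod (stdGaussE d)).map Ψ, Measure.isProbabilityMeasure_map hΨm.aemeasurable, ?_, ?_, ?_⟩
  · rw [Measure.map_map measurable_fst hΨm, OUlaw, Qlaw, Measure.map_map (by fun_prop) (by fun_prop)]; rfl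
  · rw [Measure.map_map measurable_snd hΨm]
    have : (Prod.snd ∘ Ψ) = Prod.snd := rfl
    rw [this, Measure.map_snd_prod]; simp
  · rw [lintegral_map (by fun_prop) hΨm, lintegral_prod _ (by fun_prop)]
    have hE0 := Real.exp_pos (-T)
    have hE1 : Real.exp (-T) ≤ 1 := Real.exp_le_one_iff.2 (by linarith)
    have hs1 : sg T ≤ 1 := by nlinarith
    have hsd : (1 - sg T) ^ 2 ≤ Real.exp (-T) := by nlinarith
    calc _ ≤ ∫⁻ x, ENNReal.ofReal (2 * (Real.exp (-T) * (R ^ 2 + d))) ∂P₀ := by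
          refine lintegral_mono_ae ?_
          filter_upwards [ae_norm_le hsupp] with x hx
          calc _ ≤ ∫⁻ z, (ENNReal.ofReal (2 * (Real.exp (-T) * R ^ 2)) + ENNReal.ofReal (2 * Real.exp (-T)) * ENNReal.ofReal (‖z‖ ^ 2)) ∂(stdGaussE d) := by
                refine lintegral_mono fun z => ?_
                rw [← ENNReal.ofReal_mul (by positivity), ← ENNReal.ofReal_add (by positivity) (by positivity)]
                apply ENNReal.ofReal_le_ofReal
                have e1 : (Ψ (x, z)).1 - (Ψ (x, z)).2 = Real.exp (-T / 2) • x + (sg T - 1) • z := by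
                  simp only [hΨ]
                  rw [smul_add, smul_smul, lam, mul_div_cancel₀ _ hs.ne']; module
                rw [e1]
                refine (sq2 _ _).trans ?_
                rw [norm_smul, norm_smul, mul_pow, mul_pow, Real.norm_eq_abs, Real.norm_eq_abs, sq_abs, sq_abs, exp_half_sq]
                have c1 : Real.exp (-T) * ‖x‖ ^ 2 ≤ Real.exp (-T) * R ^ 2 := by gcongr
                have c2 : (sg T - 1) ^ 2 * ‖z‖ ^ 2 ≤ Real.exp (-T) * ‖z‖ ^ 2 := by
                  gcongr; linarith [sq_nonneg (sg T), show (sg T - 1) ^ 2 = (1 - sg T) ^ 2 by ring]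
                linarith
            _ = _ := by
                rw [lintegral_add_left measurable_const, lintegral_const_mul _ (by fun_prop), gauss_sq, lintegral_const, measure_univ, mul_one,
                  ← ENNReal.ofReal_mul (by positivity), ← ENNReal.ofReal_add (by positivity) (by positivity)]
                congr 1; ring
      _ = _ := by simp
end partN

section partM
variable {d : ℕ} {P₀ : Measure (EE d)} [IsProbabilityMeasure P₀] {R : ℝ}

/-- squared score error at time u -/
def Ierr (P₀ : Measure (EE d)) (s : EE d → EE d) (u : ℝ) : ℝ :=
  ∫ x, ‖gradient (fun z => Real.log (ouDensityIso P₀ u z)) x - s x‖ ^ 2 * ouDensityIso P₀ u x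

lemma Ierr_nonneg (s : EE d → EE d) {u : ℝ} (hu : 0 < u) : 0 ≤ Ierr P₀ s u := by
  unfold Ierr
  refine integral_nonneg fun x => mul_nonneg (by positivity) ?_
  unfold ouDensityIso
  have := one_sub_exp_pos hu
  refine mul_nonneg (by positivity) (integral_nonneg fun y => (Real.exp_pos _).le)

lemma one_step (hsupp : P₀ (Metric.closedBall (0 : EE d) R)ᶜ = 0) (hd : 1 ≤ d) {δ h q u L₀ L₂ : ℝ}
    (hδ0 : 0 < δ) (hδ1 : δ ≤ 1) (hq : q = 1 - Real.exp (-δ)) (hh : 0 ≤ h) (hhq : h ≤ 37 / 100 * q)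
    (hu : δ + h ≤ u) (hL₀ : L₀ = 3 * R ^ 2 / q ^ 2) (hL₂ : L₂ = 1 / q)
    {s : EE d → EE d} (hs : ContDiff ℝ 1 s)
    (hlip : ∀ x, ‖fderiv ℝ s x + (1 - Real.exp (-u))⁻¹ • ContinuousLinearMap.id ℝ (EE d)‖ ≤ L₀ * Real.exp (-u))
    (μ : Measure (EE d × EE d)) [IsProbabilityMeasure μ] (hfst : μ.map Prod.fst = OUlaw P₀ u)
    (w : ℝ) (hw : 0 < w) (A : ℝ) (hA0 : 0 ≤ A) (hA : ∫⁻ p, ENNReal.ofReal (‖p.1 - p.2‖ ^ 2) ∂μ ≤ ENNReal.ofReal A) :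
    ∃ μ' : Measure (EE d × EE d), IsProbabilityMeasure μ' ∧ μ'.map Prod.fst = OUlaw P₀ (u - h) ∧
      μ'.map Prod.snd = (((μ.map Prod.snd).map (Fth s h)).prod ((stdGaussE d).map fun x => Real.sqrt (1 - Real.exp (-h)) • x)).map (fun p => p.1 + p.2) ∧
      ∫⁻ p, ENNReal.ofReal (‖p.1 - p.2‖ ^ 2) ∂μ' ≤ ENNReal.ofReal ((1 + w) * (Real.exp (-h + 2 * L₀ * (Real.exp (-(u - h)) - Real.exp (-u))) * A)
        + (1 + 1 / w) * (2 * (9 * Real.exp (2 * L₀ + 4 * L₂) * (d * h ^ 4) + 121 / 100 * h ^ 2 * Ierr P₀ s u))) := by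
  have hR := R_nonneg hsupp
  have hqd : q ≤ δ := hq ▸ q_le_delta δ
  have hq3 : q ≤ 2 / 3 := hq ▸ q_le hδ1
  have hu0 : 0 < u := by linarith
  have hL0 : 0 ≤ L₀ := by rw [hL₀]; positivity
  obtain ⟨n, hn, hm⟩ := mloc_bound R d hd hR hδ0 hδ1 hq hh hhq hu hL₀ hL₂
  have hI0 := Ierr_nonneg (P₀ := P₀) s hu0
  have hsm : Measurable s := hs.continuous.measurable
  have hFm : Measurable (Fth s h) := by unfold Fth; fun_prop
  have he := Ferr hsupp hsm hu0 hh (by linarith) (score_int hsupp hs hu0 hlip)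
  obtain ⟨μ', p1, p2, p3, p4⟩ := step hsupp hh (u := u) (by linarith) μ hfst (Fth s h) hFm _ (by positivity)
    (Fth_lip hs hL0 hh hu0 (by linarith) hlip) (121 / 100 * h ^ 2 * Ierr P₀ s u) (by positivity) he w hw A hA0 hA n hn
  refine ⟨μ', p1, p2, p3, p4.trans (ENNReal.ofReal_le_ofReal ?_)⟩
  have e1 : (Real.exp (-h / 2) * Real.exp (L₀ * (Real.exp (-(u - h)) - Real.exp (-u)))) ^ 2
      = Real.exp (-h + 2 * L₀ * (Real.exp (-(u - h)) - Real.exp (-u))) := by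
    rw [← Real.exp_add, ← Real.exp_nat_mul]; congr 1; push_cast; ring
  rw [e1]
  gcongr

set_option maxHeartbeats 1000000 in
lemma real_sum {δ T τ C D L₀ E A0 : ℝ} (N : ℕ) (t I : ℕ → ℝ) (hN : 0 < N) (ht0 : t 0 = 0) (htN : t N = T - δ) (hts : ∀ k < N, t k ≤ t (k + 1))
    (htb : ∀ k ≤ N, t k ≤ T - δ)
    (hδ0 : 0 < δ) (hT : δ < T)
    (hh4 : ∀ k < N, t (k + 1) - t k ≤ 1 / 4) (hτ : ∀ k < N, t (k + 1) - t k ≤ τ) (hI : ∀ k < N, 0 ≤ I k) (hC : 0 ≤ C) (hD : 0 ≤ D) (hL₀ : 0 ≤ L₀) (hA0 : 0 ≤ A0)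
    (hE : ∑ k ∈ Finset.range N, (t (k + 1) - t k) * I k ≤ E) 
    (w : ℕ → ℝ) (hw : w = fun k => (t (k + 1) - t k) * Real.exp ((t k - (T - δ)) / 2) + 1 / (2 * N)) :
    Real.exp (-t N + 2 * L₀ * (Real.exp (-(T - t N)) - Real.exp (-T)) + ∑ k ∈ Finset.range N, w k) *
      (A0 + ∑ k ∈ Finset.range N, Real.exp (t (k + 1)) * ((1 + 1 / w k) * (2 * (C * (D * (t (k + 1) - t k) ^ 4) + 121 / 100 * (t (k + 1) - t k) ^ 2 * I k))))
    ≤ Real.exp (2 * L₀ + 3) * (Real.exp (-(T - δ)) * A0 + 24 / 5 * (12 / 5 * (C * (D * τ ^ 2)) + 121 / 100 * E)) := by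
  set a : ℕ → ℝ := fun k => Real.exp ((t k - (T - δ)) / 2) with ha
  have ha0 : ∀ k, 0 < a k := fun k => Real.exp_pos _
  have haN : a N = 1 := by simp [ha, htN]
  have ha1 : ∀ k ≤ N, a k ≤ 1 := fun k hk => Real.exp_le_one_iff.2 (by linarith [htb k hk])
  have hN1 : (1:ℝ) ≤ N := by exact_mod_cast hN
  have hstep : ∀ k < N, (t (k + 1) - t k) * a k ≤ 2 * (a (k + 1) - a k) := by
    intro k _
    have : a (k + 1) = a k * Real.exp ((t (k + 1) - t k) / 2) := by
      simp only [ha]; rw [← Real.exp_add]; congr 1; ring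
    have h1 := Real.add_one_le_exp ((t (k + 1) - t k) / 2)
    have := mul_le_mul_of_nonneg_left h1 (ha0 k).le
    linarith
  have hstep2 : ∀ k < N, a (k + 1) ≤ 6 / 5 * a k := by
    intro k hk
    have h0 := hts k hk
    have h4 := hh4 k hk
    have : a (k + 1) = a k * Real.exp ((t (k + 1) - t k) / 2) := by
      simp only [ha]; rw [← Real.exp_add]; congr 1; ring
    have g1 := (abs_le.1 (Real.abs_exp_sub_one_sub_id_le (x := (t (k + 1) - t k) / 2) (by rw [abs_of_nonneg (by linarith)]; linarith))).2
    have : Real.exp ((t (k + 1) - t k) / 2) ≤ 6 / 5 := by nlinarith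
    nlinarith [ha0 k]
  have htel : ∑ k ∈ Finset.range N, (a (k + 1) - a k) ≤ 1 := by
    rw [Finset.sum_range_sub, haN]; linarith [ha0 0]
  have hW : ∑ k ∈ Finset.range N, w k ≤ 3 := by
    have : ∑ k ∈ Finset.range N, w k ≤ ∑ k ∈ Finset.range N, (2 * (a (k + 1) - a k) + 1 / (2 * N)) := by
      refine Finset.sum_le_sum fun k hk => ?_
      rw [hw]
      have := hstep k (Finset.mem_range.1 hk)
      simp only
      linarith
    refine this.trans ?_
    rw [Finset.sum_add_distrib, ← Finset.mul_sum, Finset.sum_const, Finset.card_range, nsmul_eq_mul]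
    have : (N:ℝ) * (1 / (2 * N)) = 1 / 2 := by field_simp
    linarith
  have hterm : ∀ k < N, Real.exp (-(T - δ)) * (Real.exp (t (k + 1)) * ((1 + 1 / w k) * (2 * (C * (D * (t (k + 1) - t k) ^ 4) + 121 / 100 * (t (k + 1) - t k) ^ 2 * I k))))
      ≤ 24 / 5 * (C * (D * τ ^ 2) * (12 / 5 * (a (k + 1) - a k)) + 121 / 100 * ((t (k + 1) - t k) * I k)) := by
    intro k hk
    have h0 := hts k hk
    have h4 := hh4 k hk
    have hτk := hτ k hk
    have hs := hstep k hk
    have hs2 := hstep2 k hk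
    have ha' := ha0 k
    have hab1 := ha0 (k + 1)
    have hak1 := ha1 (k + 1) hk
    have hak := ha1 k hk.le
    have hIk := hI k hk
    have hwk : w k = (t (k + 1) - t k) * a k + 1 / (2 * N) := by rw [hw]
    have e1 : Real.exp (-(T - δ)) * Real.exp (t (k + 1)) = a (k + 1) ^ 2 := by
      simp only [ha]; rw [← Real.exp_add, ← Real.exp_nat_mul]; congr 1; push_cast; ring
    rw [← mul_assoc, e1]
    generalize a (k + 1) = b at *
    generalize a k = c at *
    generalize w k = v at *
    generalize I k = J at *
    obtain ⟨h, hh⟩ : ∃ h, h = t (k + 1) - t k := ⟨_, rfl⟩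
    rw [← hh] at hs hwk h4 hτk ⊢
    have hh0 : 0 ≤ h := by linarith
    clear hh
    have hn0 : 0 < 1 / (2 * (N:ℝ)) := by positivity
    have hn1 : 1 / (2 * (N:ℝ)) ≤ 1 / 2 := by
      rw [div_le_div_iff₀ (by positivity) (by norm_num)]; linarith
    have hhc : h * c ≤ 1 / 4 := by nlinarith
    have hhc0 : 0 ≤ h * c := by positivity
    have hv0 : 0 < v := by linarith
    have hv1 : v ≤ 1 := by linarith
    have hvi : 1 + 1 / v ≤ 2 / v := by
      have : 1 ≤ 1 / v := by rw [le_div_iff₀ hv0]; linarith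
      have : 2 / v = 1 / v + 1 / v := by ring
      linarith
    have hhcv : h * c / v ≤ 1 := by rw [div_le_one hv0]; linarith
    have hX : 0 ≤ C * (D * h ^ 2) + 121 / 100 * J := by positivity
    have hkey : b ^ 2 * ((1 + 1 / v) * h ^ 2) ≤ 12 / 5 * (b * h) := by
      calc b ^ 2 * ((1 + 1 / v) * h ^ 2) ≤ (b * (6 / 5 * c)) * (2 / v * h ^ 2) := by
            rw [pow_two b]; gcongr
        _ = 12 / 5 * (b * h) * (h * c / v) := by ring
        _ ≤ 12 / 5 * (b * h) * 1 := by gcongr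
        _ = _ := mul_one _
    have hbh1 : b * h ≤ h := by nlinarith
    have hbh2 : b * h ≤ 12 / 5 * (b - c) := by nlinarith
    have hsq : h ^ 2 ≤ τ ^ 2 := pow_le_pow_left₀ hh0 hτk 2
    calc _ = 2 * (b ^ 2 * ((1 + 1 / v) * h ^ 2)) * (C * (D * h ^ 2) + 121 / 100 * J) := by ring
      _ ≤ 2 * (12 / 5 * (b * h)) * (C * (D * h ^ 2) + 121 / 100 * J) := by gcongr
      _ = 24 / 5 * (C * (D * h ^ 2) * (b * h) + 121 / 100 * ((b * h) * J)) := by ring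
      _ ≤ _ := by gcongr
  have hS : Real.exp (-(T - δ)) * ∑ k ∈ Finset.range N, Real.exp (t (k + 1)) * ((1 + 1 / w k) * (2 * (C * (D * (t (k + 1) - t k) ^ 4) + 121 / 100 * (t (k + 1) - t k) ^ 2 * I k)))
     ≤ 24 / 5 * (12 / 5 * (C * (D * τ ^ 2)) + 121 / 100 * E) := by
    rw [Finset.mul_sum]
    refine (Finset.sum_le_sum fun k hk => hterm k (Finset.mem_range.1 hk)).trans ?_
    rw [← Finset.mul_sum, Finset.sum_add_distrib, ← Finset.mul_sum, ← Finset.mul_sum, ← Finset.mul_sum]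
    have : C * (D * τ ^ 2) * (12 / 5 * ∑ k ∈ Finset.range N, (a (k + 1) - a k)) ≤ C * (D * τ ^ 2) * (12 / 5 * 1) := by gcongr
    linarith
  have hwp : ∀ k ∈ Finset.range N, 0 ≤ w k := by
    intro k hk
    have := hts k (Finset.mem_range.1 hk)
    rw [hw]; simp only
    have : 0 ≤ t (k + 1) - t k := by linarith
    positivity
  have hS0 : 0 ≤ ∑ k ∈ Finset.range N, Real.exp (t (k + 1)) * ((1 + 1 / w k) * (2 * (C * (D * (t (k + 1) - t k) ^ 4) + 121 / 100 * (t (k + 1) - t k) ^ 2 * I k))) := by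
    refine Finset.sum_nonneg fun k hk => ?_
    have := hwp k hk
    have := hI k (Finset.mem_range.1 hk)
    positivity
  have hG : Real.exp (-t N + 2 * L₀ * (Real.exp (-(T - t N)) - Real.exp (-T)) + ∑ k ∈ Finset.range N, w k) ≤ Real.exp (2 * L₀ + 3) * Real.exp (-(T - δ)) := by
    rw [← Real.exp_add]
    apply Real.exp_le_exp.2
    have e1 : Real.exp (-(T - t N)) ≤ 1 := Real.exp_le_one_iff.2 (by rw [htN]; linarith)
    have e2 := Real.exp_pos (-T)
    have : 2 * L₀ * (Real.exp (-(T - t N)) - Real.exp (-T)) ≤ 2 * L₀ * 1 := by gcongr; linarith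
    linarith
  calc _ ≤ Real.exp (2 * L₀ + 3) * Real.exp (-(T - δ)) * (A0 + ∑ k ∈ Finset.range N, Real.exp (t (k + 1)) * ((1 + 1 / w k) * (2 * (C * (D * (t (k + 1) - t k) ^ 4) + 121 / 100 * (t (k + 1) - t k) ^ 2 * I k)))) := by
        gcongr
    _ = Real.exp (2 * L₀ + 3) * (Real.exp (-(T - δ)) * A0 + Real.exp (-(T - δ)) * ∑ k ∈ Finset.range N, Real.exp (t (k + 1)) * ((1 + 1 / w k) * (2 * (C * (D * (t (k + 1) - t k) ^ 4) + 121 / 100 * (t (k + 1) - t k) ^ 2 * I k)))) := by ring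
    _ ≤ _ := by gcongr
end partM

lemma final_real {X Y Z L₀ L₂ K : ℝ} (hX : 0 ≤ X) (hY : 0 ≤ Y) (hZ : 0 ≤ Z) (h0 : 0 ≤ L₀) (h2 : 0 ≤ L₂) (hK : K = 2 * Real.exp (7 + 4 * L₀ + 4 * L₂)) :
    Real.exp (2 * L₀ + 3) * (2 * X + 24 / 5 * (12 / 5 * (9 * Real.exp (2 * L₀ + 4 * L₂) * Z) + 121 / 100 * Y)) ≤ K * (X + Y + Z) := by
  have e1 : Real.exp (7 + 4 * L₀ + 4 * L₂) = Real.exp (2 * L₀ + 3) * (Real.exp (2 * L₀ + 4 * L₂) * Real.exp 4) := by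
    rw [← Real.exp_add, ← Real.exp_add]; congr 1; ring
  have e4 : (54:ℝ) ≤ Real.exp 4 := by
    have h1 := Real.exp_one_gt_d9
    have : Real.exp 4 = Real.exp 1 ^ 4 := by rw [← Real.exp_nat_mul]; norm_num
    rw [this]
    calc (54:ℝ) ≤ (2.718) ^ 4 := by norm_num
      _ ≤ Real.exp 1 ^ 4 := by gcongr; linarith
  have hQ : 1 ≤ Real.exp (2 * L₀ + 4 * L₂) := Real.one_le_exp (by positivity)
  rw [hK, e1]
  have hP := Real.exp_pos (2 * L₀ + 3)
  generalize Real.exp (2 * L₀ + 3) = P at *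
  generalize Real.exp (2 * L₀ + 4 * L₂) = Q at *
  generalize Real.exp 4 = V at *
  have hQV : 54 ≤ Q * V := by nlinarith
  have k1 : 54 * X ≤ Q * V * X := by gcongr
  have k2 : 54 * Y ≤ Q * V * Y := by gcongr
  have k3 : Q * Z * 54 ≤ Q * Z * V := by gcongr
  have hQZ : 0 ≤ Q * Z := by positivity
  have : 2 * X + 24 / 5 * (12 / 5 * (9 * Q * Z) + 121 / 100 * Y) ≤ 2 * (Q * V) * (X + Y + Z) := by nlinarith
  calc _ ≤ P * (2 * (Q * V) * (X + Y + Z)) := by gcongr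
    _ = _ := by ring

lemma coupling_ind {d : ℕ} {P₀ : Measure (EE d)} [IsProbabilityMeasure P₀] {R : ℝ}
    (hsupp : P₀ (Metric.closedBall (0 : EE d) R)ᶜ = 0) (hd : 1 ≤ d) {δ q L₀ L₂ T : ℝ}
    (hδ0 : 0 < δ) (hδ1 : δ ≤ 1) (hq : q = 1 - Real.exp (-δ)) (hL₀ : L₀ = 3 * R ^ 2 / q ^ 2) (hL₂ : L₂ = 1 / q)
    (hT : δ < T) (N : ℕ) (t : ℕ → ℝ) (ht0 : t 0 = 0) (hts : ∀ k < N, t k ≤ t (k + 1))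
    (htp : ∀ k ≤ N, 0 ≤ t k) (htb : ∀ k ≤ N, t k ≤ T - δ) (hhq : ∀ k < N, t (k + 1) - t k ≤ 37 / 100 * q)
    (sθ : ℝ → EE d → EE d)
    (hsθreg : ∀ k < N, ContDiff ℝ 1 (sθ (T - t k)))
    (hsθlip : ∀ k < N, ∀ x, ‖fderiv ℝ (sθ (T - t k)) x + (1 - Real.exp (-(T - t k)))⁻¹ • ContinuousLinearMap.id ℝ (EE d)‖
        ≤ L₀ * Real.exp (-(T - t k)))
    (w : ℕ → ℝ) (hw : ∀ k < N, 0 < w k) :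
    ∀ k ≤ N, ∃ μ : Measure (EE d × EE d), IsProbabilityMeasure μ ∧ μ.map Prod.fst = OUlaw P₀ (T - t k) ∧
      μ.map Prod.snd = schemeLaw (stdGaussE d) sθ t T k ∧
      ∫⁻ p, ENNReal.ofReal (‖p.1 - p.2‖ ^ 2) ∂μ ≤ ENNReal.ofReal (
        Real.exp (-t k + 2 * L₀ * (Real.exp (-(T - t k)) - Real.exp (-T)) + ∑ j ∈ Finset.range k, w j) *
        (2 * (Real.exp (-T) * (R ^ 2 + d)) + ∑ j ∈ Finset.range k, Real.exp (t (j + 1)) * ((1 + 1 / w j) *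
          (2 * (9 * Real.exp (2 * L₀ + 4 * L₂) * (d * (t (j + 1) - t j) ^ 4) + 121 / 100 * (t (j + 1) - t j) ^ 2 * Ierr P₀ (sθ (T - t j)) (T - t j)))))) := by
  have hL0 : 0 ≤ L₀ := by rw [hL₀]; positivity
  intro k
  induction k with
  | zero =>
    intro _
    obtain ⟨μ, m1, m2, m3, m4⟩ := init_cpl hsupp (hδ0.trans hT)
    refine ⟨μ, m1, by rw [m2, ht0, sub_zero], by rw [m3]; rfl, ?_⟩
    rw [ht0]
    simpa using m4
  | succ k ih =>
    intro hk
    have hkN : k < N := hk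
    obtain ⟨μ, m1, m2, m3, m4⟩ := ih hkN.le
    have hSnn : ∀ j ∈ Finset.range (k + 1), 0 ≤ Real.exp (t (j + 1)) * ((1 + 1 / w j) *
          (2 * (9 * Real.exp (2 * L₀ + 4 * L₂) * (d * (t (j + 1) - t j) ^ 4) + 121 / 100 * (t (j + 1) - t j) ^ 2 * Ierr P₀ (sθ (T - t j)) (T - t j)))) := by
      intro j hj
      have hjN : j < N := by have := Finset.mem_range.1 hj; omega
      have h1 := hw j hjN
      have h2 := Ierr_nonneg (P₀ := P₀) (sθ (T - t j)) (u := T - t j) (by linarith [htb j hjN.le])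
      positivity
    have hS0 := Finset.sum_nonneg (s := Finset.range k) fun j hj => hSnn j (Finset.mem_range.2 (by have := Finset.mem_range.1 hj; omega))
    have hBk := hSnn k (by simp)
    obtain ⟨μ', p1, p2, p3, p4⟩ := one_step hsupp hd hδ0 hδ1 hq (h := t (k + 1) - t k) (u := T - t k) (by linarith [hts k hkN]) (hhq k hkN)
      (by linarith [htb (k + 1) hk]) hL₀ hL₂ (hsθreg k hkN) (hsθlip k hkN) μ m2 (w k) (hw k hkN) _ (by positivity) m4
    refine ⟨μ', p1, ?_, ?_, p4.trans (ENNReal.ofReal_le_ofReal ?_)⟩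
    · rw [p2]; congr 1; ring
    · rw [p3, m3, ← stepMap_eq, neg_sub]; rfl
    · rw [Finset.sum_range_succ, Finset.sum_range_succ]
      have hwk := hw k hkN
      have e0 : T - t k - (t (k + 1) - t k) = T - t (k + 1) := by ring
      rw [e0]
      have hexpT : Real.exp (-T) ≤ Real.exp (-(T - t (k + 1))) := Real.exp_le_exp.2 (by linarith [htp (k + 1) hk])
      have hWn : 0 ≤ ∑ j ∈ Finset.range k, w j := Finset.sum_nonneg fun j hj => (hw j (by have := Finset.mem_range.1 hj; omega)).le
      have hGB : 1 ≤ Real.exp (-t (k + 1) + 2 * L₀ * (Real.exp (-(T - t (k + 1))) - Real.exp (-T)) + (∑ j ∈ Finset.range k, w j + w k)) * Real.exp (t (k + 1)) := by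
        rw [← Real.exp_add]
        apply Real.one_le_exp
        have : 0 ≤ 2 * L₀ * (Real.exp (-(T - t (k + 1))) - Real.exp (-T)) := mul_nonneg (by linarith) (by linarith)
        linarith
      have hGG : (1 + w k) * (Real.exp (-(t (k + 1) - t k) + 2 * L₀ * (Real.exp (-(T - t (k + 1))) - Real.exp (-(T - t k)))) *
          Real.exp (-t k + 2 * L₀ * (Real.exp (-(T - t k)) - Real.exp (-T)) + ∑ j ∈ Finset.range k, w j))
          ≤ Real.exp (-t (k + 1) + 2 * L₀ * (Real.exp (-(T - t (k + 1))) - Real.exp (-T)) + (∑ j ∈ Finset.range k, w j + w k)) := by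
        have h1 : 1 + w k ≤ Real.exp (w k) := by linarith [Real.add_one_le_exp (w k)]
        calc _ ≤ Real.exp (w k) * (Real.exp (-(t (k + 1) - t k) + 2 * L₀ * (Real.exp (-(T - t (k + 1))) - Real.exp (-(T - t k)))) *
          Real.exp (-t k + 2 * L₀ * (Real.exp (-(T - t k)) - Real.exp (-T)) + ∑ j ∈ Finset.range k, w j)) := by gcongr
          _ = _ := by rw [← Real.exp_add, ← Real.exp_add]; congr 1; ring
      have hB : 0 ≤ (1 + 1 / w k) *
          (2 * (9 * Real.exp (2 * L₀ + 4 * L₂) * (d * (t (k + 1) - t k) ^ 4) + 121 / 100 * (t (k + 1) - t k) ^ 2 * Ierr P₀ (sθ (T - t k)) (T - t k))) :=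
        nonneg_of_mul_nonneg_right hBk (Real.exp_pos _)
      have hA : 0 ≤ 2 * (Real.exp (-T) * (R ^ 2 + d)) := by positivity
      have hAS := add_nonneg hA hS0
      generalize Real.exp (-t (k + 1) + 2 * L₀ * (Real.exp (-(T - t (k + 1))) - Real.exp (-T)) + (∑ j ∈ Finset.range k, w j + w k)) = G at *
      rw [← add_assoc]
      calc _ = _ := by rw [← mul_assoc (Real.exp (-(t (k + 1) - t k) + 2 * L₀ * (Real.exp (-(T - t (k + 1))) - Real.exp (-(T - t k))))), ← mul_assoc (1 + w k)]
        _ ≤ G * _ + (G * Real.exp (t (k + 1))) * _ := add_le_add (mul_le_mul_of_nonneg_right hGG hAS) (le_mul_of_one_le_left hB hGB)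
        _ = _ := by ring

lemma schemeLaw_prob {d : ℕ} (sθ : ℝ → EE d → EE d) (t : ℕ → ℝ) (T : ℝ) (N : ℕ) (hm : ∀ k < N, Measurable (sθ (T - t k))) :
    ∀ k ≤ N, IsProbabilityMeasure (schemeLaw (stdGaussE d) sθ t T k) := by
  intro k
  induction k with
  | zero => intro _; exact stdGaussE_prob d
  | succ k ih =>
    intro hk
    have := ih (by omega)
    have hs := hm k hk
    have hF : Measurable (stepMap sθ t T k) := by rw [stepMap_eq]; unfold Fth; fun_prop
    have h1 : IsProbabilityMeasure ((schemeLaw (stdGaussE d) sθ t T k).map (stepMap sθ t T k)) := Measure.isProbabilityMeasure_map hF.aemeasurable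
    have h2 : IsProbabilityMeasure ((stdGaussE d).map fun x => Real.sqrt (1 - Real.exp (t k - t (k + 1))) • x) :=
      Measure.isProbabilityMeasure_map (by fun_prop)
    rw [schemeLaw]
    exact Measure.isProbabilityMeasure_map (by fun_prop)

/-- Theorem 3.10: the Wasserstein-2 convergence bound for bounded-support targets
under early stopping. -/
theorem stmt12 {d : ℕ}
    (P₀ : Measure (EuclideanSpace ℝ (Fin d))) [IsProbabilityMeasure P₀]
    (R : ℝ)
    (hsupp : P₀ (Metric.closedBall (0 : EuclideanSpace ℝ (Fin d)) R)ᶜ = 0)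
    (δ : ℝ) (hδ0 : 0 < δ) (hδ1 : δ ≤ 1)
    (L₀ L₂ K₂ : ℝ)
    (hL₀ : L₀ = 3 * R ^ 2 / (1 - Real.exp (-δ)) ^ 2)
    (hL₂ : L₂ = 1 / (1 - Real.exp (-δ)))
    (hK₂ : K₂ = 2 * Real.exp (7 + 12 * R ^ 2 / (1 - Real.exp (-δ)) ^ 2 +
      4 / (1 - Real.exp (-δ))))
    (T : ℝ) (hT : δ < T)
    (N : ℕ) (t : ℕ → ℝ)
    (ht0 : t 0 = 0) (htN : t N = T - δ) (hts : ∀ k < N, t k ≤ t (k + 1))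
    (τ : ℝ) (hτ : ∀ k < N, t (k + 1) - t k ≤ τ)
    (hτsmall : τ ≤ min 1 (1 / ((L₀ + L₂) * Real.exp 1)))
    (sθ : ℝ → EuclideanSpace ℝ (Fin d) → EuclideanSpace ℝ (Fin d))
    (hsθreg : ∀ k < N, ContDiff ℝ 1 (sθ (T - t k)))
    (hsθlip : ∀ k < N, ∀ x,
      ‖fderiv ℝ (sθ (T - t k)) x +
          (1 - Real.exp (-(T - t k)))⁻¹ • ContinuousLinearMap.id ℝ (EuclideanSpace ℝ (Fin d))‖
        ≤ L₀ * Real.exp (-(T - t k)))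
    (ε : ℝ)
    (herr : ∑ k ∈ Finset.range N, (t (k + 1) - t k) *
        ∫ x, ‖gradient (fun z => Real.log (ouDensityIso P₀ (T - t k) z)) x
            - sθ (T - t k) x‖ ^ 2 * ouDensityIso P₀ (T - t k) x
      ≤ ε ^ 2 * T) :
    ∃ cpl : Measure (EuclideanSpace ℝ (Fin d) × EuclideanSpace ℝ (Fin d)),
      IsProbabilityMeasure cpl ∧
      cpl.map Prod.fst = volume.withDensity (fun x => ENNReal.ofReal (ouDensityIso P₀ δ x)) ∧
      cpl.map Prod.snd = schemeLaw (stdGaussE d) sθ t T N ∧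
      ∫ z, ‖z.1 - z.2‖ ^ 2 ∂cpl
        ≤ K₂ * (Real.exp (-2 * T + δ) * (R ^ 2 + d) + ε ^ 2 * T + d * τ ^ 2) := by

  have hR := R_nonneg hsupp
  have hT0 : 0 < T := hδ0.trans hT
  have htp : ∀ k ≤ N, 0 ≤ t k := by
    intro k
    induction k with
    | zero => intro _; rw [ht0]
    | succ k ih => intro hk; linarith [ih (by omega), hts k hk]
  have htb : ∀ k ≤ N, t k ≤ T - δ := by
    intro k hk
    induction hk using Nat.decreasingInduction with
    | self => rw [htN]
    | of_succ k hk ih => linarith [hts k hk]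
  have hK0 : 0 ≤ K₂ := by rw [hK₂]; positivity
  rcases Nat.eq_zero_or_pos d with rfl | hd
  · have hp := schemeLaw_prob sθ t T N (fun k hk => (hsθreg k hk).continuous.measurable) N le_rfl
    refine ⟨(OUlaw P₀ δ).prod (schemeLaw (stdGaussE 0) sθ t T N), inferInstance, ?_, ?_, ?_⟩
    · rw [Measure.map_fst_prod, measure_univ, one_smul, OUlaw_density hsupp hδ0]
    · rw [Measure.map_snd_prod, measure_univ, one_smul]
    · have : ∀ z : EuclideanSpace ℝ (Fin 0) × EuclideanSpace ℝ (Fin 0), ‖z.1 - z.2‖ ^ 2 = 0 := by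
        intro z; rw [Subsingleton.elim z.1 z.2]; simp
      simp only [this, integral_zero]
      positivity
  have hN : 0 < N := by
    rcases Nat.eq_zero_or_pos N with rfl | h
    · rw [ht0] at htN; linarith
    · exact h
  obtain ⟨q, hq⟩ : ∃ q, q = 1 - Real.exp (-δ) := ⟨_, rfl⟩
  have hq0 : 0 < q := by rw [hq]; exact one_sub_exp_pos hδ0
  have hq3 : q ≤ 2 / 3 := hq ▸ q_le hδ1
  rw [← hq] at hL₀ hL₂ hK₂
  have hL0 : 0 ≤ L₀ := by rw [hL₀]; positivity
  have hL2 : 0 < L₂ := by rw [hL₂]; positivity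
  have hτq : τ ≤ 37 / 100 * q := by
    refine (hτsmall.trans (min_le_right _ _)).trans ?_
    rw [div_le_iff₀ (by positivity)]
    have h1 := Real.exp_one_gt_d9
    have h2 : q * L₂ = 1 := by rw [hL₂]; field_simp
    have h3 : 1 ≤ q * (L₀ + L₂) := by rw [mul_add, h2]; nlinarith
    nlinarith
  have hhq : ∀ k < N, t (k + 1) - t k ≤ 37 / 100 * q := fun k hk => (hτ k hk).trans hτq
  obtain ⟨w, hw⟩ : ∃ w : ℕ → ℝ, w = fun k => (t (k + 1) - t k) * Real.exp ((t k - (T - δ)) / 2) + 1 / (2 * N) := ⟨_, rfl⟩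
  have hw0 : ∀ k < N, 0 < w k := by
    intro k hk
    have : 0 ≤ t (k + 1) - t k := by linarith [hts k hk]
    have : (0:ℝ) < N := by exact_mod_cast hN
    rw [hw]; simp only; positivity
  obtain ⟨μ, m1, m2, m3, m4⟩ := coupling_ind hsupp hd hδ0 hδ1 hq hL₀ hL₂ hT N t ht0 hts htp htb hhq sθ hsθreg hsθlip w hw0 N le_rfl
  have hrs := real_sum (δ := δ) (T := T) (τ := τ) (C := 9 * Real.exp (2 * L₀ + 4 * L₂)) (D := d) (L₀ := L₀) (E := ε ^ 2 * T)
    (A0 := 2 * (Real.exp (-T) * (R ^ 2 + d))) N t (fun j => Ierr P₀ (sθ (T - t j)) (T - t j)) hN ht0 htN hts htb hδ0 hT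
    (fun k hk => by linarith [hhq k hk]) hτ (fun k hk => Ierr_nonneg _ (by linarith [htb k hk.le])) (by positivity) (by positivity) hL0 (by positivity)
    herr w hw
  have hfr := final_real (X := Real.exp (-2 * T + δ) * (R ^ 2 + d)) (Y := ε ^ 2 * T) (Z := d * τ ^ 2) (K := K₂)
    (by positivity) (by positivity) (by positivity) hL0 hL2.le (by rw [hK₂, hL₀, hL₂]; congr 2; ring)
  have hX : Real.exp (-(T - δ)) * (2 * (Real.exp (-T) * (R ^ 2 + d))) = 2 * (Real.exp (-2 * T + δ) * (R ^ 2 + d)) := by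
    have : Real.exp (-2 * T + δ) = Real.exp (-(T - δ)) * Real.exp (-T) := by rw [← Real.exp_add]; congr 1; ring
    rw [this]; ring
  rw [hX] at hrs
  refine ⟨μ, m1, ?_, m3, ?_⟩
  · rw [m2, ← OUlaw_density hsupp hδ0, htN]; congr 1; ring
  · rw [integral_eq_lintegral_of_nonneg_ae (Filter.Eventually.of_forall fun z => by positivity) (by fun_prop)]
    refine ENNReal.toReal_le_of_le_ofReal (by positivity) (m4.trans (ENNReal.ofReal_le_ofReal (hrs.trans hfr)))
end
end
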